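/- arXiv:2404.13703 — 2 statements merged into one kernel-verified Lean document; each statement's English description precedes it below -/
import Mathlib

section
/- Suppose k_max < 0 and ∫₀^{Φ_F} 1/K(φ) dφ > 1, and suppose the initial datum Q_init satisfies Assumption (A2) and H_init(η) := Q_init'(η) − K(Q_init(η)) > 0 for all η ∈ [0,1]. Then there exists a unique global classical solution (Q,N) of the Q-system on [0,∞), a unique steady state (Q*, N*) exists, and for all τ ≥ 0: ‖∂_ηQ(τ,·) − (Q*)'‖_{L¹(0,1)} ≤ e^{k_max·τ} · ‖∂_ηQ(0,·) − (Q*)'‖_{L¹(0,1)}. -/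
open Real Set MeasureTheory Filter Topology
open scoped ENNReal

noncomputable section

/-- The time interval `[0, T)` in `ℝ`, where `T : ℝ≥0∞` may be `∞`. -/
def Ico0 (T : ℝ≥0∞) : Set ℝ := {τ : ℝ | 0 ≤ τ ∧ ENNReal.ofReal τ < T}

/-- Partial derivative in the time variable (one-sided at `τ = 0`). -/
def pdTau (Q : ℝ → ℝ → ℝ) (τ η : ℝ) : ℝ := derivWithin (fun s => Q s η) (Ici 0) τ

/-- Partial derivative in the spatial variable (one-sided at `η = 0` and `η = 1`). -/
def pdEta (Q : ℝ → ℝ → ℝ) (τ η : ℝ) : ℝ := derivWithin (fun x => Q τ x) (Icc 0 1) η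

/-- Assumption 1.1: `K ∈ C²(ℝ)` with `K'`, `K''` bounded on `ℝ` and `K > 0` on `[0, Φ_F]`. -/
structure KAssump (K : ℝ → ℝ) (ΦF : ℝ) : Prop where
  smooth : ContDiff ℝ 2 K
  bdd1 : ∃ C : ℝ, ∀ x : ℝ, |deriv K x| ≤ C
  bdd2 : ∃ C : ℝ, ∀ x : ℝ, |deriv (deriv K) x| ≤ C
  pos : ∀ φ ∈ Icc (0 : ℝ) ΦF, 0 < K φ

/-- `k_min := K'(0) + ∫₀^{Φ_F} min(K''(φ), 0) dφ`. -/
def kmin (K : ℝ → ℝ) (ΦF : ℝ) : ℝ :=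
  deriv K 0 + ∫ φ in (0 : ℝ)..ΦF, min (deriv (deriv K) φ) 0

/-- `k_max := K'(0) + ∫₀^{Φ_F} max(K''(φ), 0) dφ`. -/
def kmax (K : ℝ → ℝ) (ΦF : ℝ) : ℝ :=
  deriv K 0 + ∫ φ in (0 : ℝ)..ΦF, max (deriv (deriv K) φ) 0

/-- Assumption (A2) on the initial datum. -/
structure A2 (K : ℝ → ℝ) (ΦF : ℝ) (Qinit : ℝ → ℝ) : Prop where
  reg : ContDiffOn ℝ 1 Qinit (Icc 0 1)
  mono : MonotoneOn Qinit (Icc 0 1)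
  init0 : Qinit 0 = 0
  init1 : Qinit 1 = ΦF
  deriv1 : K ΦF < derivWithin Qinit (Icc 0 1) 1
  compat : derivWithin Qinit (Icc 0 1) 1 - derivWithin Qinit (Icc 0 1) 0 = K ΦF - K 0

/-- A classical solution `(Q, N)` of the Q-system on `[0, T)` with initial datum `Qinit`. -/
structure IsQSol (K : ℝ → ℝ) (ΦF : ℝ) (T : ℝ≥0∞) (Qinit : ℝ → ℝ)
    (Q : ℝ → ℝ → ℝ) (N : ℝ → ℝ) : Prop where
  initReg : ContDiffOn ℝ 1 Qinit (Icc 0 1)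
  initMono : MonotoneOn Qinit (Icc 0 1)
  init0 : Qinit 0 = 0
  init1 : Qinit 1 = ΦF
  initDeriv : K ΦF < derivWithin Qinit (Icc 0 1) 1
  reg : ContDiffOn ℝ 1 (Function.uncurry Q) (Ico0 T ×ˢ Icc (0 : ℝ) 1)
  mono : ∀ τ ∈ Ico0 T, MonotoneOn (Q τ) (Icc 0 1)
  Ncont : ContinuousOn N (Ico0 T)
  Npos : ∀ τ ∈ Ico0 T, 0 < N τ
  pde : ∀ τ ∈ Ico0 T, ∀ η ∈ Ioo (0 : ℝ) 1,
    pdTau Q τ η + pdEta Q τ η = 1 / N τ + K (Q τ η)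
  bc : ∀ τ ∈ Ico0 T, Q τ 0 = 0
  Ndef : ∀ τ ∈ Ico0 T, 1 / N τ = pdEta Q τ 1 - K ΦF
  init : ∀ η ∈ Icc (0 : ℝ) 1, Q 0 η = Qinit η
  constraint : ∀ τ ∈ Ico0 T, K ΦF < pdEta Q τ 1

/-- A classical solution `(Q, Ñ)` of the relaxed system on `[0, T)` with initial datum `Qinit`,
where `Ñ` is unconstrained in sign. -/
structure IsRelaxedSol (K : ℝ → ℝ) (ΦF : ℝ) (T : ℝ≥0∞) (Qinit : ℝ → ℝ)
    (Q : ℝ → ℝ → ℝ) (Ntil : ℝ → ℝ) : Prop where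
  initReg : ContDiffOn ℝ 1 Qinit (Icc 0 1)
  init0 : Qinit 0 = 0
  init1 : Qinit 1 = ΦF
  reg : ContDiffOn ℝ 1 (Function.uncurry Q) (Ico0 T ×ˢ Icc (0 : ℝ) 1)
  Ncont : ContinuousOn Ntil (Ico0 T)
  pde : ∀ τ ∈ Ico0 T, ∀ η ∈ Ioo (0 : ℝ) 1,
    pdTau Q τ η + pdEta Q τ η = Ntil τ + K (Q τ η)
  bc : ∀ τ ∈ Ico0 T, Q τ 0 = 0
  Ndef : ∀ τ ∈ Ico0 T, Ntil τ = pdEta Q τ 1 - K ΦF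
  init : ∀ η ∈ Icc (0 : ℝ) 1, Q 0 η = Qinit η

/-- A steady state `(Q*, N*)` of the Q-system. -/
def IsSteadyState (K : ℝ → ℝ) (ΦF : ℝ) (Qs : ℝ → ℝ) (Ns : ℝ) : Prop :=
  ContDiffOn ℝ 1 Qs (Icc 0 1) ∧ 0 < Ns ∧
    (∀ η ∈ Icc (0 : ℝ) 1, derivWithin Qs (Icc 0 1) η = K (Qs η) + 1 / Ns) ∧
    Qs 0 = 0 ∧ Qs 1 = ΦF

/-- `P₀ f := f - ∫₀¹ f`. -/
def P0 (f : ℝ → ℝ) (η : ℝ) : ℝ := f η - ∫ x in (0 : ℝ)..1, f x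

/-- `H_init := Q_init' - K ∘ Q_init` (derivative within `[0,1]`). -/
def Hinit (K : ℝ → ℝ) (Qinit : ℝ → ℝ) (η : ℝ) : ℝ :=
  derivWithin Qinit (Icc 0 1) η - K (Qinit η)

open Real Set MeasureTheory Filter Topology
open scoped ENNReal

noncomputable section

/-- Primitive in the second variable. -/
def prim (f : ℝ → ℝ → ℝ) (t b : ℝ) : ℝ := ∫ σ in (0:ℝ)..b, f t σ

theorem cont_slice {f : ℝ → ℝ → ℝ} (hf : Continuous (Function.uncurry f)) (t : ℝ) :
    Continuous (f t) := hf.comp (Continuous.prodMk_right t)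

theorem cont_slice2 {f : ℝ → ℝ → ℝ} (hf : Continuous (Function.uncurry f)) (t : ℝ) :
    Continuous (fun s => f s t) := hf.comp (Continuous.prodMk_left t)

theorem prim_cont {f : ℝ → ℝ → ℝ} (hf : Continuous (Function.uncurry f)) :
    Continuous (Function.uncurry (prim f)) := by
  exact intervalIntegral.continuous_parametric_primitive_of_continuous hf

theorem prim_hasDerivAt_fst {f g : ℝ → ℝ → ℝ} (hf : Continuous (Function.uncurry f))
    (hg : Continuous (Function.uncurry g))
    (hd : ∀ τ σ, HasDerivAt (fun t => f t σ) (g τ σ) τ) (t b : ℝ) :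
    HasDerivAt (fun s => prim f s b) (prim g t b) t := by
  have hK : IsCompact ((Icc (t-1) (t+1)) ×ˢ (uIcc (0:ℝ) b)) := isCompact_Icc.prod isCompact_uIcc
  obtain ⟨C, hC⟩ := hK.exists_bound_of_continuousOn hg.continuousOn
  have := intervalIntegral.hasDerivAt_integral_of_dominated_loc_of_deriv_le (μ := volume)
    (a := 0) (b := b) (F := f) (F' := g) (x₀ := t) (s := Icc (t-1) (t+1)) (bound := fun _ => C)
    (Icc_mem_nhds (by linarith) (by linarith))
    (Eventually.of_forall fun x => (cont_slice hf x).aestronglyMeasurable)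
    ((cont_slice hf t).intervalIntegrable _ _)
    (cont_slice hg t).aestronglyMeasurable
    (Eventually.of_forall fun σ hσ x hx => hC (x, σ) ⟨hx, uIoc_subset_uIcc hσ⟩)
    intervalIntegrable_const
    (Eventually.of_forall fun σ hσ x hx => hd x σ)
  exact this.2

theorem prim_hasStrict {f g : ℝ → ℝ → ℝ} (hf : Continuous (Function.uncurry f))
    (hg : Continuous (Function.uncurry g))
    (hd : ∀ τ σ, HasDerivAt (fun t => f t σ) (g τ σ) τ) (z : ℝ × ℝ) :
    HasStrictFDerivAt (Function.uncurry (prim f))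
      ((ContinuousLinearMap.toSpanSingleton ℝ (prim g z.1 z.2)).coprod
        (ContinuousLinearMap.toSpanSingleton ℝ (f z.1 z.2))) z := by
  have hc1 : Continuous (fun z : ℝ × ℝ => ContinuousLinearMap.toSpanSingleton ℝ (prim g z.1 z.2)) :=
    (ContinuousLinearMap.toSpanSingletonCLE (𝕜 := ℝ) (E := ℝ)).continuous.comp (prim_cont hg)
  have hc2 : Continuous (fun z : ℝ × ℝ => ContinuousLinearMap.toSpanSingleton ℝ (f z.1 z.2)) :=
    (ContinuousLinearMap.toSpanSingletonCLE (𝕜 := ℝ) (E := ℝ)).continuous.comp hf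
  refine hasStrictFDerivAt_uncurry_coprod (f := prim f)
    (f₁ := fun a b => ContinuousLinearMap.toSpanSingleton ℝ (prim g a b))
    (f₂ := fun a b => ContinuousLinearMap.toSpanSingleton ℝ (f a b)) ?_ ?_ hc1.continuousAt
    hc2.continuousAt
  · exact Eventually.of_forall fun v => (prim_hasDerivAt_fst hf hg hd v.1 v.2).hasFDerivAt
  · refine Eventually.of_forall fun v => HasDerivAt.hasFDerivAt ?_
    exact intervalIntegral.integral_hasDerivAt_right ((cont_slice hf _).intervalIntegrable _ _)
      (cont_slice hf _).stronglyMeasurable.stronglyMeasurableAtFilter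
      (cont_slice hf _).continuousAt

theorem prim_contDiff {f g : ℝ → ℝ → ℝ} (hf : Continuous (Function.uncurry f))
    (hg : Continuous (Function.uncurry g))
    (hd : ∀ τ σ, HasDerivAt (fun t => f t σ) (g τ σ) τ) :
    ContDiff ℝ 1 (Function.uncurry (prim f)) := by
  rw [contDiff_one_iff_fderiv]
  refine ⟨fun z => (prim_hasStrict hf hg hd z).hasFDerivAt.differentiableAt, ?_⟩
  have : fderiv ℝ (Function.uncurry (prim f)) = fun z : ℝ × ℝ =>
      ((ContinuousLinearMap.toSpanSingleton ℝ (prim g z.1 z.2)).coprod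
        (ContinuousLinearMap.toSpanSingleton ℝ (f z.1 z.2))) := by
    funext z
    exact (prim_hasStrict hf hg hd z).hasFDerivAt.fderiv
  rw [this]
  have hc1 : Continuous (fun z : ℝ × ℝ => ContinuousLinearMap.toSpanSingleton ℝ (prim g z.1 z.2)) :=
    (ContinuousLinearMap.toSpanSingletonCLE (𝕜 := ℝ) (E := ℝ)).continuous.comp (prim_cont hg)
  have hc2 : Continuous (fun z : ℝ × ℝ => ContinuousLinearMap.toSpanSingleton ℝ (f z.1 z.2)) :=
    (ContinuousLinearMap.toSpanSingletonCLE (𝕜 := ℝ) (E := ℝ)).continuous.comp hf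
  have e : (fun z : ℝ × ℝ => ((ContinuousLinearMap.toSpanSingleton ℝ (prim g z.1 z.2)).coprod
        (ContinuousLinearMap.toSpanSingleton ℝ (f z.1 z.2)))) = fun z =>
        (ContinuousLinearMap.toSpanSingleton ℝ (prim g z.1 z.2)).comp (ContinuousLinearMap.fst ℝ ℝ ℝ)
        + (ContinuousLinearMap.toSpanSingleton ℝ (f z.1 z.2)).comp (ContinuousLinearMap.snd ℝ ℝ ℝ) := by
    funext z
    ext <;> simp
  rw [e]
  exact (hc1.clm_comp continuous_const).add (hc2.clm_comp continuous_const)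

/-- Derivative of `t ↦ prim f t (b t)`. -/
theorem prim_hasDerivAt_comp {f g : ℝ → ℝ → ℝ} (hf : Continuous (Function.uncurry f))
    (hg : Continuous (Function.uncurry g))
    (hd : ∀ τ σ, HasDerivAt (fun t => f t σ) (g τ σ) τ) {a b : ℝ → ℝ} {a' b' t : ℝ}
    (ha : HasDerivAt a a' t) (hb : HasDerivAt b b' t) :
    HasDerivAt (fun s => prim f (a s) (b s)) (a' * prim g (a t) (b t) + b' * f (a t) (b t)) t := by
  have h := (prim_hasStrict hf hg hd (a t, b t)).hasFDerivAt.comp_hasDerivAt t (ha.prodMk hb)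
  refine h.congr_deriv ?_
  simp

theorem prim_sub {f : ℝ → ℝ → ℝ} (hf : Continuous (Function.uncurry f)) (t a b : ℝ) :
    ∫ σ in a..b, f t σ = prim f t b - prim f t a := by
  unfold prim
  rw [intervalIntegral.integral_interval_sub_left] <;>
    exact (cont_slice hf t).intervalIntegrable _ _

/-- Integral along the spatial section written in characteristic labels. -/
def Qh (f : ℝ → ℝ → ℝ) (τ η : ℝ) : ℝ := ∫ σ in (τ - η)..τ, f τ σ

theorem Qh_eq {f : ℝ → ℝ → ℝ} (hf : Continuous (Function.uncurry f)) (τ η : ℝ) :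
    Qh f τ η = prim f τ τ - prim f τ (τ - η) := prim_sub hf _ _ _

theorem Qh_eq_int (f : ℝ → ℝ → ℝ) (τ η : ℝ) :
    Qh f τ η = ∫ x in (0:ℝ)..η, f τ (τ - x) := by
  unfold Qh
  rw [intervalIntegral.integral_comp_sub_left (f := fun y => f τ y)]
  simp

theorem Qh_contDiff {f g : ℝ → ℝ → ℝ} (hf : Continuous (Function.uncurry f))
    (hg : Continuous (Function.uncurry g))
    (hd : ∀ τ σ, HasDerivAt (fun t => f t σ) (g τ σ) τ) :
    ContDiff ℝ 1 (Function.uncurry (Qh f)) := by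
  have : Function.uncurry (Qh f) = fun z : ℝ × ℝ => Function.uncurry (prim f) (z.1, z.1)
      - Function.uncurry (prim f) (z.1, z.1 - z.2) := by
    funext z; exact Qh_eq hf _ _
  rw [this]
  have h := prim_contDiff hf hg hd
  exact (h.comp (contDiff_fst.prodMk contDiff_fst)).sub
    (h.comp (contDiff_fst.prodMk (contDiff_fst.sub contDiff_snd)))

theorem Qh_deriv_tau {f g : ℝ → ℝ → ℝ} (hf : Continuous (Function.uncurry f))
    (hg : Continuous (Function.uncurry g))
    (hd : ∀ τ σ, HasDerivAt (fun t => f t σ) (g τ σ) τ) (τ η : ℝ) :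
    HasDerivAt (fun s => Qh f s η) (f τ τ - f τ (τ - η) + Qh g τ η) τ := by
  have h1 := prim_hasDerivAt_comp hf hg hd (hasDerivAt_id τ) (hasDerivAt_id τ)
  have h2 := prim_hasDerivAt_comp hf hg hd (hasDerivAt_id τ) ((hasDerivAt_id τ).sub_const η)
  have h := h1.sub h2
  have e : (fun s => Qh f s η) = fun s => prim f s s - prim f s (s - η) := by
    funext s; exact Qh_eq hf _ _
  rw [e]
  refine h.congr_deriv ?_
  simp only [Qh_eq hg, id]; ring

theorem Qh_deriv_eta {f : ℝ → ℝ → ℝ} (hf : Continuous (Function.uncurry f)) (τ η : ℝ) :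
    HasDerivAt (fun x => Qh f τ x) (f τ (τ - η)) η := by
  have e : (fun x => Qh f τ x) = fun η => ∫ x in (0:ℝ)..η, f τ (τ - x) := by
    funext s; exact Qh_eq_int _ _ _
  rw [e]
  have hc : Continuous (fun x => f τ (τ - x)) := (cont_slice hf τ).comp (by fun_prop)
  exact intervalIntegral.integral_hasDerivAt_right (hc.intervalIntegrable _ _)
      hc.stronglyMeasurable.stronglyMeasurableAtFilter hc.continuousAt

theorem Qh_deriv_char {f g : ℝ → ℝ → ℝ} (hf : Continuous (Function.uncurry f))
    (hg : Continuous (Function.uncurry g))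
    (hd : ∀ τ σ, HasDerivAt (fun t => f t σ) (g τ σ) τ) (τ σ : ℝ) :
    HasDerivAt (fun s => Qh f s (s - σ)) (f τ τ + Qh g τ (τ - σ)) τ := by
  have h1 := prim_hasDerivAt_comp hf hg hd (hasDerivAt_id τ) (hasDerivAt_id τ)
  have h2 := prim_hasDerivAt_fst hf hg hd τ σ
  have h := h1.sub h2
  have e : (fun s => Qh f s (s - σ)) = fun s => prim f s s - prim f s σ := by
    funext s; rw [Qh_eq hf]; simp
  rw [e]
  refine h.congr_deriv ?_
  simp [Qh_eq hg]; ring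

/-! Transport along characteristics. -/

def expo (a : ℝ → ℝ → ℝ) (τ σ : ℝ) : ℝ := ∫ s in (max σ 0)..τ, a s (s - σ)

def tr (P : ℝ → ℝ) (a : ℝ → ℝ → ℝ) (τ σ : ℝ) : ℝ := P σ * exp (expo a τ σ)

theorem expo_integrand_cont {a : ℝ → ℝ → ℝ} (ha : Continuous (Function.uncurry a)) (σ : ℝ) :
    Continuous (fun s => a s (s - σ)) :=
  ha.comp (f := fun s => (s, s - σ)) (by fun_prop)

theorem expo_eq {a : ℝ → ℝ → ℝ} (ha : Continuous (Function.uncurry a)) (τ σ : ℝ) :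
    expo a τ σ = (∫ s in (0:ℝ)..τ, a s (s - σ)) - ∫ s in (0:ℝ)..(max σ 0), a s (s - σ) := by
  unfold expo
  rw [intervalIntegral.integral_interval_sub_left] <;>
    exact (expo_integrand_cont ha σ).intervalIntegrable _ _

theorem expo_cont {a : ℝ → ℝ → ℝ} (ha : Continuous (Function.uncurry a)) :
    Continuous (Function.uncurry (expo a)) := by
  have e : Function.uncurry (expo a) = fun z : ℝ × ℝ =>
      (∫ s in (0:ℝ)..z.1, a s (s - z.2)) - ∫ s in (0:ℝ)..(max z.2 0), a s (s - z.2) := by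
    funext z; exact expo_eq ha _ _
  rw [e]
  have hc : Continuous (Function.uncurry (fun (z : ℝ × ℝ) (s : ℝ) => a s (s - z.2))) :=
    ha.comp (f := fun w : (ℝ × ℝ) × ℝ => (w.2, w.2 - w.1.2)) (by fun_prop)
  exact (intervalIntegral.continuous_parametric_intervalIntegral_of_continuous hc continuous_fst).sub
    (intervalIntegral.continuous_parametric_intervalIntegral_of_continuous hc (by fun_prop))

theorem tr_cont {P : ℝ → ℝ} (hP : Continuous P) {a : ℝ → ℝ → ℝ}
    (ha : Continuous (Function.uncurry a)) : Continuous (Function.uncurry (tr P a)) :=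
  (hP.comp continuous_snd).mul (Real.continuous_exp.comp (expo_cont ha))

theorem tr_hasDerivAt (P : ℝ → ℝ) {a : ℝ → ℝ → ℝ}
    (ha : Continuous (Function.uncurry a)) (τ σ : ℝ) :
    HasDerivAt (fun t => tr P a t σ) (a τ (τ - σ) * tr P a τ σ) τ := by
  have hc := expo_integrand_cont ha σ
  have h : HasDerivAt (fun t => expo a t σ) (a τ (τ - σ)) τ :=
    intervalIntegral.integral_hasDerivAt_right (hc.intervalIntegrable _ _)
      hc.stronglyMeasurable.stronglyMeasurableAtFilter hc.continuousAt
  refine (h.exp.const_mul (P σ)).congr_deriv ?_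
  unfold tr; ring

theorem tr_dcont {P : ℝ → ℝ} (hP : Continuous P) {a : ℝ → ℝ → ℝ}
    (ha : Continuous (Function.uncurry a)) :
    Continuous (Function.uncurry (fun τ σ => a τ (τ - σ) * tr P a τ σ)) :=
  (ha.comp (f := fun z : ℝ × ℝ => (z.1, z.1 - z.2)) (by fun_prop)).mul (tr_cont hP ha)

theorem tr_start (P : ℝ → ℝ) (a : ℝ → ℝ → ℝ) (σ : ℝ) : tr P a (max σ 0) σ = P σ := by
  simp [tr, expo]

theorem expo_nonpos {a : ℝ → ℝ → ℝ} (h : ∀ s y, a s y ≤ 0) {τ σ : ℝ} (h0 : 0 ≤ τ) (h1 : σ ≤ τ) :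
    expo a τ σ ≤ 0 := by
  unfold expo
  have := intervalIntegral.integral_nonneg (μ := volume) (a := max σ 0) (b := τ)
    (f := fun s => - a s (s - σ)) (max_le h1 h0) (fun s _ => by have := h s (s-σ); linarith)
  rw [intervalIntegral.integral_neg] at this
  linarith

end

open Real Set MeasureTheory Filter Topology
open scoped ENNReal

noncomputable section
open scoped BoundedContinuousFunction

/-- clamp to `[0, B]` -/
def cl (B x : ℝ) : ℝ := max 0 (min B x)

theorem cl_cont (B : ℝ) : Continuous (cl B) := by unfold cl; fun_prop
theorem cl_nonneg (B x : ℝ) : 0 ≤ cl B x := le_max_left _ _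
theorem cl_le {B : ℝ} (hB : 0 ≤ B) (x : ℝ) : cl B x ≤ B := max_le hB (min_le_left _ _)
theorem cl_eq {B x : ℝ} (h0 : 0 ≤ x) (h1 : x ≤ B) : cl B x = x := by
  unfold cl; rw [min_eq_right h1, max_eq_right h0]
theorem cl_lip (B x y : ℝ) : |cl B x - cl B y| ≤ |x - y| := by
  unfold cl
  refine (abs_max_sub_max_le_max _ _ _ _).trans ?_
  simp only [sub_self, abs_zero]
  refine max_le (abs_nonneg _) ((abs_min_sub_min_le_max _ _ _ _).trans ?_)
  simp

section fp
variable (k v : ℝ → ℝ) (c B lam : ℝ)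

def pw (u : ℝ × ℝ →ᵇ ℝ) (τ η : ℝ) : ℝ := exp (lam * τ - 2 * η) * u (τ, η)

def aof (u : ℝ × ℝ →ᵇ ℝ) (τ η : ℝ) : ℝ := k (prim (pw lam u) (max τ 0) (cl 1 η))

def Pof (u : ℝ × ℝ →ᵇ ℝ) (σ : ℝ) : ℝ :=
  v (max (-σ) 0) + cl B (pw lam u (max σ 0) 1 + c) - cl B (pw lam u 0 1 + c)

def Tfun (u : ℝ × ℝ →ᵇ ℝ) (z : ℝ × ℝ) : ℝ :=
  tr (Pof v c B lam u) (aof k lam u) (max z.1 0) (max z.1 0 - cl 1 z.2) *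
    exp (-(lam * max z.1 0 - 2 * cl 1 z.2))

variable {k v c B lam}

theorem pw_cont (u : ℝ × ℝ →ᵇ ℝ) : Continuous (Function.uncurry (pw lam u)) := by
  unfold pw Function.uncurry
  fun_prop

theorem aof_cont (hk : Continuous k) (u : ℝ × ℝ →ᵇ ℝ) :
    Continuous (Function.uncurry (aof k lam u)) := by
  have hcl := cl_cont 1
  exact hk.comp ((prim_cont (pw_cont u)).comp (f := fun z : ℝ × ℝ => (max z.1 0, cl 1 z.2))
    (by fun_prop))

theorem Pof_cont (hv : Continuous v) (u : ℝ × ℝ →ᵇ ℝ) : Continuous (Pof v c B lam u) := by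
  have hcl := cl_cont B
  have h : Continuous (fun σ => pw lam u (max σ 0) 1) :=
    (pw_cont u).comp (f := fun σ => (max σ 0, (1:ℝ))) (by fun_prop)
  unfold Pof
  fun_prop

theorem Tfun_cont (hk : Continuous k) (hv : Continuous v) (u : ℝ × ℝ →ᵇ ℝ) :
    Continuous (Tfun k v c B lam u) := by
  have hcl := cl_cont 1
  have h : Continuous (fun z : ℝ × ℝ =>
      tr (Pof v c B lam u) (aof k lam u) (max z.1 0) (max z.1 0 - cl 1 z.2)) :=
    (tr_cont (Pof_cont hv u) (aof_cont hk u)).comp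
      (f := fun z : ℝ × ℝ => (max z.1 0, max z.1 0 - cl 1 z.2)) (by fun_prop)
  unfold Tfun
  fun_prop

theorem Pof_bd {V : ℝ} (hB : 0 ≤ B) (hv : ∀ x, 0 ≤ v x ∧ v x ≤ V) (u : ℝ × ℝ →ᵇ ℝ) (σ : ℝ) :
    |Pof v c B lam u σ| ≤ V + B := by
  unfold Pof
  have h1 := hv (max (-σ) 0)
  have h2 := cl_nonneg B (pw lam u (max σ 0) 1 + c)
  have h3 := cl_le hB (pw lam u (max σ 0) 1 + c)
  have h4 := cl_nonneg B (pw lam u 0 1 + c)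
  have h5 := cl_le hB (pw lam u 0 1 + c)
  rw [abs_le]; constructor <;> linarith

theorem tr_bd {V : ℝ} (hB : 0 ≤ B) (hv : ∀ x, 0 ≤ v x ∧ v x ≤ V) (hk0 : ∀ x, k x ≤ 0)
    (u : ℝ × ℝ →ᵇ ℝ) {τ σ : ℝ} (h0 : 0 ≤ τ) (h1 : σ ≤ τ) :
    |tr (Pof v c B lam u) (aof k lam u) τ σ| ≤ V + B := by
  unfold tr
  rw [abs_mul, abs_of_pos (exp_pos _)]
  have h2 : exp (expo (aof k lam u) τ σ) ≤ 1 :=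
    exp_le_one_iff.2 (expo_nonpos (fun s y => hk0 _) h0 h1)
  have h3 := Pof_bd (c := c) (lam := lam) hB hv u σ
  have h4 := abs_nonneg (Pof v c B lam u σ)
  have h5 := exp_pos (expo (aof k lam u) τ σ)
  nlinarith

def Tmap {V : ℝ} (hk : Continuous k) (hv : Continuous v) (hB : 0 ≤ B)
    (hvb : ∀ x, 0 ≤ v x ∧ v x ≤ V) (hk0 : ∀ x, k x ≤ 0) (hlam : 0 ≤ lam)
    (u : ℝ × ℝ →ᵇ ℝ) : ℝ × ℝ →ᵇ ℝ :=
  BoundedContinuousFunction.ofNormedAddCommGroup (Tfun k v c B lam u) (Tfun_cont hk hv u)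
    ((V + B) * exp 2) (by
      intro z
      unfold Tfun
      rw [Real.norm_eq_abs, abs_mul, abs_of_pos (exp_pos (-(lam * max z.1 0 - 2 * cl 1 z.2)))]
      have h1 := cl_nonneg 1 z.2
      have h2 := cl_le zero_le_one z.2
      have h3 : 0 ≤ max z.1 0 := le_max_right _ _
      refine mul_le_mul (tr_bd hB hvb hk0 u h3 (by linarith)) (exp_le_exp.2 ?_) (exp_pos _).le ?_
      · have := mul_nonneg hlam h3
        linarith
      · have := hvb 0
        linarith)

theorem exp_lip {x y : ℝ} (hx : x ≤ 0) (hy : y ≤ 0) : |exp x - exp y| ≤ |x - y| := by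
  wlog h : y ≤ x generalizing x y
  · rw [abs_sub_comm, abs_sub_comm x y]; exact this hy hx (le_of_not_ge h)
  have h1 := exp_le_exp.2 h
  rw [abs_of_nonneg (by linarith), abs_of_nonneg (by linarith)]
  have h2 := add_one_le_exp (y - x)
  have h3 : exp y = exp x * exp (y - x) := by rw [← exp_add]; ring_nf
  have h4 := exp_le_one_iff.2 hx
  have h5 := exp_pos x
  rw [h3]
  nlinarith

theorem contr_A {u1 u2 : ℝ × ℝ →ᵇ ℝ} {D : ℝ} (hD : ∀ z, |u1 z - u2 z| ≤ D) {τ η : ℝ}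
    (h0 : 0 ≤ η) (h1 : η ≤ 1) :
    |prim (pw lam u1) τ η - prim (pw lam u2) τ η| ≤ D * exp (lam * τ) := by
  have hD0 : 0 ≤ D := (abs_nonneg _).trans (hD 0)
  unfold prim
  rw [← intervalIntegral.integral_sub ((cont_slice (pw_cont u1) τ).intervalIntegrable _ _)
    ((cont_slice (pw_cont u2) τ).intervalIntegrable _ _)]
  have := intervalIntegral.norm_integral_le_of_norm_le_const (a := 0) (b := η)
    (f := fun x => pw lam u1 τ x - pw lam u2 τ x) (C := D * exp (lam * τ)) (by
      intro x hx
      rw [uIoc_of_le h0] at hx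
      rw [Real.norm_eq_abs]
      unfold pw
      rw [← mul_sub, abs_mul, abs_of_pos (exp_pos _), mul_comm]
      refine mul_le_mul (hD _) (exp_le_exp.2 (by linarith [hx.1])) (exp_pos _).le hD0)
  rw [Real.norm_eq_abs] at this
  refine this.trans ?_
  rw [sub_zero, abs_of_nonneg h0]
  have := mul_nonneg hD0 (exp_pos (lam * τ)).le
  nlinarith

theorem contr_expo (hk : Continuous k) {L : ℝ} (hL : ∀ x y, |k x - k y| ≤ L * |x - y|)
    (hL0 : 0 ≤ L) (hlam : 0 < lam)
    {u1 u2 : ℝ × ℝ →ᵇ ℝ} {D : ℝ} (hD : ∀ z, |u1 z - u2 z| ≤ D) {τ σ : ℝ}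
    (h0 : 0 ≤ τ) (h1 : σ ≤ τ) :
    |expo (aof k lam u1) τ σ - expo (aof k lam u2) τ σ| ≤ L * D * (exp (lam * τ) / lam) := by
  have hD0 : 0 ≤ D := (abs_nonneg _).trans (hD 0)
  unfold expo
  rw [← intervalIntegral.integral_sub
    ((expo_integrand_cont (aof_cont hk u1) σ).intervalIntegrable _ _)
    ((expo_integrand_cont (aof_cont hk u2) σ).intervalIntegrable _ _)]
  have hm : max σ 0 ≤ τ := max_le h1 h0
  have hc : Continuous fun s => L * D * exp (lam * s) := by fun_prop
  have := intervalIntegral.norm_integral_le_of_norm_le (μ := volume) (a := max σ 0) (b := τ)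
    (f := fun s => aof k lam u1 s (s - σ) - aof k lam u2 s (s - σ))
    (g := fun s => L * D * exp (lam * s)) hm (Eventually.of_forall (by
      intro s hs
      have hs0 : 0 ≤ s := (le_max_right _ _).trans hs.1.le
      rw [Real.norm_eq_abs]
      unfold aof
      refine (hL _ _).trans ?_
      rw [mul_assoc]
      refine mul_le_mul_of_nonneg_left ?_ hL0
      have := contr_A (lam := lam) hD (τ := max s 0) (cl_nonneg 1 (s - σ)) (cl_le zero_le_one (s - σ))
      rwa [max_eq_left hs0] at this ⊢)) (hc.intervalIntegrable _ _)
  rw [Real.norm_eq_abs] at this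
  refine this.trans ?_
  have hint : ∫ s in (max σ 0)..τ, L * D * exp (lam * s)
      = L * D * (exp (lam * τ) / lam) - L * D * (exp (lam * max σ 0) / lam) := by
    have := intervalIntegral.integral_eq_sub_of_hasDerivAt (a := max σ 0) (b := τ)
      (f := fun s => L * D * (exp (lam * s) / lam)) (f' := fun s => L * D * exp (lam * s))
      (by
        intro s _
        have h := (((hasDerivAt_id s).const_mul lam).exp.div_const lam).const_mul (L * D)
        refine h.congr_deriv ?_
        simp only [id, mul_one]; field_simp) (hc.intervalIntegrable _ _)
    exact this
  rw [hint]
  have : 0 ≤ L * D * (exp (lam * max σ 0) / lam) := by positivity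
  linarith

theorem contr_P {u1 u2 : ℝ × ℝ →ᵇ ℝ} {D : ℝ} (hD : ∀ z, |u1 z - u2 z| ≤ D) {τ η : ℝ}
    (hlam : 2 ≤ lam) (h0 : 0 ≤ τ) (hη : 0 ≤ η) :
    |Pof v c B lam u1 (τ - η) - Pof v c B lam u2 (τ - η)|
      ≤ D * (1/2) * exp (lam * τ - 2 * η) := by
  have hD0 : 0 ≤ D := (abs_nonneg _).trans (hD 0)
  rcases le_total τ η with h | h
  · unfold Pof
    rw [max_eq_right (by linarith : τ - η ≤ 0)]
    simp only [add_sub_cancel_right, sub_self, abs_zero]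
    positivity
  · unfold Pof
    rw [max_eq_left (by linarith : 0 ≤ τ - η)]
    have e1 := cl_lip B (pw lam u1 (τ - η) 1 + c) (pw lam u2 (τ - η) 1 + c)
    have e2 := cl_lip B (pw lam u1 0 1 + c) (pw lam u2 0 1 + c)
    have key : ∀ t, |pw lam u1 t 1 + c - (pw lam u2 t 1 + c)| ≤ D * exp (lam * t - 2) := by
      intro t
      unfold pw
      rw [add_sub_add_right_eq_sub, ← mul_sub, abs_mul, abs_of_pos (exp_pos _), mul_comm, mul_one]
      exact mul_le_mul_of_nonneg_right (hD _) (exp_pos _).le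
    have k1 := key (τ - η)
    have k2 := key 0
    have h4 : exp (-2) ≤ 1/4 := by
      rw [exp_neg]
      have : (2:ℝ) ≤ exp 1 := by linarith [add_one_le_exp (1:ℝ)]
      have h2 : exp 2 = exp 1 * exp 1 := by rw [← exp_add]; norm_num
      have : 4 ≤ exp 2 := by rw [h2]; nlinarith
      rw [inv_le_comm₀ (exp_pos _) (by norm_num)]; linarith
    have m1 : exp (lam * (τ - η) - 2) ≤ exp (lam * τ - 2 * η) * (1/4) := by
      have : exp (lam * (τ - η) - 2) = exp (lam * (τ - η)) * exp (-2) := by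
        rw [← exp_add]; ring_nf
      rw [this]
      refine mul_le_mul (exp_le_exp.2 ?_) h4 (exp_pos _).le (exp_pos _).le
      nlinarith
    have m2 : exp (lam * 0 - 2) ≤ exp (lam * τ - 2 * η) * (1/4) := by
      have : exp (lam * 0 - 2) = 1 * exp (-2) := by simp
      rw [this]
      refine mul_le_mul (one_le_exp ?_) h4 (exp_pos _).le (exp_pos _).le
      nlinarith
    have f1 := e1.trans (k1.trans (mul_le_mul_of_nonneg_left m1 hD0))
    have f2 := e2.trans (k2.trans (mul_le_mul_of_nonneg_left m2 hD0))
    rw [abs_le] at f1 f2 ⊢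
    constructor <;> linarith

theorem Tmap_contracting {V : ℝ} (hk : Continuous k) (hv : Continuous v) (hB : 0 ≤ B)
    (hvb : ∀ x, 0 ≤ v x ∧ v x ≤ V) (hk0 : ∀ x, k x ≤ 0) {L : ℝ}
    (hL : ∀ x y, |k x - k y| ≤ L * |x - y|) (hL0 : 0 ≤ L) (hlam : 2 ≤ lam)
    (hlam2 : 4 * ((V + B) * L * exp 2) ≤ lam) :
    ContractingWith (3/4) (Tmap (c := c) hk hv hB hvb hk0 (by linarith : 0 ≤ lam)) := by
  refine ⟨?_, LipschitzWith.of_dist_le_mul ?_⟩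
  · rw [div_lt_one] <;> norm_num
  intro u1 u2
  set D := dist u1 u2 with hDdef
  have hD0 : 0 ≤ D := dist_nonneg
  have hD : ∀ z, |u1 z - u2 z| ≤ D := fun z => by
    rw [← Real.dist_eq]; exact BoundedContinuousFunction.dist_coe_le_dist z
  have h34 : ((3/4 : NNReal) : ℝ) = 3/4 := by norm_num
  rw [h34]
  rw [BoundedContinuousFunction.dist_le (by positivity)]
  intro z
  rw [Real.dist_eq]
  change |Tfun k v c B lam u1 z - Tfun k v c B lam u2 z| ≤ _
  unfold Tfun
  have h3 : 0 ≤ max z.1 0 := le_max_right _ _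
  have g1 := cl_nonneg 1 z.2
  have g2 := cl_le zero_le_one z.2
  set τ := max z.1 0
  set η := cl 1 z.2
  rw [← sub_mul, abs_mul, abs_of_pos (exp_pos (-(lam * τ - 2 * η))), exp_neg,
    mul_inv_le_iff₀ (exp_pos _)]
  have hV0 : 0 ≤ V := (hvb 0).1.trans (hvb 0).2
  have hp := contr_P (v := v) (c := c) (B := B) hD hlam h3 g1
  have he := contr_expo (lam := lam) hk hL hL0 (by linarith) hD h3 (by linarith : τ - η ≤ τ)
  have hb := Pof_bd (c := c) (lam := lam) hB hvb u2 (τ - η)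
  have n1 := expo_nonpos (a := aof k lam u1) (fun s y => hk0 _) h3 (by linarith : τ - η ≤ τ)
  have n2 := expo_nonpos (a := aof k lam u2) (fun s y => hk0 _) h3 (by linarith : τ - η ≤ τ)
  have hl := (exp_lip n1 n2).trans he
  unfold tr
  set P1 := Pof v c B lam u1 (τ - η)
  set P2 := Pof v c B lam u2 (τ - η)
  set E1 := exp (expo (aof k lam u1) τ (τ - η))
  set E2 := exp (expo (aof k lam u2) τ (τ - η))
  have hE1 : E1 ≤ 1 := exp_le_one_iff.2 n1
  have hE0 : 0 ≤ E1 := (exp_pos _).le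
  have s1 : |P1 * E1 - P2 * E2| ≤ |P1 - P2| + |P2| * |E1 - E2| := by
    have : P1 * E1 - P2 * E2 = (P1 - P2) * E1 + P2 * (E1 - E2) := by ring
    rw [this]
    refine (abs_add_le _ _).trans ?_
    rw [abs_mul, abs_mul, abs_of_nonneg hE0]
    have := mul_le_mul_of_nonneg_left hE1 (abs_nonneg (P1 - P2))
    linarith
  have s2 : |P2| * |E1 - E2| ≤ (V + B) * (L * D * (exp (lam * τ) / lam)) :=
    mul_le_mul hb hl (abs_nonneg _) (by linarith)
  have hlp : 0 < lam := by linarith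
  have s3 : exp (lam * τ) ≤ exp (lam * τ - 2 * η) * exp 2 := by
    rw [← exp_add]; exact exp_le_exp.2 (by linarith)
  have s4 : (V + B) * (L * D * (exp (lam * τ) / lam)) ≤ D * (1/4) * exp (lam * τ - 2 * η) := by
    have : (V + B) * (L * D * (exp (lam * τ) / lam)) = (V + B) * L * D * exp (lam * τ) / lam := by
      ring
    rw [this, div_le_iff₀ hlp]
    have q : 0 ≤ (V + B) * L * D := by positivity
    have q1 := mul_le_mul_of_nonneg_left s3 q
    have q2 := mul_le_mul_of_nonneg_left hlam2 (mul_nonneg hD0 (exp_pos (lam * τ - 2 * η)).le)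
    nlinarith
  calc _ ≤ _ := s1
    _ ≤ D * (1/2) * exp (lam * τ - 2 * η) + D * (1/4) * exp (lam * τ - 2 * η) := by linarith
    _ = _ := by ring

end fp

/-- Core existence result, in characteristic labels. -/
theorem core_exists {k v : ℝ → ℝ} {c κ V L : ℝ} (hk : Continuous k) (hv : Continuous v)
    (hvb : ∀ x, 0 ≤ v x ∧ v x ≤ V) (hκ : κ < 0) (hkκ : ∀ x, k x ≤ κ)
    (hL : ∀ x y, |k x - k y| ≤ L * |x - y|) (hL0 : 0 ≤ L) (hc : 0 ≤ c) (hcomp : v 1 + c = v 0) :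
    ∃ (P : ℝ → ℝ) (a : ℝ → ℝ → ℝ), Continuous P ∧ Continuous (Function.uncurry a) ∧
      (∀ τ η, 0 ≤ τ → η ∈ Icc (0:ℝ) 1 → a τ η = k (Qh (tr P a) τ η)) ∧
      (∀ σ ≤ 0, P σ = v (-σ)) ∧
      (∀ τ, 0 ≤ τ → P τ = tr P a τ (τ - 1) + c) ∧
      (∀ σ, 0 ≤ P σ) := by
  have hk0 : ∀ x, k x ≤ 0 := fun x => (hkκ x).trans hκ.le
  have hV0 : 0 ≤ V := (hvb 0).1.trans (hvb 0).2
  have heκ : 0 < 1 - exp κ := by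
    have := Real.exp_lt_exp.2 hκ; rw [Real.exp_zero] at this; linarith
  obtain ⟨B, hBdef⟩ : ∃ B, B = V + c + c / (1 - exp κ) := ⟨_, rfl⟩
  have hBq : 0 ≤ c / (1 - exp κ) := by positivity
  have hB1 : V + c ≤ B := by linarith
  have hB2 : B * exp κ + c ≤ B := by
    have : c / (1 - exp κ) * (1 - exp κ) = c := by field_simp
    have : B * (1 - exp κ) = (V + c) * (1 - exp κ) + c := by rw [hBdef, add_mul, this]
    have : 0 ≤ (V + c) * (1 - exp κ) := by positivity
    nlinarith
  have hB : 0 ≤ B := by linarith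
  obtain ⟨lam, hlam, hlam2⟩ : ∃ lam : ℝ, 2 ≤ lam ∧ 4 * ((V + B) * L * exp 2) ≤ lam :=
    ⟨max 2 _, le_max_left _ _, le_max_right _ _⟩
  have hcw := Tmap_contracting (c := c) hk hv hB hvb hk0 hL hL0 hlam hlam2
  obtain ⟨u, hu, -⟩ := hcw.exists_fixedPoint 0 (edist_ne_top _ _)
  have hfix : ∀ τ η, 0 ≤ τ → η ∈ Icc (0:ℝ) 1 →
      pw lam u τ η = tr (Pof v c B lam u) (aof k lam u) τ (τ - η) := by
    intro τ η h0 hη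
    have h := congrArg (fun w : ℝ × ℝ →ᵇ ℝ => w (τ, η)) hu
    change Tfun k v c B lam u (τ, η) = u (τ, η) at h
    unfold Tfun at h
    simp only [max_eq_left h0, cl_eq hη.1 hη.2] at h
    unfold pw
    rw [← h, mul_comm, mul_assoc, ← exp_add]
    simp
  refine ⟨Pof v c B lam u, aof k lam u, Pof_cont hv u, aof_cont hk u, ?_, ?_⟩
  · intro τ η h0 hη
    unfold aof
    rw [max_eq_left h0, cl_eq hη.1 hη.2, Qh_eq_int]
    congr 1
    unfold prim
    refine intervalIntegral.integral_congr fun x hx => ?_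
    rw [uIcc_of_le hη.1] at hx
    exact hfix τ x h0 ⟨hx.1, hx.2.trans hη.2⟩
  have h01 : pw lam u 0 1 = v 1 := by
    rw [hfix 0 1 le_rfl ⟨zero_le_one, le_rfl⟩]
    have := tr_start (Pof v c B lam u) (aof k lam u) (0 - 1)
    rw [max_eq_right (by norm_num)] at this
    rw [this]
    unfold Pof
    norm_num
  have hcl0 : cl B (pw lam u 0 1 + c) = v 0 := by
    rw [h01, hcomp]; exact cl_eq (hvb 0).1 (by linarith [(hvb 0).2])
  have hP1 : ∀ σ ≤ 0, Pof v c B lam u σ = v (-σ) := by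
    intro σ hσ
    unfold Pof
    rw [max_eq_right hσ, max_eq_left (by linarith : 0 ≤ -σ)]; ring
  have hP2 : ∀ σ, 0 ≤ σ → Pof v c B lam u σ = cl B (pw lam u σ 1 + c) := by
    intro σ hσ
    unfold Pof
    rw [hcl0, max_eq_left hσ, max_eq_right (by linarith : -σ ≤ 0)]; ring
  have hPn : ∀ σ, 0 ≤ Pof v c B lam u σ := by
    intro σ
    rcases le_total σ 0 with h | h
    · rw [hP1 σ h]; exact (hvb _).1
    · rw [hP2 σ h]; exact cl_nonneg _ _
  refine ⟨hP1, ?_, hPn⟩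
  intro τ h0
  rw [hP2 τ h0, hfix τ 1 h0 ⟨zero_le_one, le_rfl⟩]
  have hn : 0 ≤ tr (Pof v c B lam u) (aof k lam u) τ (τ - 1) :=
    mul_nonneg (hPn _) (exp_pos _).le
  refine cl_eq (by linarith) ?_
  rcases le_total τ 1 with h | h
  · have : tr (Pof v c B lam u) (aof k lam u) τ (τ - 1) ≤ V := by
      unfold tr
      rw [hP1 _ (by linarith)]
      have e1 := (hvb (-(τ-1)))
      have e2 := exp_le_one_iff.2 (expo_nonpos (a := aof k lam u) (fun s y => hk0 _) h0
        (by linarith : τ - 1 ≤ τ))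
      have e3 := exp_pos (expo (aof k lam u) τ (τ - 1))
      nlinarith
    linarith
  · have : tr (Pof v c B lam u) (aof k lam u) τ (τ - 1) ≤ B * exp κ := by
      unfold tr
      rw [hP2 _ (by linarith)]
      refine mul_le_mul (cl_le hB _) (exp_le_exp.2 ?_) (exp_pos _).le hB
      unfold expo
      rw [max_eq_left (by linarith)]
      have := intervalIntegral.integral_mono_on (μ := volume) (a := τ - 1) (b := τ)
        (f := fun s => aof k lam u s (s - (τ - 1))) (g := fun _ => κ) (by linarith)
        ((expo_integrand_cont (aof_cont hk u) _).intervalIntegrable _ _)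
        intervalIntegrable_const (fun s _ => hkκ _)
      simpa using this
    linarith

end

open Real Set MeasureTheory Filter Topology
open scoped ENNReal

noncomputable section

section sol
variable {Kt k v : ℝ → ℝ} {P : ℝ → ℝ} {a : ℝ → ℝ → ℝ} {Φ : ℝ}

theorem tr_diag (P : ℝ → ℝ) (a : ℝ → ℝ → ℝ) {τ : ℝ} (h : 0 ≤ τ) : tr P a τ τ = P τ := by
  have := tr_start P a τ
  rwa [max_eq_left h] at this

theorem Qh_g_eq (hKt : ∀ x, HasDerivAt Kt (k x) x) (hk : Continuous k) (hP : Continuous P)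
    (ha : Continuous (Function.uncurry a))
    (hak : ∀ τ η, 0 ≤ τ → η ∈ Icc (0:ℝ) 1 → a τ η = k (Qh (tr P a) τ η))
    {τ η : ℝ} (h0 : 0 ≤ τ) (hη : η ∈ Icc (0:ℝ) 1) :
    Qh (fun τ σ => a τ (τ - σ) * tr P a τ σ) τ η = Kt (Qh (tr P a) τ η) - Kt 0 := by
  rw [Qh_eq_int]
  have hf := tr_cont hP ha
  have hQ : ∀ x, HasDerivAt (fun y => Kt (Qh (tr P a) τ y))
      (k (Qh (tr P a) τ x) * tr P a τ (τ - x)) x := fun x =>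
    (hKt _).comp x (Qh_deriv_eta hf τ x)
  have hQc : Continuous (fun x => Qh (tr P a) τ x) :=
    continuous_iff_continuousAt.2 fun x => (Qh_deriv_eta hf τ x).continuousAt
  have hcc : Continuous (fun x => k (Qh (tr P a) τ x) * tr P a τ (τ - x)) :=
    (hk.comp hQc).mul ((cont_slice hf τ).comp (by fun_prop))
  have := intervalIntegral.integral_eq_sub_of_hasDerivAt (a := 0) (b := η)
    (fun x _ => hQ x) (hcc.intervalIntegrable _ _)
  have e0 : Qh (tr P a) τ 0 = 0 := by simp [Qh]
  rw [e0] at this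
  rw [← this]
  refine intervalIntegral.integral_congr fun x hx => ?_
  rw [uIcc_of_le hη.1] at hx
  simp only [sub_sub_cancel]
  rw [hak τ x h0 ⟨hx.1, hx.2.trans hη.2⟩]

theorem sol_tau (hKt : ∀ x, HasDerivAt Kt (k x) x) (hk : Continuous k) (hP : Continuous P)
    (ha : Continuous (Function.uncurry a))
    (hak : ∀ τ η, 0 ≤ τ → η ∈ Icc (0:ℝ) 1 → a τ η = k (Qh (tr P a) τ η))
    {τ η : ℝ} (h0 : 0 ≤ τ) (hη : η ∈ Icc (0:ℝ) 1) :
    HasDerivAt (fun s => Qh (tr P a) s η)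
      (P τ - tr P a τ (τ - η) + (Kt (Qh (tr P a) τ η) - Kt 0)) τ := by
  have := Qh_deriv_tau (tr_cont hP ha) (tr_dcont hP ha) (tr_hasDerivAt P ha) τ η
  rwa [Qh_g_eq hKt hk hP ha hak h0 hη, tr_diag P a h0] at this

theorem sol_char (hKt : ∀ x, HasDerivAt Kt (k x) x) (hk : Continuous k) (hP : Continuous P)
    (ha : Continuous (Function.uncurry a))
    (hak : ∀ τ η, 0 ≤ τ → η ∈ Icc (0:ℝ) 1 → a τ η = k (Qh (tr P a) τ η))
    {τ σ : ℝ} (h0 : 0 ≤ τ) (hη : τ - σ ∈ Icc (0:ℝ) 1) :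
    HasDerivAt (fun s => Qh (tr P a) s (s - σ))
      (P τ + (Kt (Qh (tr P a) τ (τ - σ)) - Kt 0)) τ := by
  have := Qh_deriv_char (tr_cont hP ha) (tr_dcont hP ha) (tr_hasDerivAt P ha) τ σ
  rwa [Qh_g_eq hKt hk hP ha hak h0 hη, tr_diag P a h0] at this

theorem sol_one (hKt : ∀ x, HasDerivAt Kt (k x) x) (hk : Continuous k) (hk0 : ∀ x, k x ≤ 0)
    (hP : Continuous P)
    (ha : Continuous (Function.uncurry a))
    (hak : ∀ τ η, 0 ≤ τ → η ∈ Icc (0:ℝ) 1 → a τ η = k (Qh (tr P a) τ η))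
    (hPc : ∀ τ, 0 ≤ τ → P τ = tr P a τ (τ - 1) + (Kt 0 - Kt Φ))
    (hi : Qh (tr P a) 0 1 = Φ) {τ : ℝ} (h0 : 0 ≤ τ) : Qh (tr P a) τ 1 = Φ := by
  have hanti : Antitone Kt := antitone_of_deriv_nonpos (fun x => (hKt x).differentiableAt)
    (fun x => by rw [(hKt x).deriv]; exact hk0 x)
  have hd : ∀ t, 0 ≤ t → HasDerivAt (fun s => (Qh (tr P a) s 1 - Φ) ^ 2)
      (2 * (Qh (tr P a) t 1 - Φ) * (Kt (Qh (tr P a) t 1) - Kt Φ)) t := by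
    intro t ht
    have h := (sol_tau hKt hk hP ha hak ht (η := 1) ⟨zero_le_one, le_rfl⟩)
    refine ((h.sub_const Φ).pow 2).congr_deriv ?_
    rw [hPc t ht]; simp
  have hm : AntitoneOn (fun s => (Qh (tr P a) s 1 - Φ) ^ 2) (Ici 0) := by
    refine antitoneOn_of_deriv_nonpos (convex_Ici 0)
      (fun t ht => (hd t ht).continuousAt.continuousWithinAt)
      (fun t ht => ?_) (fun t ht => ?_)
    · rw [interior_Ici] at ht
      exact (hd t (le_of_lt ht)).differentiableAt.differentiableWithinAt
    · rw [interior_Ici] at ht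
      rw [(hd t (le_of_lt ht)).deriv]
      rcases le_total (Qh (tr P a) t 1) Φ with h | h
      · have := hanti h
        nlinarith
      · have := hanti h
        nlinarith
  have := hm (mem_Ici.2 le_rfl) (mem_Ici.2 h0) h0
  simp only [hi, sub_self] at this
  have h2 : (Qh (tr P a) τ 1 - Φ) ^ 2 = 0 := le_antisymm (by simpa using this) (sq_nonneg _)
  have := pow_eq_zero_iff (two_ne_zero) |>.1 h2
  linarith

theorem sol_pos (hKt : ∀ x, HasDerivAt Kt (k x) x) (hk : Continuous k) (hk0 : ∀ x, k x ≤ 0)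
    (hP : Continuous P)
    (ha : Continuous (Function.uncurry a))
    (hak : ∀ τ η, 0 ≤ τ → η ∈ Icc (0:ℝ) 1 → a τ η = k (Qh (tr P a) τ η))
    (hPc : ∀ τ, 0 ≤ τ → P τ = tr P a τ (τ - 1) + (Kt 0 - Kt Φ))
    (hi : Qh (tr P a) 0 1 = Φ)
    (hH : ∀ η ∈ Icc (0:ℝ) 1, 0 < P (-η) - Kt (Qh (tr P a) 0 η)) {t : ℝ} (ht : 0 ≤ t) :
    0 < tr P a t (t - 1) - Kt Φ := by
  have hf := tr_cont hP ha
  set n : ℝ → ℝ := fun t => tr P a t (t - 1) - Kt Φ with hn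
  have hnc : Continuous n :=
    (hf.comp (f := fun t : ℝ => (t, t - 1)) (by fun_prop)).sub continuous_const
  by_contra hneg
  push Not at hneg
  set S : Set ℝ := Ici 0 ∩ n ⁻¹' Iic 0 with hS
  have hSc : IsClosed S := isClosed_Ici.inter (isClosed_Iic.preimage hnc)
  have hSne : S.Nonempty := ⟨t, ht, hneg⟩
  have hSb : BddBelow S := ⟨0, fun x hx => hx.1⟩
  have hmem := hSc.csInf_mem hSne hSb
  obtain ⟨t0, ht0⟩ : ∃ t0, t0 = sInf S := ⟨_, rfl⟩
  rw [← ht0] at hmem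
  have hpos : ∀ s, 0 ≤ s → s < t0 → 0 < n s := by
    intro s hs hst
    by_contra h
    push Not at h
    have := csInf_le hSb (show s ∈ S from ⟨hs, h⟩)
    linarith
  have h00 : (0:ℝ) ≤ t0 := hmem.1
  have hnt0 : n t0 ≤ 0 := hmem.2
  have hPn : ∀ s, 0 ≤ s → P s = n s + Kt 0 := by
    intro s hs; rw [hPc s hs]; simp only [hn]; ring
  have htr0 : ∀ σ ≤ (0:ℝ), tr P a 0 σ = P σ := by
    intro σ hσ
    have := tr_start P a σ
    rwa [max_eq_right hσ] at this
  have hn0 : 0 < n 0 := by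
    have := hH 1 ⟨zero_le_one, le_rfl⟩
    rw [hi] at this
    simp only [hn]
    rw [htr0 _ (by norm_num)]
    simpa using this
  have ht0p : 0 < t0 := by
    rcases h00.eq_or_lt with h | h
    · rw [← h] at hnt0; linarith
    · exact h
  set σ := t0 - 1 with hσ
  set s0 := max σ 0 with hs0
  have hs0n : 0 ≤ s0 := le_max_right _ _
  have hs0σ : σ ≤ s0 := le_max_left _ _
  have hs0t : s0 < t0 := max_lt (by linarith) ht0p
  set h : ℝ → ℝ := fun s => tr P a s σ - Kt (Qh (tr P a) s (s - σ)) with hh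
  have hstart : 0 < h s0 := by
    simp only [hh]
    rw [tr_start]
    rcases le_total σ 0 with hc | hc
    · rw [hs0, max_eq_right hc]
      have := hH (-σ) ⟨by linarith, by linarith⟩
      simpa using this
    · rw [hs0, max_eq_left hc]
      have : Qh (tr P a) σ (σ - σ) = 0 := by simp [Qh]
      rw [this, hPn σ hc]
      have := hpos σ hc (by linarith)
      linarith
  have hend : h t0 = n t0 := by
    simp only [hh, hn]
    have : t0 - σ = 1 := by rw [hσ]; ring
    rw [this, sol_one hKt hk hk0 hP ha hak hPc hi h00]
  set y : ℝ → ℝ := fun s => h s * exp (-expo a s σ) with hy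
  have hyd : ∀ s ∈ Icc s0 t0, HasDerivAt y (-(a s (s - σ)) * n s * exp (-expo a s σ)) s := by
    intro s hs
    have hsn : 0 ≤ s := hs0n.trans hs.1
    have hdom : s - σ ∈ Icc (0:ℝ) 1 := ⟨by linarith [hs.1], by linarith [hs.2]⟩
    have e1 := tr_hasDerivAt P ha s σ
    have e2 := (hKt (Qh (tr P a) s (s - σ))).comp s (sol_char hKt hk hP ha hak hsn hdom)
    have hc := expo_integrand_cont ha σ
    have e3 : HasDerivAt (fun t => expo a t σ) (a s (s - σ)) s :=
      intervalIntegral.integral_hasDerivAt_right (hc.intervalIntegrable _ _)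
        hc.stronglyMeasurable.stronglyMeasurableAtFilter hc.continuousAt
    refine ((e1.sub e2).mul e3.neg.exp).congr_deriv ?_
    simp only [Pi.sub_apply, Function.comp, Pi.neg_apply]
    rw [hak s _ hsn hdom, hPn s hsn]
    ring
  have hmono : MonotoneOn y (Icc s0 t0) := by
    refine monotoneOn_of_deriv_nonneg (convex_Icc _ _)
      (fun s hs => (hyd s hs).continuousAt.continuousWithinAt)
      (fun s hs => (hyd s (interior_subset hs)).differentiableAt.differentiableWithinAt)
      (fun s hs => ?_)
    rw [(hyd s (interior_subset hs)).deriv]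
    rw [interior_Icc] at hs
    have hsn : 0 ≤ s := hs0n.trans hs.1.le
    have hdom : s - σ ∈ Icc (0:ℝ) 1 := ⟨by linarith [hs.1], by linarith [hs.2]⟩
    have := hk0 (Qh (tr P a) s (s - σ))
    rw [← hak s _ hsn hdom] at this
    have h2 := hpos s hsn hs.2
    have h3 : 0 ≤ -(a s (s-σ)) := by linarith
    positivity
  have := hmono ⟨le_rfl, hs0t.le⟩ ⟨hs0t.le, le_rfl⟩ hs0t.le
  have e1 : 0 < y s0 := mul_pos hstart (exp_pos _)
  have e2 : y t0 ≤ 0 := by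
    simp only [hy]; rw [hend]
    exact mul_nonpos_of_nonpos_of_nonneg hnt0 (exp_pos _).le
  linarith

theorem sol_mono (hP : Continuous P) (hP0 : ∀ σ, 0 ≤ P σ)
    (ha : Continuous (Function.uncurry a)) (τ : ℝ) : Monotone (Qh (tr P a) τ) := by
  refine monotone_of_deriv_nonneg
    (fun x => (Qh_deriv_eta (tr_cont hP ha) τ x).differentiableAt) (fun x => ?_)
  rw [(Qh_deriv_eta (tr_cont hP ha) τ x).deriv]
  exact mul_nonneg (hP0 _) (exp_pos _).le

end sol
end

open Real Set MeasureTheory Filter Topology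
open scoped ENNReal

noncomputable section

def sg (x : ℝ) : ℝ := if 0 < x then 1 else if x < 0 then -1 else 0

theorem sg_meas : Measurable sg := by
  unfold sg
  exact Measurable.ite measurableSet_Ioi measurable_const
    (Measurable.ite measurableSet_Iio measurable_const measurable_const)

theorem sg_abs_le (x : ℝ) : |sg x| ≤ 1 := by
  unfold sg; split_ifs <;> norm_num

theorem sg_pos {x : ℝ} (h : 0 < x) : sg x = 1 := by simp [sg, h]
theorem sg_neg {x : ℝ} (h : x < 0) : sg x = -1 := by simp [sg, h, not_lt.2 h.le]
theorem sg_zero : sg 0 = 0 := by simp [sg]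

theorem reg_pos {ε : ℝ} (hε : 0 < ε) (x : ℝ) : 0 < sqrt (x ^ 2 + ε ^ 2) := sqrt_pos.2 (by positivity)

theorem reg_abs_le (ε x : ℝ) : |x| ≤ sqrt (x ^ 2 + ε ^ 2) :=
  abs_le_sqrt (by nlinarith [sq_nonneg ε])

theorem reg_le {ε : ℝ} (hε : 0 < ε) (x : ℝ) : sqrt (x ^ 2 + ε ^ 2) ≤ |x| + ε := by
  rw [sqrt_le_left (by positivity)]
  nlinarith [abs_nonneg x, sq_abs x]

theorem reg_deriv {ε : ℝ} (hε : 0 < ε) {y : ℝ → ℝ} {y' t : ℝ} (h : HasDerivAt y y' t) :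
    HasDerivAt (fun s => sqrt (y s ^ 2 + ε ^ 2)) (y t / sqrt (y t ^ 2 + ε ^ 2) * y') t := by
  have h1 := ((h.pow 2).add_const (ε ^ 2)).sqrt (by
    have h : 0 < y t ^ 2 + ε ^ 2 := by positivity
    exact h.ne')
  refine h1.congr_deriv ?_
  have := reg_pos hε (y t)
  simp
  field_simp

theorem reg_sig_abs {ε : ℝ} (hε : 0 < ε) (x : ℝ) : |x / sqrt (x ^ 2 + ε ^ 2)| ≤ 1 := by
  rw [abs_div, abs_of_pos (reg_pos hε x), div_le_one (reg_pos hε x)]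
  exact reg_abs_le ε x

theorem reg_sig_nonneg {ε : ℝ} (hε : 0 < ε) (x : ℝ) : 0 ≤ x / sqrt (x ^ 2 + ε ^ 2) * x := by
  have := reg_pos hε x
  have e : x / sqrt (x ^ 2 + ε ^ 2) * x = x ^ 2 / sqrt (x ^ 2 + ε ^ 2) := by ring
  rw [e]; positivity

theorem reg_sig_err {ε : ℝ} (hε : 0 < ε) (x : ℝ) : |x| - x / sqrt (x ^ 2 + ε ^ 2) * x ≤ ε := by
  have h1 := reg_pos hε x
  have h2 := reg_le hε x
  have h3 := reg_abs_le ε x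
  have e : x / sqrt (x ^ 2 + ε ^ 2) * x = |x| * |x| / sqrt (x ^ 2 + ε ^ 2) := by
    rw [abs_mul_abs_self]; ring
  rw [e, sub_le_iff_le_add, ← sub_le_iff_le_add', le_div_iff₀ h1]
  have h4 := abs_nonneg x
  by_cases h : |x| ≤ ε
  · nlinarith [mul_nonneg h4 h4]
  · push Not at h
    nlinarith

theorem sign_int {Y Y' : ℝ → ℝ} (hY : ∀ x, HasDerivAt Y (Y' x) x) (hc : Continuous Y')
    (h0 : Y 0 = 0) (h1 : Y 1 = 0) : ∫ x in (0:ℝ)..1, sg (Y x) * Y' x = 0 := by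
  have hYc : Continuous Y := continuous_iff_continuousAt.2 fun x => (hY x).continuousAt
  have hε : ∀ n : ℕ, (0:ℝ) < 1 / ((n:ℝ) + 1) := fun n => by positivity
  set F : ℕ → ℝ → ℝ := fun n x => Y x / sqrt (Y x ^ 2 + (1 / ((n:ℝ) + 1)) ^ 2) * Y' x with hF
  have hFc : ∀ n, Continuous (F n) := by
    intro n
    refine (hYc.div (by fun_prop) fun x => (reg_pos (hε n) _).ne').mul hc
  have hz : ∀ n, ∫ x in (0:ℝ)..1, F n x = 0 := by
    intro n
    have := intervalIntegral.integral_eq_sub_of_hasDerivAt (a := 0) (b := 1)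
      (fun x _ => reg_deriv (hε n) (hY x)) ((hFc n).intervalIntegrable _ _)
    rw [h0, h1, sub_self] at this
    exact this
  have hl : Tendsto (fun n => ∫ x in (0:ℝ)..1, F n x) atTop (𝓝 (∫ x in (0:ℝ)..1, sg (Y x) * Y' x)) := by
    refine intervalIntegral.tendsto_integral_filter_of_dominated_convergence (fun x => |Y' x|)
      (Eventually.of_forall fun n => (hFc n).aestronglyMeasurable)
      (Eventually.of_forall fun n => Eventually.of_forall fun x _ => ?_)
      (hc.abs.intervalIntegrable _ _)
      (Eventually.of_forall fun x _ => ?_)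
    · rw [Real.norm_eq_abs, hF, abs_mul]
      have := mul_le_mul_of_nonneg_right (reg_sig_abs (hε n) (Y x)) (abs_nonneg (Y' x))
      simpa using this
    · refine Tendsto.mul_const _ ?_
      have ht : Tendsto (fun n : ℕ => (1 / ((n:ℝ) + 1))) atTop (𝓝 0) :=
        tendsto_one_div_add_atTop_nhds_zero_nat
      by_cases hy : Y x = 0
      · rw [hy, sg_zero]; simp
      · have h2 : Tendsto (fun n : ℕ => Y x / sqrt (Y x ^ 2 + (1 / ((n:ℝ) + 1)) ^ 2)) atTop
            (𝓝 (Y x / sqrt (Y x ^ 2 + 0 ^ 2))) := by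
          refine Tendsto.div tendsto_const_nhds ?_ ?_
          · exact (Real.continuous_sqrt.tendsto _).comp (tendsto_const_nhds.add (ht.pow 2))
          · simp [sqrt_sq_eq_abs, hy]
        convert h2 using 2
        rcases lt_or_gt_of_ne hy with h | h
        · rw [sg_neg h]; simp [sqrt_sq_eq_abs, abs_of_neg h]
          rw [div_neg, div_self hy]
        · rw [sg_pos h]; simp [sqrt_sq_eq_abs, abs_of_pos h]
          rw [div_self hy]
  exact tendsto_nhds_unique hl (by simp only [hz]; exact tendsto_const_nhds)

theorem pt_ineq {a1 a2 p1 p2 C ε σ s : ℝ} (ha1 : 0 ≤ a1) (ha2 : 0 ≤ a2) (hC1 : a1 ≤ C) (hC2 : a2 ≤ C)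
    (hp1 : 0 ≤ p1) (hp2 : 0 ≤ p2)
    (hs : (s = 1 ∧ a1 ≤ a2) ∨ (s = -1 ∧ a2 ≤ a1) ∨ (s = 0 ∧ a1 = a2))
    (hσ : |σ| ≤ 1) (hD : 0 ≤ σ * (p1 - p2)) (he : |p1 - p2| - σ * (p1 - p2) ≤ ε) (hε : 0 ≤ ε) :
    s * (a1 * p1 - a2 * p2) - C * ε ≤ σ * (a1 * p1 - a2 * p2) := by
  have hC : 0 ≤ C := ha1.trans hC1
  have hCe : 0 ≤ C * ε := mul_nonneg hC hε
  rw [abs_le] at hσ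
  rcases hs with ⟨rfl, h⟩ | ⟨rfl, h⟩ | ⟨rfl, h⟩
  · rcases le_total p2 p1 with hp | hp
    · rw [abs_of_nonneg (by linarith)] at he
      have e1 : a1 * p1 - a2 * p2 ≤ a1 * (p1 - p2) := by nlinarith
      have e2 : (1 - σ) * (a1 * p1 - a2 * p2) ≤ (1 - σ) * (a1 * (p1 - p2)) :=
        mul_le_mul_of_nonneg_left e1 (by linarith)
      have e3 : a1 * ((1 - σ) * (p1 - p2)) ≤ C * ε := by
        refine mul_le_mul hC1 (by linarith) ?_ hC
        exact mul_nonneg (by linarith) (by linarith)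
      nlinarith
    · have e1 : a1 * p1 - a2 * p2 ≤ 0 := by nlinarith
      nlinarith
  · rcases le_total p1 p2 with hp | hp
    · rw [abs_of_nonpos (by linarith)] at he
      have e1 : a2 * p2 - a1 * p1 ≤ a2 * (p2 - p1) := by nlinarith
      have e2 : (1 + σ) * (a2 * p2 - a1 * p1) ≤ (1 + σ) * (a2 * (p2 - p1)) :=
        mul_le_mul_of_nonneg_left e1 (by linarith)
      have e3 : a2 * ((1 + σ) * (p2 - p1)) ≤ C * ε := by
        refine mul_le_mul hC2 (by linarith) ?_ hC
        exact mul_nonneg (by linarith) (by linarith)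
      nlinarith
    · have e1 : a2 * p2 - a1 * p1 ≤ 0 := by nlinarith
      nlinarith
  · subst h
    have : σ * (a1 * p1 - a1 * p2) = a1 * (σ * (p1 - p2)) := by ring
    rw [this]
    nlinarith [mul_nonneg ha1 hD]

section spatial
variable {Q1 Q2 p1 p2 : ℝ → ℝ} {Φ : ℝ}

theorem sg_A_int (h1 : ∀ x, HasDerivAt Q1 (p1 x) x) (h2 : ∀ x, HasDerivAt Q2 (p2 x) x)
    (c1 : Continuous p1) (c2 : Continuous p2) (h10 : Q1 0 = 0) (h20 : Q2 0 = 0)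
    (h11 : Q1 1 = Φ) (h21 : Q2 1 = Φ)
    (r1 : ∀ x ∈ Icc (0:ℝ) 1, Q1 x ∈ Icc 0 Φ) (r2 : ∀ x ∈ Icc (0:ℝ) 1, Q2 x ∈ Icc 0 Φ)
    {α : ℝ → ℝ} (hα : Continuous α) (hα0 : ∀ φ ∈ Icc 0 Φ, 0 ≤ α φ) :
    ∫ x in (0:ℝ)..1, sg (Q1 x - Q2 x) * (α (Q1 x) * p1 x - α (Q2 x) * p2 x) = 0 := by
  have hc1 : Continuous Q1 := continuous_iff_continuousAt.2 fun x => (h1 x).continuousAt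
  have hc2 : Continuous Q2 := continuous_iff_continuousAt.2 fun x => (h2 x).continuousAt
  set A : ℝ → ℝ := fun φ => ∫ y in (0:ℝ)..φ, (α y + 1) with hA
  have hα1 : Continuous (fun y => α y + 1) := by fun_prop
  have hAd : ∀ φ, HasDerivAt A (α φ + 1) φ := fun φ =>
    intervalIntegral.integral_hasDerivAt_right (hα1.intervalIntegrable _ _)
      hα1.stronglyMeasurable.stronglyMeasurableAtFilter hα1.continuousAt
  have hAm : StrictMonoOn A (Icc 0 Φ) := by
    refine strictMonoOn_of_deriv_pos (convex_Icc _ _)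
      (fun x _ => (hAd x).continuousAt.continuousWithinAt) (fun x hx => ?_)
    rw [(hAd x).deriv]
    have := hα0 x (interior_subset hx)
    linarith
  have i1 := sign_int (Y := fun x => Q1 x - Q2 x) (Y' := fun x => p1 x - p2 x)
    (fun x => (h1 x).sub (h2 x)) (by fun_prop) (by simp [h10, h20]) (by simp [h11, h21])
  have i2 := sign_int (Y := fun x => A (Q1 x) - A (Q2 x))
    (Y' := fun x => (α (Q1 x) + 1) * p1 x - (α (Q2 x) + 1) * p2 x)
    (fun x => ((hAd _).comp x (h1 x)).sub ((hAd _).comp x (h2 x))) (by fun_prop)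
    (by simp [h10, h20]) (by simp [h11, h21])
  have i3 : ∫ x in (0:ℝ)..1, sg (A (Q1 x) - A (Q2 x)) * ((α (Q1 x) + 1) * p1 x - (α (Q2 x) + 1) * p2 x)
      = ∫ x in (0:ℝ)..1, sg (Q1 x - Q2 x) * ((α (Q1 x) + 1) * p1 x - (α (Q2 x) + 1) * p2 x) := by
    refine intervalIntegral.integral_congr fun x hx => ?_
    rw [uIcc_of_le zero_le_one] at hx
    have : sg (A (Q1 x) - A (Q2 x)) = sg (Q1 x - Q2 x) := by
      rcases lt_trichotomy (Q1 x) (Q2 x) with h | h | h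
      · rw [sg_neg (by linarith : Q1 x - Q2 x < 0),
          sg_neg (by linarith [hAm (r1 x hx) (r2 x hx) h])]
      · rw [h]; simp
      · rw [sg_pos (by linarith : 0 < Q1 x - Q2 x),
          sg_pos (by linarith [hAm (r2 x hx) (r1 x hx) h])]
    simp only [this]
  rw [i3] at i2
  have hint : ∀ w : ℝ → ℝ, Continuous w →
      IntervalIntegrable (fun x => sg (Q1 x - Q2 x) * w x) volume 0 1 := by
    intro w hw
    refine (hw.intervalIntegrable 0 1).mono_fun
      ((sg_meas.comp (hc1.sub hc2).measurable).mul hw.measurable).aestronglyMeasurable ?_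
    refine Eventually.of_forall fun x => ?_
    simp only [norm_mul, Real.norm_eq_abs]
    have := mul_le_mul_of_nonneg_right (sg_abs_le (Q1 x - Q2 x)) (abs_nonneg (w x))
    simpa using this
  have u1 := hint (fun x => (α (Q1 x) + 1) * p1 x - (α (Q2 x) + 1) * p2 x) (by fun_prop)
  have u2 := hint (fun x => p1 x - p2 x) (by fun_prop)
  have := intervalIntegral.integral_sub (E := ℝ) u1 u2
  rw [i1, i2, sub_zero] at this
  refine Eq.trans ?_ this
  refine intervalIntegral.integral_congr fun x _ => ?_
  ring

theorem sg_int_bd (h1 : ∀ x, HasDerivAt Q1 (p1 x) x) (h2 : ∀ x, HasDerivAt Q2 (p2 x) x)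
    (c1 : Continuous p1) (c2 : Continuous p2) (h10 : Q1 0 = 0) (h20 : Q2 0 = 0)
    (h11 : Q1 1 = Φ) (h21 : Q2 1 = Φ)
    (r1 : ∀ x ∈ Icc (0:ℝ) 1, Q1 x ∈ Icc 0 Φ) (r2 : ∀ x ∈ Icc (0:ℝ) 1, Q2 x ∈ Icc 0 Φ)
    (n1 : ∀ x ∈ Icc (0:ℝ) 1, 0 ≤ p1 x) (n2 : ∀ x ∈ Icc (0:ℝ) 1, 0 ≤ p2 x)
    {α : ℝ → ℝ} (hα : Continuous α) {C : ℝ} (hα0 : ∀ φ ∈ Icc 0 Φ, 0 ≤ α φ ∧ α φ ≤ C)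
    (hm : AntitoneOn α (Icc 0 Φ) ∨ MonotoneOn α (Icc 0 Φ))
    {s : ℝ → ℝ} (hs : Continuous s) {ε : ℝ} (hε : 0 ≤ ε)
    (hs1 : ∀ x, |s x| ≤ 1) (hs2 : ∀ x, 0 ≤ s x * (p1 x - p2 x))
    (hs3 : ∀ x, |p1 x - p2 x| - s x * (p1 x - p2 x) ≤ ε) :
    -(C * ε) ≤ ∫ x in (0:ℝ)..1, s x * (α (Q1 x) * p1 x - α (Q2 x) * p2 x) := by
  have hc1 : Continuous Q1 := continuous_iff_continuousAt.2 fun x => (h1 x).continuousAt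
  have hc2 : Continuous Q2 := continuous_iff_continuousAt.2 fun x => (h2 x).continuousAt
  have h0 := sg_A_int h1 h2 c1 c2 h10 h20 h11 h21 r1 r2 hα (fun φ hφ => (hα0 φ hφ).1)
  have hint : ∀ w : ℝ → ℝ, Continuous w →
      IntervalIntegrable (fun x => sg (Q1 x - Q2 x) * w x) volume 0 1 := by
    intro w hw
    refine (hw.intervalIntegrable 0 1).mono_fun
      ((sg_meas.comp (hc1.sub hc2).measurable).mul hw.measurable).aestronglyMeasurable ?_
    refine Eventually.of_forall fun x => ?_
    simp only [norm_mul, Real.norm_eq_abs]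
    have := mul_le_mul_of_nonneg_right (sg_abs_le (Q1 x - Q2 x)) (abs_nonneg (w x))
    simpa using this
  have hw : Continuous fun x => α (Q1 x) * p1 x - α (Q2 x) * p2 x := by fun_prop
  have hI := hint _ hw
  have hR : IntervalIntegrable (fun x => s x * (α (Q1 x) * p1 x - α (Q2 x) * p2 x)) volume 0 1 :=
    (hs.mul hw).intervalIntegrable _ _
  have hIn : IntervalIntegrable (fun x => -(sg (Q1 x - Q2 x) *
      (α (Q1 x) * p1 x - α (Q2 x) * p2 x))) volume 0 1 := hI.neg
  rcases hm with hm | hm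
  · have hle : ∫ x in (0:ℝ)..1, (sg (Q1 x - Q2 x) * (α (Q1 x) * p1 x - α (Q2 x) * p2 x) - C * ε) ≤
        ∫ x in (0:ℝ)..1, s x * (α (Q1 x) * p1 x - α (Q2 x) * p2 x) := by
      refine intervalIntegral.integral_mono_on zero_le_one (hI.sub intervalIntegrable_const) hR
        fun x hx => ?_
      have q1 := hα0 _ (r1 x hx)
      have q2 := hα0 _ (r2 x hx)
      refine pt_ineq q1.1 q2.1 q1.2 q2.2 (n1 x hx) (n2 x hx) ?_ (hs1 x) (hs2 x) (hs3 x) hε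
      rcases lt_trichotomy (Q1 x) (Q2 x) with h | h | h
      · exact Or.inr (Or.inl ⟨sg_neg (by linarith), hm (r1 x hx) (r2 x hx) h.le⟩)
      · exact Or.inr (Or.inr ⟨by rw [h, sub_self, sg_zero], by rw [h]⟩)
      · exact Or.inl ⟨sg_pos (by linarith), hm (r2 x hx) (r1 x hx) h.le⟩
    rw [intervalIntegral.integral_sub hI intervalIntegrable_const, h0] at hle
    simpa using hle
  · have hle : ∫ x in (0:ℝ)..1, (-(sg (Q1 x - Q2 x) * (α (Q1 x) * p1 x - α (Q2 x) * p2 x)) - C * ε) ≤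
        ∫ x in (0:ℝ)..1, s x * (α (Q1 x) * p1 x - α (Q2 x) * p2 x) := by
      refine intervalIntegral.integral_mono_on zero_le_one (hIn.sub intervalIntegrable_const) hR
        fun x hx => ?_
      have q1 := hα0 _ (r1 x hx)
      have q2 := hα0 _ (r2 x hx)
      have := pt_ineq (s := -sg (Q1 x - Q2 x)) q1.1 q2.1 q1.2 q2.2 (n1 x hx) (n2 x hx) (by
        rcases lt_trichotomy (Q1 x) (Q2 x) with h | h | h
        · exact Or.inl ⟨by rw [sg_neg (by linarith)]; norm_num, hm (r1 x hx) (r2 x hx) h.le⟩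
        · exact Or.inr (Or.inr ⟨by rw [h, sub_self, sg_zero]; norm_num, by rw [h]⟩)
        · exact Or.inr (Or.inl ⟨by rw [sg_pos (by linarith)], hm (r2 x hx) (r1 x hx) h.le⟩))
        (hs1 x) (hs2 x) (hs3 x) hε
      simpa [neg_mul] using this
    rw [intervalIntegral.integral_sub hIn intervalIntegrable_const,
      intervalIntegral.integral_neg, h0] at hle
    simpa using hle

end spatial

theorem l1_decay {Φ κ C : ℝ} (hκ : κ < 0) {k α β : ℝ → ℝ} (hα : Continuous α) (hβ : Continuous β)
    (hkdec : ∀ φ ∈ Icc 0 Φ, k φ = κ - α φ - β φ)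
    (hα0 : ∀ φ ∈ Icc 0 Φ, 0 ≤ α φ ∧ α φ ≤ C) (hβ0 : ∀ φ ∈ Icc 0 Φ, 0 ≤ β φ ∧ β φ ≤ C)
    (hαm : AntitoneOn α (Icc 0 Φ)) (hβm : MonotoneOn β (Icc 0 Φ))
    {P : ℝ → ℝ} {a : ℝ → ℝ → ℝ} (hP : Continuous P) (hP0 : ∀ σ, 0 ≤ P σ)
    (ha : Continuous (Function.uncurry a))
    (hak : ∀ τ η, 0 ≤ τ → η ∈ Icc (0:ℝ) 1 → a τ η = k (Qh (tr P a) τ η)) {c : ℝ}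
    (hPc : ∀ τ, 0 ≤ τ → P τ = tr P a τ (τ - 1) + c)
    (hone : ∀ τ, 0 ≤ τ → Qh (tr P a) τ 1 = Φ)
    {w b Q2 : ℝ → ℝ} (hb : Continuous b) (hw : ∀ x, HasDerivAt w (b x * w x) x)
    (hQ2 : ∀ x, HasDerivAt Q2 (w x) x) (hQ20 : Q2 0 = 0) (hQ21 : Q2 1 = Φ)
    (hbk : ∀ x ∈ Icc (0:ℝ) 1, b x = k (Q2 x))
    (hw0 : ∀ x, 0 ≤ w x) (hwc : w 0 = w 1 + c) {τ : ℝ} (hτ : 0 ≤ τ) :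
    ∫ x in (0:ℝ)..1, |tr P a τ (τ - x) - w x| ≤
      exp (κ * τ) * ∫ x in (0:ℝ)..1, |tr P a 0 (0 - x) - w x| := by
  have hf := tr_cont hP ha
  have hwcont : Continuous w := continuous_iff_continuousAt.2 fun x => (hw x).continuousAt
  have hQ2c : Continuous Q2 := continuous_iff_continuousAt.2 fun x => (hQ2 x).continuousAt
  have hQ2m : Monotone Q2 := monotone_of_deriv_nonneg (fun x => (hQ2 x).differentiableAt)
    (fun x => by rw [(hQ2 x).deriv]; exact hw0 x)
  set D : ℝ → ℝ → ℝ := fun t σ => tr P a t σ - w (t - σ) with hDdef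
  set R : ℝ → ℝ → ℝ := fun t σ => a t (t - σ) * tr P a t σ - b (t - σ) * w (t - σ) with hR
  have hDc : Continuous (Function.uncurry D) :=
    hf.sub (hwcont.comp (by fun_prop : Continuous fun z : ℝ × ℝ => z.1 - z.2))
  have hRc : Continuous (Function.uncurry R) :=
    (tr_dcont hP ha).sub ((hb.comp (by fun_prop : Continuous fun z : ℝ × ℝ => z.1 - z.2)).mul
      (hwcont.comp (by fun_prop : Continuous fun z : ℝ × ℝ => z.1 - z.2)))
  have hDd : ∀ t σ, HasDerivAt (fun s => D s σ) (R t σ) t := by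
    intro t σ
    have e := (hw (t - σ)).comp t ((hasDerivAt_id t).sub_const σ)
    refine ((tr_hasDerivAt P ha t σ).sub e).congr_deriv ?_
    simp [hR]
  have hLc : ∀ t, Continuous fun x => D t (t - x) := fun t =>
    (cont_slice hDc t).comp (by fun_prop)
  set Ln : ℝ → ℝ := fun t => ∫ x in (0:ℝ)..1, |D t (t - x)| with hLn
  have hDx : ∀ t x, D t (t - x) = tr P a t (t - x) - w x := by
    intro t x; simp [hDdef]
  have goal : Ln τ ≤ exp (κ * τ) * Ln 0 → ∫ x in (0:ℝ)..1, |tr P a τ (τ - x) - w x| ≤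
      exp (κ * τ) * ∫ x in (0:ℝ)..1, |tr P a 0 (0 - x) - w x| := by
    intro h
    simpa only [hLn, hDx] using h
  apply goal
  -- the regularized estimate
  have hC0 : 0 ≤ C := by
    have := hα0 0 ⟨le_rfl, by rw [← hQ21, ← hQ20]; exact hQ2m zero_le_one⟩
    linarith [this.1, this.2]
  obtain ⟨m, hm⟩ : ∃ m, m = (2 * C - 2 * κ) / (-κ) := ⟨_, rfl⟩
  have hm0 : 0 ≤ m := by rw [hm]; exact div_nonneg (by linarith) (by linarith)
  have hmk : κ * m = -(2 * C - 2 * κ) := by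
    have hκ0 : κ ≠ 0 := hκ.ne
    rw [hm]; field_simp
  have main : ∀ ε > 0, Ln τ ≤ exp (κ * τ) * (Ln 0 + ε) + m * ε := by
    intro ε hε
    set F : ℝ → ℝ → ℝ := fun t σ => sqrt (D t σ ^ 2 + ε ^ 2) with hF
    set G : ℝ → ℝ → ℝ := fun t σ => D t σ / sqrt (D t σ ^ 2 + ε ^ 2) * R t σ with hG
    have hFc : Continuous (Function.uncurry F) :=
      Real.continuous_sqrt.comp ((hDc.pow 2).add continuous_const)
    have hGc : Continuous (Function.uncurry G) :=
      (hDc.div hFc (fun z => (reg_pos hε _).ne')).mul hRc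
    have hFd : ∀ t σ, HasDerivAt (fun s => F s σ) (G t σ) t := fun t σ => reg_deriv hε (hDd t σ)
    set J : ℝ → ℝ := fun t => Qh F t 1 with hJ
    have hJd : ∀ t, HasDerivAt J (F t t - F t (t - 1) + Qh G t 1) t := fun t =>
      Qh_deriv_tau hFc hGc hFd t 1
    have hFx : ∀ t, Continuous fun x => F t (t - x) := fun t =>
      (cont_slice hFc t).comp (by fun_prop)
    have hJlow : ∀ t, Ln t ≤ J t := by
      intro t
      simp only [hJ, hLn]
      rw [Qh_eq_int]
      exact intervalIntegral.integral_mono_on zero_le_one ((hLc t).abs.intervalIntegrable _ _)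
        ((hFx t).intervalIntegrable _ _) (fun x _ => reg_abs_le _ _)
    have hJup : ∀ t, J t ≤ Ln t + ε := by
      intro t
      simp only [hJ, hLn]
      rw [Qh_eq_int]
      have := intervalIntegral.integral_mono_on (μ := volume) (a := 0) (b := 1)
        (f := fun x => F t (t - x)) (g := fun x => |D t (t - x)| + ε) zero_le_one
        ((hFx t).intervalIntegrable _ _)
        (((hLc t).abs.add continuous_const).intervalIntegrable _ _) (fun x _ => reg_le hε _)
      rw [intervalIntegral.integral_add ((hLc t).abs.intervalIntegrable _ _)
        intervalIntegrable_const] at this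
      simpa using this
    have hineq : ∀ t, 0 ≤ t → F t t - F t (t - 1) + Qh G t 1 ≤ κ * (J t - m * ε) := by
      intro t ht
      have hbd : F t t = F t (t - 1) := by
        simp only [hF, hDdef]
        rw [tr_diag P a ht, hPc t ht]
        simp [hwc]
      rw [hbd, sub_self, zero_add, Qh_eq_int]
      set Q1 : ℝ → ℝ := fun x => Qh (tr P a) t x with hQ1
      set p1 : ℝ → ℝ := fun x => tr P a t (t - x) with hp1
      set s : ℝ → ℝ := fun x => D t (t - x) / sqrt (D t (t - x) ^ 2 + ε ^ 2) with hs
      have hQ1d : ∀ x, HasDerivAt Q1 (p1 x) x := fun x => Qh_deriv_eta hf t x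
      have hQ1c : Continuous Q1 := continuous_iff_continuousAt.2 fun x => (hQ1d x).continuousAt
      have hp1c : Continuous p1 := (cont_slice hf t).comp (by fun_prop)
      have hsc : Continuous s := (hLc t).div (hFx t) (fun z => (reg_pos hε _).ne')
      have hQ10 : Q1 0 = 0 := by simp [hQ1, Qh]
      have hQ11 : Q1 1 = Φ := hone t ht
      have hQ1m : Monotone Q1 := sol_mono hP hP0 ha t
      have r1 : ∀ x ∈ Icc (0:ℝ) 1, Q1 x ∈ Icc 0 Φ := fun x hx =>
        ⟨by rw [← hQ10]; exact hQ1m hx.1, by rw [← hQ11]; exact hQ1m hx.2⟩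
      have r2 : ∀ x ∈ Icc (0:ℝ) 1, Q2 x ∈ Icc 0 Φ := fun x hx =>
        ⟨by rw [← hQ20]; exact hQ2m hx.1, by rw [← hQ21]; exact hQ2m hx.2⟩
      have n1 : ∀ x ∈ Icc (0:ℝ) 1, 0 ≤ p1 x := fun x _ => mul_nonneg (hP0 _) (exp_pos _).le
      have hDp : ∀ x, D t (t - x) = p1 x - w x := fun x => hDx t x
      have hs1 : ∀ x, |s x| ≤ 1 := fun x => reg_sig_abs hε _
      have hs2 : ∀ x, 0 ≤ s x * (p1 x - w x) := fun x => by
        rw [← hDp]; exact reg_sig_nonneg hε _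
      have hs3 : ∀ x, |p1 x - w x| - s x * (p1 x - w x) ≤ ε := fun x => by
        rw [← hDp]; exact reg_sig_err hε _
      have iα := sg_int_bd hQ1d hQ2 hp1c hwcont hQ10 hQ20 hQ11 hQ21 r1 r2 n1 (fun x _ => hw0 x)
        hα hα0 (Or.inl hαm) hsc hε.le hs1 hs2 hs3
      have iβ := sg_int_bd hQ1d hQ2 hp1c hwcont hQ10 hQ20 hQ11 hQ21 r1 r2 n1 (fun x _ => hw0 x)
        hβ hβ0 (Or.inr hβm) hsc hε.le hs1 hs2 hs3
      set Iα := ∫ x in (0:ℝ)..1, s x * (α (Q1 x) * p1 x - α (Q2 x) * w x) with hIα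
      set Iβ := ∫ x in (0:ℝ)..1, s x * (β (Q1 x) * p1 x - β (Q2 x) * w x) with hIβ
      have hle : ∫ x in (0:ℝ)..1, G t (t - x) ≤ ∫ x in (0:ℝ)..1, ((κ * F t (t - x) - 2 * κ * ε)
          - s x * (α (Q1 x) * p1 x - α (Q2 x) * w x)
          - s x * (β (Q1 x) * p1 x - β (Q2 x) * w x)) := by
        have cG : Continuous fun x => G t (t - x) := (cont_slice hGc t).comp (by fun_prop)
        have cF := hFx t
        refine intervalIntegral.integral_mono_on zero_le_one (cG.intervalIntegrable _ _)
          ((by fun_prop : Continuous fun x => ((κ * F t (t - x) - 2 * κ * ε)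
          - s x * (α (Q1 x) * p1 x - α (Q2 x) * w x)
          - s x * (β (Q1 x) * p1 x - β (Q2 x) * w x))).intervalIntegrable _ _) (fun x hx => ?_)
        have e1 : G t (t - x) = s x * (k (Q1 x) * p1 x - k (Q2 x) * w x) := by
          simp only [hG, hR, hs, hp1, sub_sub_cancel]
          rw [hak t x ht hx, hbk x hx]
        rw [e1, hkdec _ (r1 x hx), hkdec _ (r2 x hx)]
        have e2 : F t (t - x) ≤ s x * (p1 x - w x) + 2 * ε := by
          have := reg_le hε (D t (t - x))
          have h3 := hs3 x
          rw [← hDp] at h3 ⊢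
          simp only [hF]; linarith
        have e3 := mul_le_mul_of_nonpos_left e2 hκ.le
        nlinarith
      have hJt : J t = ∫ x in (0:ℝ)..1, F t (t - x) := Qh_eq_int _ _ _
      have cF := hFx t
      have j1 : IntervalIntegrable (fun x => κ * F t (t - x) - 2 * κ * ε) volume 0 1 :=
        (by fun_prop : Continuous fun x => κ * F t (t - x) - 2 * κ * ε).intervalIntegrable _ _
      have j2 : IntervalIntegrable (fun x => s x * (α (Q1 x) * p1 x - α (Q2 x) * w x)) volume 0 1 :=
        (by fun_prop : Continuous fun x => s x * (α (Q1 x) * p1 x - α (Q2 x) * w x)).intervalIntegrable _ _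
      have j3 : IntervalIntegrable (fun x => s x * (β (Q1 x) * p1 x - β (Q2 x) * w x)) volume 0 1 :=
        (by fun_prop : Continuous fun x => s x * (β (Q1 x) * p1 x - β (Q2 x) * w x)).intervalIntegrable _ _
      rw [intervalIntegral.integral_sub (j1.sub j2) j3, intervalIntegral.integral_sub j1 j2,
        intervalIntegral.integral_sub ((cF.const_mul κ).intervalIntegrable _ _)
          intervalIntegrable_const, intervalIntegral.integral_const_mul, ← hJt] at hle
      simp only [intervalIntegral.integral_const, sub_zero, one_smul] at hle
      change _ ≤ κ * J t - 2 * κ * ε - Iα - Iβ at hle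
      have hmk2 : κ * (m * ε) = -(2 * C - 2 * κ) * ε := by rw [← mul_assoc, hmk]
      nlinarith
    have hant : AntitoneOn (fun t => (J t - m * ε) * exp (-(κ * t))) (Ici 0) := by
      have hd : ∀ t, HasDerivAt (fun t => (J t - m * ε) * exp (-(κ * t)))
          (((F t t - F t (t - 1) + Qh G t 1) - κ * (J t - m * ε)) * exp (-(κ * t))) t := by
        intro t
        have := ((hJd t).sub_const (m * ε)).mul (((hasDerivAt_id t).const_mul κ).neg.exp)
        refine this.congr_deriv ?_
        simp; ring
      refine antitoneOn_of_deriv_nonpos (convex_Ici 0)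
        (fun t _ => (hd t).continuousAt.continuousWithinAt)
        (fun t _ => (hd t).differentiableAt.differentiableWithinAt) (fun t ht => ?_)
      rw [interior_Ici] at ht
      rw [(hd t).deriv]
      have := hineq t (le_of_lt ht)
      exact mul_nonpos_of_nonpos_of_nonneg (by linarith) (exp_pos _).le
    have h1 := hant (mem_Ici.2 le_rfl) (mem_Ici.2 hτ) hτ
    simp only [mul_zero, neg_zero, exp_zero, mul_one] at h1
    have h2 : J τ - m * ε ≤ exp (κ * τ) * (J 0 - m * ε) := by
      have := mul_le_mul_of_nonneg_left h1 (exp_pos (κ * τ)).le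
      have e : exp (κ * τ) * ((J τ - m * ε) * exp (-(κ * τ))) = J τ - m * ε := by
        rw [exp_neg]; field_simp
      rwa [e] at this
    have h3 : exp (κ * τ) * (J 0 - m * ε) ≤ exp (κ * τ) * (Ln 0 + ε) := by
      refine mul_le_mul_of_nonneg_left ?_ (exp_pos _).le
      have := hJup 0
      have := mul_nonneg hm0 hε.le
      linarith
    linarith [hJlow τ]
  refine le_of_forall_pos_le_add fun δ hδ => ?_
  have hp : 0 < exp (κ * τ) + m + 1 := by positivity
  have := main (δ / (exp (κ * τ) + m + 1)) (by positivity)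
  have e : exp (κ * τ) * (δ / (exp (κ * τ) + m + 1)) + m * (δ / (exp (κ * τ) + m + 1)) ≤ δ := by
    have : exp (κ * τ) * (δ / (exp (κ * τ) + m + 1)) + m * (δ / (exp (κ * τ) + m + 1)) =
      (exp (κ * τ) + m) * δ / (exp (κ * τ) + m + 1) := by ring
    rw [this, div_le_iff₀ hp]
    nlinarith
  linarith

end

open Real Set MeasureTheory Filter Topology
open scoped ENNReal

noncomputable section

theorem uniq_core {K : ℝ → ℝ} {L : ℝ} (hL0 : 0 ≤ L) (hL : ∀ x y, |K x - K y| ≤ L * |x - y|)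
    {Q1 Q2 : ℝ → ℝ → ℝ} {n1 n2 : ℝ → ℝ}
    (c1 : ContinuousOn (Function.uncurry Q1) (Ici 0 ×ˢ Icc (0:ℝ) 1))
    (c2 : ContinuousOn (Function.uncurry Q2) (Ici 0 ×ˢ Icc (0:ℝ) 1))
    (m1 : ContinuousOn n1 (Ici 0)) (m2 : ContinuousOn n2 (Ici 0))
    (h1 : ∀ x s, 0 ≤ s → x + s ∈ Icc (0:ℝ) 1 →
      HasDerivWithinAt (fun s => Q1 s (x + s)) (n1 s + K (Q1 s (x + s)))
        {s | 0 ≤ s ∧ x + s ∈ Icc (0:ℝ) 1} s)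
    (h2 : ∀ x s, 0 ≤ s → x + s ∈ Icc (0:ℝ) 1 →
      HasDerivWithinAt (fun s => Q2 s (x + s)) (n2 s + K (Q2 s (x + s)))
        {s | 0 ≤ s ∧ x + s ∈ Icc (0:ℝ) 1} s)
    (b0 : ∀ s, 0 ≤ s → Q1 s 0 = Q2 s 0) (b1 : ∀ s, 0 ≤ s → Q1 s 1 = Q2 s 1)
    (bi : ∀ x ∈ Icc (0:ℝ) 1, Q1 0 x = Q2 0 x) :
    ∀ s, 0 ≤ s → ∀ x ∈ Icc (0:ℝ) 1, Q1 s x = Q2 s x := by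
  obtain ⟨δ, hδ⟩ : ∃ δ, δ = 1 / (6 * L + 6) := ⟨_, rfl⟩
  have hδ0 : 0 < δ := by rw [hδ]; positivity
  have hδ1 : δ < 1 := by rw [hδ, div_lt_one (by positivity)]; linarith
  have hLδ : 6 * (L * δ) ≤ 1 := by
    rw [hδ, mul_one_div, ← mul_div_assoc, div_le_one (by positivity)]; linarith
  set g : ℝ → ℝ := fun s => n1 (max s 0) - n2 (max s 0) with hg
  have hgc : Continuous g := by
    refine Continuous.sub ?_ ?_
    · exact m1.comp_continuous (by fun_prop) (fun s => mem_Ici.2 (le_max_right _ _))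
    · exact m2.comp_continuous (by fun_prop) (fun s => mem_Ici.2 (le_max_right _ _))
  set M : ℝ → ℝ := fun t => ∫ s in (0:ℝ)..t, g s with hM
  have hMd : ∀ t, HasDerivAt M (g t) t := fun t =>
    intervalIntegral.integral_hasDerivAt_right (hgc.intervalIntegrable _ _)
      hgc.stronglyMeasurable.stronglyMeasurableAtFilter hgc.continuousAt
  have step : ∀ t0, 0 ≤ t0 → (∀ x ∈ Icc (0:ℝ) 1, Q1 t0 x = Q2 t0 x) →
      ∀ s ∈ Icc t0 (t0 + δ), ∀ x ∈ Icc (0:ℝ) 1, Q1 s x = Q2 s x := by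
    intro t0 ht0 hi
    have hsub : Icc t0 (t0 + δ) ×ˢ Icc (0:ℝ) 1 ⊆ Ici 0 ×ˢ Icc (0:ℝ) 1 :=
      prod_mono (fun s hs => ht0.trans hs.1) le_rfl
    obtain ⟨z, hz, hzmax⟩ := (isCompact_Icc.prod isCompact_Icc).exists_isMaxOn
      (s := Icc t0 (t0 + δ) ×ˢ Icc (0:ℝ) 1)
      ⟨(t0, 0), ⟨⟨le_rfl, by linarith⟩, ⟨le_rfl, zero_le_one⟩⟩⟩ ((c1.sub c2).abs.mono hsub)
    set W := |Q1 z.1 z.2 - Q2 z.1 z.2| with hW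
    have hmax : ∀ s ∈ Icc t0 (t0 + δ), ∀ x ∈ Icc (0:ℝ) 1, |Q1 s x - Q2 s x| ≤ W :=
      fun s hs x hx => hzmax (show (s, x) ∈ _ from ⟨hs, hx⟩)
    have hW0 : 0 ≤ W := abs_nonneg _
    have key : ∀ τ ∈ Icc t0 (t0 + δ), ∀ η ∈ Icc (0:ℝ) 1,
        |(Q1 τ η - Q2 τ η) - (M τ - M (max t0 (τ - η)))| ≤ L * δ * W := by
      intro τ hτ η hη
      set s0 := max t0 (τ - η) with hs0
      have hs01 : t0 ≤ s0 := le_max_left _ _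
      have hs02 : τ - η ≤ s0 := le_max_right _ _
      have hs03 : s0 ≤ τ := max_le hτ.1 (by linarith [hη.1])
      have hd : ∀ s ∈ Icc s0 τ, HasDerivWithinAt
          (fun s => Q1 s ((η - τ) + s) - Q2 s ((η - τ) + s) - M s)
          (K (Q1 s ((η - τ) + s)) - K (Q2 s ((η - τ) + s))) (Icc s0 τ) s := by
        intro s hs
        have p0 : 0 ≤ s := by linarith [hs.1]
        have p1 : (η - τ) + s ∈ Icc (0:ℝ) 1 := ⟨by linarith [hs.1], by linarith [hs.2, hη.2]⟩
        have hsub2 : Icc s0 τ ⊆ {s | 0 ≤ s ∧ (η - τ) + s ∈ Icc (0:ℝ) 1} := fun s hs =>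
          ⟨by linarith [hs.1], ⟨by linarith [hs.1], by linarith [hs.2, hη.2]⟩⟩
        refine ((((h1 _ s p0 p1).mono hsub2).sub ((h2 _ s p0 p1).mono hsub2)).sub
          (hMd s).hasDerivWithinAt).congr_deriv ?_
        simp only [hg, max_eq_left p0]; ring
      have hb : ∀ s ∈ Icc s0 τ, ‖K (Q1 s ((η - τ) + s)) - K (Q2 s ((η - τ) + s))‖ ≤ L * W := by
        intro s hs
        refine (hL _ _).trans (mul_le_mul_of_nonneg_left ?_ hL0)
        exact hmax s ⟨by linarith [hs.1], by linarith [hs.2, hτ.2]⟩ _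
          ⟨by linarith [hs.1], by linarith [hs.2, hη.2]⟩
      have := (convex_Icc s0 τ).norm_image_sub_le_of_norm_hasDerivWithin_le hd hb
        (left_mem_Icc.2 hs03) (right_mem_Icc.2 hs03)
      have z0 : Q1 s0 ((η - τ) + s0) = Q2 s0 ((η - τ) + s0) := by
        rcases le_total t0 (τ - η) with h | h
        · have e : s0 = τ - η := max_eq_right h
          have e2 : (η - τ) + s0 = 0 := by rw [e]; ring
          rw [e2]; exact b0 _ (by linarith)
        · have e : s0 = t0 := max_eq_left h
          rw [e]
          exact hi _ ⟨by linarith, by linarith [hτ.1, hη.2]⟩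
      rw [z0, Real.norm_eq_abs, Real.norm_eq_abs, abs_of_nonneg (by linarith : 0 ≤ τ - s0)] at this
      have e3 : η - τ + τ = η := by ring
      rw [e3] at this
      have e4 : L * W * (τ - s0) ≤ L * δ * W := by
        have : L * W * (τ - s0) ≤ L * W * δ :=
          mul_le_mul_of_nonneg_left (by linarith [hτ.2]) (mul_nonneg hL0 hW0)
        linarith
      refine le_trans (le_of_eq ?_) (this.trans e4)
      congr 1; ring
    have keyM : ∀ τ ∈ Icc t0 (t0 + δ), |M τ - M t0| ≤ L * δ * W := by
      intro τ hτ
      have := key τ hτ 1 ⟨zero_le_one, le_rfl⟩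
      rw [b1 τ (ht0.trans hτ.1), max_eq_left (by linarith [hτ.2]), sub_self, zero_sub, abs_neg] at this
      exact this
    have hWle : W ≤ 3 * (L * δ * W) := by
      have k1 := key z.1 hz.1 z.2 hz.2
      have k2 := keyM z.1 hz.1
      have k3 := keyM (max t0 (z.1 - z.2)) ⟨le_max_left _ _, max_le (by linarith)
        (by linarith [hz.1.2, hz.2.1])⟩
      rw [abs_le] at k1 k2 k3
      rw [hW, abs_le]
      constructor <;> linarith [k1.1, k1.2, k2.1, k2.2, k3.1, k3.2]
    have hWz : W ≤ 0 := by
      have : 6 * (L * δ) * W ≤ 1 * W := mul_le_mul_of_nonneg_right hLδ hW0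
      linarith
    intro s hs x hx
    have := (hmax s hs x hx).trans hWz
    exact sub_eq_zero.1 (abs_eq_zero.1 (le_antisymm this (abs_nonneg _)))
  have ind : ∀ n : ℕ, ∀ x ∈ Icc (0:ℝ) 1, Q1 (n * δ) x = Q2 (n * δ) x := by
    intro n
    induction n with
    | zero => simpa using bi
    | succ n ih =>
      have := step (n * δ) (by positivity) ih ((n + 1 : ℕ) * δ) ⟨by push_cast; linarith, by push_cast; linarith⟩
      exact this
  intro s hs
  obtain ⟨n, hn1, hn2⟩ : ∃ n : ℕ, (n:ℝ) * δ ≤ s ∧ s ≤ n * δ + δ := by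
    refine ⟨⌊s / δ⌋₊, ?_, ?_⟩
    · have := Nat.floor_le (div_nonneg hs hδ0.le)
      rwa [le_div_iff₀ hδ0] at this
    · have := (Nat.lt_floor_add_one (s / δ)).le
      rw [div_le_iff₀ hδ0] at this
      linarith
  exact step _ (by positivity) (ind n) s ⟨hn1, hn2⟩

theorem Ico0_top : Ico0 ⊤ = Ici 0 := by
  ext τ; simp [Ico0]

section sol
variable {K Qi N : ℝ → ℝ} {Φ : ℝ} {Q : ℝ → ℝ → ℝ}

theorem uds : UniqueDiffOn ℝ (Ici (0:ℝ) ×ˢ Icc (0:ℝ) 1) :=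
  (uniqueDiffOn_Ici 0).prod (uniqueDiffOn_Icc zero_lt_one)

theorem qsol_pdTau (hr : ContDiffOn ℝ 1 (Function.uncurry Q) (Ici (0:ℝ) ×ˢ Icc (0:ℝ) 1)) {τ η : ℝ}
    (hτ : 0 ≤ τ) (hη : η ∈ Icc (0:ℝ) 1) :
    HasDerivWithinAt (fun s => Q s η)
      (fderivWithin ℝ (Function.uncurry Q) (Ici (0:ℝ) ×ˢ Icc (0:ℝ) 1) (τ, η) (1, 0)) (Ici 0) τ := by
  have h := (hr.differentiableOn one_ne_zero (τ, η) (mk_mem_prod (mem_Ici.2 hτ) hη)).hasFDerivWithinAt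
  have h2 : HasDerivWithinAt (fun s : ℝ => (s, η)) ((1:ℝ), (0:ℝ)) (Ici 0) τ :=
    (hasDerivWithinAt_id τ _).prodMk (hasDerivWithinAt_const _ _ _)
  have h3 : MapsTo (fun s : ℝ => (s, η)) (Ici 0) (Ici (0:ℝ) ×ˢ Icc (0:ℝ) 1) :=
    fun s hs => mk_mem_prod hs hη
  exact h.comp_hasDerivWithinAt τ h2 h3

theorem qsol_pdEta (hr : ContDiffOn ℝ 1 (Function.uncurry Q) (Ici (0:ℝ) ×ˢ Icc (0:ℝ) 1)) {τ η : ℝ}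
    (hτ : 0 ≤ τ) (hη : η ∈ Icc (0:ℝ) 1) :
    HasDerivWithinAt (fun s => Q τ s)
      (fderivWithin ℝ (Function.uncurry Q) (Ici (0:ℝ) ×ˢ Icc (0:ℝ) 1) (τ, η) (0, 1)) (Icc 0 1) η := by
  have h := (hr.differentiableOn one_ne_zero (τ, η) (mk_mem_prod (mem_Ici.2 hτ) hη)).hasFDerivWithinAt
  have h2 : HasDerivWithinAt (fun s : ℝ => (τ, s)) ((0:ℝ), (1:ℝ)) (Icc 0 1) η :=
    (hasDerivWithinAt_const _ _ _).prodMk (hasDerivWithinAt_id η _)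
  exact h.comp_hasDerivWithinAt η h2 (fun s hs => ⟨hτ, hs⟩)

theorem qsol_pde (hKc : Continuous K) (h : IsQSol K Φ ⊤ Qi Q N) {τ η : ℝ}
    (hτ : 0 ≤ τ) (hη : η ∈ Icc (0:ℝ) 1) :
    fderivWithin ℝ (Function.uncurry Q) (Ici (0:ℝ) ×ˢ Icc (0:ℝ) 1) (τ, η) (1, 1) =
      1 / N τ + K (Q τ η) := by
  have hr := h.reg
  have hpde := h.pde
  rw [Ico0_top] at hr hpde
  have hDc := hr.continuousOn_fderivWithin uds le_rfl
  have hmap : ContinuousOn (fun x : ℝ => (τ, x)) (Icc 0 1) := by fun_prop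
  have hmt : MapsTo (fun x : ℝ => (τ, x)) (Icc 0 1) (Ici (0:ℝ) ×ˢ Icc (0:ℝ) 1) := fun x hx => ⟨hτ, hx⟩
  have e : EqOn (fun x => fderivWithin ℝ (Function.uncurry Q) (Ici (0:ℝ) ×ˢ Icc (0:ℝ) 1) (τ, x) (1, 1))
      (fun x => 1 / N τ + K (Q τ x)) (Ioo 0 1) := by
    intro x hx
    have hx' := Ioo_subset_Icc_self hx
    have := hpde τ hτ x hx
    rw [pdTau, pdEta, (qsol_pdTau hr hτ hx').derivWithin (uniqueDiffOn_Ici _ _ hτ),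
      (qsol_pdEta hr hτ hx').derivWithin (uniqueDiffOn_Icc zero_lt_one _ hx'), ← map_add] at this
    simpa using this
  refine e.of_subset_closure ?_ ?_ Ioo_subset_Icc_self ?_ hη
  · exact (hDc.comp hmap hmt).clm_apply continuousOn_const
  · exact continuousOn_const.add (hKc.comp_continuousOn (hr.continuousOn.comp hmap hmt))
  · rw [closure_Ioo zero_ne_one]

theorem qsol_char (hKc : Continuous K) (h : IsQSol K Φ ⊤ Qi Q N) (x s : ℝ)
    (hs : 0 ≤ s) (hx : x + s ∈ Icc (0:ℝ) 1) :
    HasDerivWithinAt (fun s => Q s (x + s)) (1 / N s + K (Q s (x + s)))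
        {s | 0 ≤ s ∧ x + s ∈ Icc (0:ℝ) 1} s := by
  have hr := h.reg
  rw [Ico0_top] at hr
  have hh := (hr.differentiableOn one_ne_zero (s, x + s) (mk_mem_prod (mem_Ici.2 hs) hx)).hasFDerivWithinAt
  have h2 : HasDerivWithinAt (fun s : ℝ => (s, x + s)) ((1:ℝ), (1:ℝ)) {s | 0 ≤ s ∧ x + s ∈ Icc (0:ℝ) 1} s :=
    (hasDerivWithinAt_id s _).prodMk ((hasDerivWithinAt_id s _).const_add x)
  have h3 : MapsTo (fun s : ℝ => (s, x + s)) {s | 0 ≤ s ∧ x + s ∈ Icc (0:ℝ) 1}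
      (Ici (0:ℝ) ×ˢ Icc (0:ℝ) 1) := fun s hs => mk_mem_prod (mem_Ici.2 hs.1) hs.2
  have := hh.comp_hasDerivWithinAt s h2 h3
  rw [qsol_pde hKc h hs hx] at this
  exact this

theorem qsol_one {L : ℝ} (hL0 : 0 ≤ L) (hKc : Continuous K) (hL : ∀ x y, |K x - K y| ≤ L * |x - y|)
    (h : IsQSol K Φ ⊤ Qi Q N) {τ : ℝ} (hτ : 0 ≤ τ) : Q τ 1 = Φ := by
  have hr := h.reg
  have hN := h.Ndef
  rw [Ico0_top] at hr hN
  have h1m : (1:ℝ) ∈ Icc (0:ℝ) 1 := ⟨zero_le_one, le_rfl⟩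
  have hd : ∀ t, 0 ≤ t → HasDerivWithinAt (fun s => Q s 1) (K (Q t 1) - K Φ) (Ici 0) t := by
    intro t ht
    refine (qsol_pdTau hr ht h1m).congr_deriv ?_
    have e1 := qsol_pde hKc h ht h1m
    have e2 := hN t ht
    rw [pdEta, (qsol_pdEta hr ht h1m).derivWithin (uniqueDiffOn_Icc zero_lt_one _ h1m)] at e2
    have e3 : ((1:ℝ), (1:ℝ)) = (1, 0) + (0, 1) := by simp
    rw [e3, map_add] at e1
    linarith
  have := ODE_solution_unique (v := fun _ y => K y - K Φ) (K := ⟨L, hL0⟩) (a := 0) (b := τ)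
    (f := fun s => Q s 1) (g := fun _ => Φ)
    (fun t => LipschitzWith.of_dist_le_mul fun x y => by
      simp only [Real.dist_eq, sub_sub_sub_cancel_right]; exact hL x y)
    (fun t ht => (hd t ht.1).continuousWithinAt.mono Icc_subset_Ici_self)
    (fun t ht => (hd t ht.1).mono (Ici_subset_Ici.2 ht.1))
    continuousOn_const
    (fun t ht => by simpa using hasDerivWithinAt_const t (Ici t) Φ)
    (by rw [h.init 1 h1m, h.init1])
  exact this ⟨hτ, le_rfl⟩

theorem qsol_unique {L : ℝ} (hL0 : 0 ≤ L) (hKc : Continuous K) (hL : ∀ x y, |K x - K y| ≤ L * |x - y|)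
    {Q' : ℝ → ℝ → ℝ} {N' : ℝ → ℝ}
    (h : IsQSol K Φ ⊤ Qi Q N) (h' : IsQSol K Φ ⊤ Qi Q' N') :
    (∀ τ : ℝ, 0 ≤ τ → ∀ η ∈ Icc (0 : ℝ) 1, Q' τ η = Q τ η) ∧
        (∀ τ : ℝ, 0 ≤ τ → N' τ = N τ) := by
  have key : ∀ τ : ℝ, 0 ≤ τ → ∀ η ∈ Icc (0 : ℝ) 1, Q' τ η = Q τ η := by
    have aux : ∀ {Q N}, IsQSol K Φ ⊤ Qi Q N → ContinuousOn (fun s => 1 / N s) (Ici 0) := by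
      intro Q N h
      have h1 := h.Ncont
      have h2 := h.Npos
      rw [Ico0_top] at h1 h2
      exact continuousOn_const.div h1 (fun s hs => (h2 s hs).ne')
    have hm : ∀ s : ℝ, 0 ≤ s → s ∈ Ico0 ⊤ := fun s hs => by rw [Ico0_top]; exact hs
    have r1 := h.reg.continuousOn
    have r2 := h'.reg.continuousOn
    rw [Ico0_top] at r1 r2
    exact uniq_core hL0 hL r2 r1 (aux h') (aux h) (qsol_char hKc h') (qsol_char hKc h)
      (fun s hs => by rw [h.bc s (hm s hs), h'.bc s (hm s hs)])
      (fun s hs => by rw [qsol_one hL0 hKc hL h hs, qsol_one hL0 hKc hL h' hs])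
      (fun x hx => by rw [h.init x hx, h'.init x hx])
  refine ⟨key, fun τ hτ => ?_⟩
  have hm : τ ∈ Ico0 ⊤ := by rw [Ico0_top]; exact hτ
  have e1 := h.Ndef τ hm
  have e2 := h'.Ndef τ hm
  have e : pdEta Q' τ 1 = pdEta Q τ 1 :=
    derivWithin_congr (fun x hx => key τ hτ x hx) (key τ hτ 1 ⟨zero_le_one, le_rfl⟩)
  rw [e, ← e1] at e2
  simpa using e2

end sol

end

open Real Set MeasureTheory Filter Topology
open scoped ENNReal

noncomputable section

theorem steady_exists {K : ℝ → ℝ} {Φ : ℝ} (hΦ : 0 < Φ) (hKc : Continuous K)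
    (hpos : ∀ φ ∈ Icc (0:ℝ) Φ, 0 < K φ) (hint : 1 < ∫ φ in (0 : ℝ)..Φ, 1 / K φ) :
    ∃ (Qs : ℝ → ℝ) (ν : ℝ), 0 < ν ∧ Monotone Qs ∧ Continuous Qs ∧ Qs 0 = 0 ∧ Qs 1 = Φ ∧
      ∀ x ∈ Icc (0:ℝ) 1, HasDerivAt Qs (K (Qs x) + ν) x := by
  set Kc : ℝ → ℝ := fun φ => K (cl Φ φ) with hKcdef
  have hcl : ∀ φ, cl Φ φ ∈ Icc 0 Φ := fun φ => ⟨cl_nonneg _ _, cl_le hΦ.le _⟩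
  have hKcc : Continuous Kc := hKc.comp (cl_cont Φ)
  have hKcp : ∀ φ, 0 < Kc φ := fun φ => hpos _ (hcl φ)
  have hKce : ∀ φ ∈ Icc (0:ℝ) Φ, Kc φ = K φ := fun φ hφ => by simp only [hKcdef, cl_eq hφ.1 hφ.2]
  obtain ⟨B, hB⟩ : ∃ B, ∀ φ, Kc φ ≤ B := by
    obtain ⟨B, hB⟩ := (isCompact_Icc (a := (0:ℝ)) (b := Φ)).bddAbove_image hKc.continuousOn
    exact ⟨B, fun φ => hB ⟨_, hcl φ, rfl⟩⟩
  set I : ℝ → ℝ := fun ν => ∫ φ in (0:ℝ)..Φ, 1 / (Kc φ + max ν 0) with hI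
  have hden : ∀ ν φ, 0 < Kc φ + max ν 0 := fun ν φ =>
    add_pos_of_pos_of_nonneg (hKcp φ) (le_max_right _ _)
  have hIc : Continuous I := by
    refine intervalIntegral.continuous_parametric_intervalIntegral_of_continuous'
      (f := fun ν φ => 1 / (Kc φ + max ν 0)) ?_ 0 Φ
    refine continuous_const.div ?_ (fun z => (hden z.1 z.2).ne')
    exact (hKcc.comp continuous_snd).add (by fun_prop)
  have hI0 : 1 < I 0 := by
    have : I 0 = ∫ φ in (0 : ℝ)..Φ, 1 / K φ := by
      refine intervalIntegral.integral_congr fun φ hφ => ?_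
      rw [uIcc_of_le hΦ.le] at hφ
      simp [hKce φ hφ]
    rwa [this]
  have hI1 : I Φ ≤ 1 := by
    have : I Φ ≤ ∫ φ in (0 : ℝ)..Φ, 1 / Φ := by
      refine intervalIntegral.integral_mono_on hΦ.le
        (Continuous.intervalIntegrable ?_ _ _) intervalIntegrable_const fun φ hφ => ?_
      · exact continuous_const.div (by fun_prop) (fun z => (hden Φ z).ne')
      · rw [max_eq_left hΦ.le]
        exact one_div_le_one_div_of_le hΦ (by linarith [hKcp φ])
    simpa [hΦ.ne'] using this
  obtain ⟨ν, hν, hIν⟩ := intermediate_value_Icc' hΦ.le hIc.continuousOn ⟨hI1, hI0.le⟩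
  have hν0 : 0 < ν := by
    rcases hν.1.eq_or_lt with h | h
    · rw [← h] at hIν; linarith
    · exact h
  set q : ℝ → ℝ := fun φ => 1 / (Kc φ + ν) with hq
  have hd0 : ∀ φ, 0 < Kc φ + ν := fun φ => by linarith [hKcp φ]
  have hqc : Continuous q := continuous_const.div (by fun_prop) (fun z => (hd0 z).ne')
  have hqp : ∀ φ, 0 < q φ := fun φ => one_div_pos.2 (hd0 φ)
  set T : ℝ → ℝ := fun φ => ∫ y in (0:ℝ)..φ, q y with hT
  have hTd : ∀ φ, HasDerivAt T (q φ) φ := fun φ =>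
    intervalIntegral.integral_hasDerivAt_right (hqc.intervalIntegrable _ _)
      hqc.stronglyMeasurable.stronglyMeasurableAtFilter hqc.continuousAt
  have hT0 : T 0 = 0 := by simp [hT]
  have hT1 : T Φ = 1 := by
    rw [← hIν]
    simp only [hT, hI, hq, max_eq_left hν0.le]
  have hTm : StrictMono T := strictMono_of_deriv_pos fun φ => by rw [(hTd φ).deriv]; exact hqp φ
  have hTc : Continuous T := continuous_iff_continuousAt.2 fun x => (hTd x).continuousAt
  have hB0 : 0 < B + ν := lt_of_lt_of_le (hd0 0) (by linarith [hB 0])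
  have hc0 : 0 < 1 / (B + ν) := one_div_pos.2 hB0
  have hmon : Monotone fun φ => T φ - 1 / (B + ν) * φ := by
    have hd : ∀ φ, HasDerivAt (fun φ => T φ - 1 / (B + ν) * φ) (q φ - 1 / (B + ν) * 1) φ :=
      fun φ => (hTd φ).sub ((hasDerivAt_id φ).const_mul _)
    refine monotone_of_deriv_nonneg (fun φ => (hd φ).differentiableAt) fun φ => ?_
    rw [(hd φ).deriv, mul_one]
    have : 1 / (B + ν) ≤ q φ := one_div_le_one_div_of_le (hd0 φ) (by linarith [hB φ])
    linarith
  have hsurj : Function.Surjective T := by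
    refine hTc.surjective ?_ ?_
    · refine tendsto_atTop_mono' _ ?_ (tendsto_id.const_mul_atTop hc0)
      filter_upwards [eventually_ge_atTop 0] with x hx
      have := hmon hx
      simp only [hT0, mul_zero, sub_zero] at this
      simp only [id]; linarith
    · refine tendsto_atBot_mono' _ ?_ (tendsto_id.const_mul_atBot hc0)
      filter_upwards [eventually_le_atBot 0] with x hx
      have := hmon hx
      simp only [hT0, mul_zero, sub_zero] at this
      simp only [id]; linarith
  set e := hTm.orderIsoOfSurjective T hsurj with he
  have heT : ∀ x, e x = T x := fun x => rfl
  have hTs : ∀ x, T (e.symm x) = x := fun x => e.apply_symm_apply x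
  have hsc : Continuous e.symm := e.symm.continuous
  have hs0 : e.symm 0 = 0 := by rw [e.symm_apply_eq, heT, hT0]
  have hs1 : e.symm 1 = Φ := by rw [e.symm_apply_eq, heT, hT1]
  refine ⟨e.symm, ν, hν0, e.symm.monotone, hsc, hs0, hs1, fun x hx => ?_⟩
  have h := HasDerivAt.of_local_left_inverse (f := T) (g := e.symm) hsc.continuousAt
    (hTd (e.symm x)) (hqp _).ne' (Eventually.of_forall hTs)
  refine h.congr_deriv ?_
  have hm : e.symm x ∈ Icc 0 Φ :=
    ⟨by rw [← hs0]; exact e.symm.monotone hx.1, by rw [← hs1]; exact e.symm.monotone hx.2⟩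
  simp only [hq, one_div, inv_inv]
  rw [hKce _ hm]

theorem steady_cmp {K : ℝ → ℝ} {L : ℝ} (hL0 : 0 ≤ L) (hL : ∀ x y, |K x - K y| ≤ L * |x - y|)
    {Q1 Q2 : ℝ → ℝ} {ν1 ν2 : ℝ}
    (h1 : ∀ x ∈ Icc (0:ℝ) 1, HasDerivWithinAt Q1 (K (Q1 x) + ν1) (Icc 0 1) x)
    (h2 : ∀ x ∈ Icc (0:ℝ) 1, HasDerivWithinAt Q2 (K (Q2 x) + ν2) (Icc 0 1) x)
    (h0 : Q1 0 = Q2 0) (hν : ν1 < ν2) : Q1 1 < Q2 1 := by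
  obtain ⟨δ, hδ⟩ : ∃ δ, δ = (ν2 - ν1) / (2 * (1 + L)) := ⟨_, rfl⟩
  have hδ0 : 0 < δ := by rw [hδ]; exact div_pos (by linarith) (by positivity)
  have hδ1 : δ * (1 + L) < ν2 - ν1 := by
    have : δ * (1 + L) = (ν2 - ν1) / 2 := by rw [hδ]; field_simp
    rw [this]; linarith
  have up : ∀ {f : ℝ → ℝ} {f' x : ℝ}, x ∈ Ico (0:ℝ) 1 → HasDerivWithinAt f f' (Icc 0 1) x →
      HasDerivWithinAt f f' (Ici x) x := fun hx h =>
    h.mono_of_mem_nhdsWithin (Icc_mem_nhdsGE_of_mem hx)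
  have := image_le_of_deriv_right_lt_deriv_boundary' (f := Q1) (f' := fun x => K (Q1 x) + ν1)
    (B := fun x => Q2 x - δ * x) (B' := fun x => K (Q2 x) + ν2 - δ * 1) (a := 0) (b := 1)
    (fun x hx => (h1 x hx).continuousWithinAt)
    (fun x hx => up hx (h1 x (Ico_subset_Icc_self hx))) (by simp [h0])
    (fun x hx => ((h2 x hx).sub ((hasDerivWithinAt_id x _).const_mul δ)).continuousWithinAt)
    (fun x hx => up hx ((h2 x (Ico_subset_Icc_self hx)).sub ((hasDerivWithinAt_id x _).const_mul δ)))
    (fun x hx e => by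
      have hh := hL (Q2 x) (Q1 x)
      have e2 : Q2 x - Q1 x = δ * x := by rw [e]; ring
      rw [e2, abs_of_nonneg (mul_nonneg hδ0.le hx.1)] at hh
      have e3 : L * (δ * x) ≤ L * δ := by
        have : L * δ * x ≤ L * δ * 1 := mul_le_mul_of_nonneg_left hx.2.le (by positivity)
        linarith
      have := (abs_le.1 hh).1
      linarith)
  have := this (right_mem_Icc.2 zero_le_one)
  linarith

theorem steady_unique {K : ℝ → ℝ} {L Φ : ℝ} (hL0 : 0 ≤ L) (hL : ∀ x y, |K x - K y| ≤ L * |x - y|)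
    {Q1 Q2 : ℝ → ℝ} {N1 N2 : ℝ} (s1 : IsSteadyState K Φ Q1 N1) (s2 : IsSteadyState K Φ Q2 N2) :
    (∀ η ∈ Icc (0 : ℝ) 1, Q1 η = Q2 η) ∧ N1 = N2 := by
  obtain ⟨r1, p1, d1, z1, o1⟩ := s1
  obtain ⟨r2, p2, d2, z2, o2⟩ := s2
  have h1 : ∀ x ∈ Icc (0:ℝ) 1, HasDerivWithinAt Q1 (K (Q1 x) + 1 / N1) (Icc 0 1) x := fun x hx => by
    rw [← d1 x hx]; exact (r1.differentiableOn one_ne_zero x hx).hasDerivWithinAt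
  have h2 : ∀ x ∈ Icc (0:ℝ) 1, HasDerivWithinAt Q2 (K (Q2 x) + 1 / N2) (Icc 0 1) x := fun x hx => by
    rw [← d2 x hx]; exact (r2.differentiableOn one_ne_zero x hx).hasDerivWithinAt
  have hν : 1 / N1 = 1 / N2 := by
    rcases lt_trichotomy (1 / N1) (1 / N2) with h | h | h
    · have := steady_cmp hL0 hL h1 h2 (by rw [z1, z2]) h
      linarith
    · exact h
    · have := steady_cmp hL0 hL h2 h1 (by rw [z1, z2]) h
      linarith
  refine ⟨?_, by simpa using hν⟩
  have up : ∀ {f : ℝ → ℝ} {f' x : ℝ}, x ∈ Ico (0:ℝ) 1 → HasDerivWithinAt f f' (Icc 0 1) x →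
      HasDerivWithinAt f f' (Ici x) x := fun hx h =>
    h.mono_of_mem_nhdsWithin (Icc_mem_nhdsGE_of_mem hx)
  have := ODE_solution_unique (v := fun _ y => K y + 1 / N1) (K := ⟨L, hL0⟩) (a := 0) (b := 1)
    (f := Q1) (g := Q2)
    (fun t => LipschitzWith.of_dist_le_mul fun x y => by
      simp only [Real.dist_eq, add_sub_add_right_eq_sub]; exact hL x y)
    (fun x hx => (h1 x hx).continuousWithinAt)
    (fun x hx => up hx (h1 x (Ico_subset_Icc_self hx)))
    (fun x hx => (h2 x hx).continuousWithinAt)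
    (fun x hx => by rw [hν]; exact up hx (h2 x (Ico_subset_Icc_self hx)))
    (by rw [z1, z2])
  exact this

theorem steady_w {K k Qs : ℝ → ℝ} {Φ ν : ℝ} (hν : 0 < ν) (hKd : ∀ φ, HasDerivAt K (deriv K φ) φ)
    (hpos : ∀ φ ∈ Icc (0:ℝ) Φ, 0 < K φ)
    (hk : Continuous k) (hkK : ∀ φ ∈ Icc (0:ℝ) Φ, k φ = deriv K φ)
    (hm : Monotone Qs) (hc : Continuous Qs) (h0 : Qs 0 = 0) (h1 : Qs 1 = Φ)
    (hd : ∀ x ∈ Icc (0:ℝ) 1, HasDerivAt Qs (K (Qs x) + ν) x) :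
    ∃ w b Q2 : ℝ → ℝ, Continuous b ∧ (∀ x, HasDerivAt w (b x * w x) x) ∧
      (∀ x, HasDerivAt Q2 (w x) x) ∧ Q2 0 = 0 ∧ Q2 1 = Φ ∧
      (∀ x ∈ Icc (0:ℝ) 1, b x = k (Q2 x)) ∧ (∀ x, 0 ≤ w x) ∧
      (∀ x ∈ Icc (0:ℝ) 1, w x = K (Qs x) + ν) := by
  have hr : ∀ x ∈ Icc (0:ℝ) 1, Qs x ∈ Icc 0 Φ := fun x hx =>
    ⟨by rw [← h0]; exact hm hx.1, by rw [← h1]; exact hm hx.2⟩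
  have hΦ : 0 ≤ Φ := by rw [← h0, ← h1]; exact hm zero_le_one
  set b : ℝ → ℝ := fun x => k (Qs x) with hb
  have hbc : Continuous b := hk.comp hc
  set B : ℝ → ℝ := fun x => ∫ y in (0:ℝ)..x, b y with hB
  have hBd : ∀ x, HasDerivAt B (b x) x := fun x =>
    intervalIntegral.integral_hasDerivAt_right (hbc.intervalIntegrable _ _)
      hbc.stronglyMeasurable.stronglyMeasurableAtFilter hbc.continuousAt
  have hB0 : B 0 = 0 := by simp [hB]
  set w : ℝ → ℝ := fun x => (K 0 + ν) * exp (B x) with hw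
  have hw0 : 0 < K 0 + ν := by linarith [hpos 0 ⟨le_rfl, hΦ⟩]
  have hwd : ∀ x, HasDerivAt w (b x * w x) x := fun x =>
    (((hBd x).exp).const_mul (K 0 + ν)).congr_deriv (by simp only [hw]; ring)
  have hwc : Continuous w := continuous_iff_continuousAt.2 fun x => (hwd x).continuousAt
  have hwe : ∀ x ∈ Icc (0:ℝ) 1, w x = K (Qs x) + ν := by
    have hdd : ∀ x ∈ Icc (0:ℝ) 1, HasDerivAt (fun x => (K (Qs x) + ν) * exp (-B x)) 0 x := by
      intro x hx
      have e := ((((hKd (Qs x)).comp x (hd x hx)).add_const ν).mul ((hBd x).neg.exp))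
      refine e.congr_deriv ?_
      simp only [hb, hkK _ (hr x hx), Function.comp]
      ring
    have := constant_of_derivWithin_zero (a := 0) (b := 1) (f := fun x => (K (Qs x) + ν) * exp (-B x))
      (fun x hx => (hdd x hx).differentiableAt.differentiableWithinAt)
      (fun x hx => (hdd x (Ico_subset_Icc_self hx)).hasDerivWithinAt.derivWithin
        (uniqueDiffOn_Icc zero_lt_one x (Ico_subset_Icc_self hx)))
    intro x hx
    have e := this x hx
    simp only [hB0, h0, neg_zero, exp_zero, mul_one] at e
    simp only [hw]
    rw [← e, mul_assoc, ← exp_add]; simp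
  set Q2 : ℝ → ℝ := fun x => ∫ y in (0:ℝ)..x, w y with hQ2
  have hQ2d : ∀ x, HasDerivAt Q2 (w x) x := fun x =>
    intervalIntegral.integral_hasDerivAt_right (hwc.intervalIntegrable _ _)
      hwc.stronglyMeasurable.stronglyMeasurableAtFilter hwc.continuousAt
  have hQe : ∀ x ∈ Icc (0:ℝ) 1, Q2 x = Qs x := by
    intro x hx
    have := intervalIntegral.integral_eq_sub_of_hasDerivAt (a := 0) (b := x) (f := Qs) (f' := w)
      (fun y hy => by
        rw [uIcc_of_le hx.1] at hy
        have hy' : y ∈ Icc (0:ℝ) 1 := ⟨hy.1, hy.2.trans hx.2⟩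
        rw [hwe y hy']; exact hd y hy') (hwc.intervalIntegrable _ _)
    rw [h0, sub_zero] at this
    exact this
  refine ⟨w, b, Q2, hbc, hwd, hQ2d, by simp [hQ2], ?_, ?_, fun x => ?_, hwe⟩
  · rw [hQe 1 ⟨zero_le_one, le_rfl⟩, h1]
  · intro x hx; rw [hQe x hx]
  · exact mul_nonneg hw0.le (exp_pos _).le

end

/-- Splitting of the derivative of `K` into monotone pieces. -/
theorem kdec {K : ℝ → ℝ} {Φ : ℝ} (hΦ : 0 < Φ) (hK : KAssump K Φ) :
    ∃ (α β : ℝ → ℝ) (C : ℝ), Continuous α ∧ Continuous β ∧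
      (∀ φ ∈ Icc 0 Φ, deriv K φ = kmax K Φ - α φ - β φ) ∧
      (∀ φ ∈ Icc 0 Φ, 0 ≤ α φ ∧ α φ ≤ C) ∧ (∀ φ ∈ Icc 0 Φ, 0 ≤ β φ ∧ β φ ≤ C) ∧
      AntitoneOn α (Icc 0 Φ) ∧ MonotoneOn β (Icc 0 Φ) := by
  have hK1 : ContDiff ℝ 1 (deriv K) := by
    have : ContDiff ℝ (1 + 1) K := by simpa [one_add_one_eq_two] using hK.smooth
    exact (contDiff_succ_iff_deriv.1 this).2.2
  have hK2 : Continuous (deriv (deriv K)) := hK1.continuous_deriv le_rfl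
  have hd : ∀ x, HasDerivAt (deriv K) (deriv (deriv K) x) x := fun x =>
    (hK1.differentiable one_ne_zero x).hasDerivAt
  set f : ℝ → ℝ := fun x => max (deriv (deriv K) x) 0 with hf
  set g : ℝ → ℝ := fun x => max (-deriv (deriv K) x) 0 with hg
  have hfc : Continuous f := hK2.max continuous_const
  have hgc : Continuous g := hK2.neg.max continuous_const
  have prm : ∀ {h : ℝ → ℝ}, Continuous h → ∀ φ,
      HasDerivAt (fun φ => ∫ y in (0:ℝ)..φ, h y) (h φ) φ := fun hc φ =>
    intervalIntegral.integral_hasDerivAt_right (hc.intervalIntegrable _ _)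
      hc.stronglyMeasurable.stronglyMeasurableAtFilter hc.continuousAt
  set A : ℝ → ℝ := fun φ => ∫ y in (0:ℝ)..φ, f y with hA
  set B : ℝ → ℝ := fun φ => ∫ y in (0:ℝ)..φ, g y with hB
  have hAc : Continuous A := continuous_iff_continuousAt.2 fun x => (prm hfc x).continuousAt
  have hBc : Continuous B := continuous_iff_continuousAt.2 fun x => (prm hgc x).continuousAt
  have hAm : Monotone A := monotone_of_deriv_nonneg (fun x => (prm hfc x).differentiableAt)
    (fun x => by rw [(prm hfc x).deriv]; exact le_max_right _ _)
  have hBm : Monotone B := monotone_of_deriv_nonneg (fun x => (prm hgc x).differentiableAt)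
    (fun x => by rw [(prm hgc x).deriv]; exact le_max_right _ _)
  have hA0 : A 0 = 0 := by simp [hA]
  have hB0 : B 0 = 0 := by simp [hB]
  refine ⟨fun φ => A Φ - A φ, B, A Φ + B Φ, by fun_prop, hBc, ?_, ?_, ?_, ?_, ?_⟩
  · intro φ hφ
    have e1 := intervalIntegral.integral_eq_sub_of_hasDerivAt (a := 0) (b := φ)
      (fun x _ => hd x) (hK2.intervalIntegrable _ _)
    have e2 : ∫ y in (0:ℝ)..φ, deriv (deriv K) y = A φ - B φ := by
      simp only [hA, hB]
      rw [← intervalIntegral.integral_sub (hfc.intervalIntegrable _ _) (hgc.intervalIntegrable _ _)]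
      refine intervalIntegral.integral_congr fun x _ => ?_
      simp only [hf, hg]
      rcases le_total 0 (deriv (deriv K) x) with h | h
      · rw [max_eq_left h, max_eq_right (by linarith)]; ring
      · rw [max_eq_right h, max_eq_left (by linarith)]; ring
    have e3 : kmax K Φ = deriv K 0 + A Φ := rfl
    simp only
    linarith
  · intro φ hφ
    have := hAm hφ.1; have := hAm hφ.2; have := hBm hΦ.le
    constructor <;> linarith
  · intro φ hφ
    have := hBm hφ.1; have := hBm hφ.2; have := hAm hΦ.le
    constructor <;> linarith
  · intro x _ y _ h
    have := hAm h
    simp only; linarith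
  · exact hBm.monotoneOn _

/-- Theorem 5.10: global existence and exponential convergence to the unique steady state
when `k_max < 0` and the interaction is mild. -/
theorem stmt15 (ΦF : ℝ) (hΦF : 0 < ΦF) (K : ℝ → ℝ) (hK : KAssump K ΦF)
    (hkmax : kmax K ΦF < 0)
    (hint : 1 < ∫ φ in (0 : ℝ)..ΦF, 1 / K φ)
    (Qinit : ℝ → ℝ) (hA2 : A2 K ΦF Qinit)
    (hH : ∀ η ∈ Icc (0 : ℝ) 1, 0 < Hinit K Qinit η) :
    ∃ (Q : ℝ → ℝ → ℝ) (N : ℝ → ℝ) (Qs : ℝ → ℝ) (Ns : ℝ),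
      IsQSol K ΦF ⊤ Qinit Q N ∧
      (∀ (Q' : ℝ → ℝ → ℝ) (N' : ℝ → ℝ), IsQSol K ΦF ⊤ Qinit Q' N' →
        (∀ τ : ℝ, 0 ≤ τ → ∀ η ∈ Icc (0 : ℝ) 1, Q' τ η = Q τ η) ∧
        (∀ τ : ℝ, 0 ≤ τ → N' τ = N τ)) ∧
      IsSteadyState K ΦF Qs Ns ∧
      (∀ (Qs' : ℝ → ℝ) (Ns' : ℝ), IsSteadyState K ΦF Qs' Ns' →
        (∀ η ∈ Icc (0 : ℝ) 1, Qs' η = Qs η) ∧ Ns' = Ns) ∧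
      ∀ τ : ℝ, 0 ≤ τ →
        (∫ η in (0 : ℝ)..1, |pdEta Q τ η - derivWithin Qs (Icc 0 1) η|)
          ≤ Real.exp (kmax K ΦF * τ) *
            ∫ η in (0 : ℝ)..1, |pdEta Q 0 η - derivWithin Qs (Icc 0 1) η| := by
  -- basic facts on `K`
  have hKd : ∀ x, HasDerivAt K (deriv K x) x := fun x =>
    (hK.smooth.differentiable two_ne_zero x).hasDerivAt
  have hKc : Continuous K := hK.smooth.continuous
  have hK1 : ContDiff ℝ 1 (deriv K) := by
    have : ContDiff ℝ (1 + 1) K := by simpa [one_add_one_eq_two] using hK.smooth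
    exact (contDiff_succ_iff_deriv.1 this).2.2
  obtain ⟨L1, hL1⟩ := hK.bdd1
  obtain ⟨L2, hL2⟩ := hK.bdd2
  have hL10 : 0 ≤ L1 := (abs_nonneg _).trans (hL1 0)
  have hL20 : 0 ≤ L2 := (abs_nonneg _).trans (hL2 0)
  have hLip : ∀ x y, |K x - K y| ≤ L1 * |x - y| := fun x y =>
    convex_univ.norm_image_sub_le_of_norm_hasDerivWithin_le
      (fun z _ => (hKd z).hasDerivWithinAt) (fun z _ => hL1 z) (mem_univ y) (mem_univ x)
  have hLip2 : ∀ x y, |deriv K x - deriv K y| ≤ L2 * |x - y| := fun x y =>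
    convex_univ.norm_image_sub_le_of_norm_hasDerivWithin_le
      (fun z _ => ((hK1.differentiable one_ne_zero z).hasDerivAt).hasDerivWithinAt)
      (fun z _ => hL2 z) (mem_univ y) (mem_univ x)
  obtain ⟨α, β, C, hα, hβ, hdec, hα0, hβ0, hαm, hβm⟩ := kdec hΦF hK
  -- truncated coefficient
  obtain ⟨k, hkdef⟩ : ∃ k : ℝ → ℝ, k = fun φ => deriv K (cl ΦF φ) := ⟨_, rfl⟩
  have hcl : ∀ φ, cl ΦF φ ∈ Icc 0 ΦF := fun φ => ⟨cl_nonneg _ _, cl_le hΦF.le _⟩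
  have hk : Continuous k := by rw [hkdef]; exact hK1.continuous.comp (cl_cont _)
  have hkK : ∀ φ ∈ Icc (0:ℝ) ΦF, k φ = deriv K φ := fun φ hφ => by
    simp only [hkdef, cl_eq hφ.1 hφ.2]
  have hkκ : ∀ x, k x ≤ kmax K ΦF := fun x => by
    simp only [hkdef]
    rw [hdec _ (hcl x)]
    linarith [(hα0 _ (hcl x)).1, (hβ0 _ (hcl x)).1]
  have hkL : ∀ x y, |k x - k y| ≤ L2 * |x - y| := fun x y => by
    simp only [hkdef]
    exact (hLip2 _ _).trans (mul_le_mul_of_nonneg_left (cl_lip _ _ _) hL20)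
  have hk0 : ∀ x, k x ≤ 0 := fun x => (hkκ x).trans hkmax.le
  obtain ⟨Kt, hKtdef⟩ : ∃ Kt : ℝ → ℝ, Kt = fun φ => K 0 + ∫ y in (0:ℝ)..φ, k y := ⟨_, rfl⟩
  have hKt : ∀ x, HasDerivAt Kt (k x) x := fun x => by
    rw [hKtdef]
    exact (intervalIntegral.integral_hasDerivAt_right (hk.intervalIntegrable _ _)
      hk.stronglyMeasurable.stronglyMeasurableAtFilter hk.continuousAt).const_add _
  have hKtK : ∀ φ ∈ Icc (0:ℝ) ΦF, Kt φ = K φ := by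
    intro φ hφ
    have := intervalIntegral.integral_eq_sub_of_hasDerivAt (a := 0) (b := φ) (f := K) (f' := k)
      (fun y hy => by
        rw [uIcc_of_le hφ.1] at hy
        rw [hkK y ⟨hy.1, hy.2.trans hφ.2⟩]; exact hKd y) (hk.intervalIntegrable _ _)
    simp only [hKtdef]; linarith
  have m0 : (0:ℝ) ∈ Icc (0:ℝ) ΦF := ⟨le_rfl, hΦF.le⟩
  have m1 : ΦF ∈ Icc (0:ℝ) ΦF := ⟨hΦF.le, le_rfl⟩
  have i0 : (0:ℝ) ∈ Icc (0:ℝ) 1 := ⟨le_rfl, zero_le_one⟩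
  have i1 : (1:ℝ) ∈ Icc (0:ℝ) 1 := ⟨zero_le_one, le_rfl⟩
  have hanti : Antitone Kt := antitone_of_deriv_nonpos (fun x => (hKt x).differentiableAt)
    (fun x => by rw [(hKt x).deriv]; exact hk0 x)
  have hcK : 0 ≤ K 0 - K ΦF := by
    have := hanti hΦF.le
    rw [hKtK _ m0, hKtK _ m1] at this
    linarith
  -- initial velocity
  have hu : UniqueDiffOn ℝ (Icc (0:ℝ) 1) := uniqueDiffOn_Icc zero_lt_one
  obtain ⟨v, hvdef⟩ : ∃ v : ℝ → ℝ, v = fun x => derivWithin Qinit (Icc 0 1) (cl 1 x) := ⟨_, rfl⟩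
  have hcl1 : ∀ x, cl 1 x ∈ Icc (0:ℝ) 1 := fun φ => ⟨cl_nonneg _ _, cl_le zero_le_one _⟩
  have hv' : ContinuousOn (derivWithin Qinit (Icc 0 1)) (Icc 0 1) :=
    hA2.reg.continuousOn_derivWithin hu le_rfl
  have hv : Continuous v := by
    rw [hvdef]; exact hv'.comp_continuous (cl_cont 1) hcl1
  have hve : ∀ x ∈ Icc (0:ℝ) 1, v x = derivWithin Qinit (Icc 0 1) x := fun x hx => by
    simp only [hvdef, cl_eq hx.1 hx.2]
  obtain ⟨V, hV⟩ := (isCompact_Icc (a := (0:ℝ)) (b := 1)).bddAbove_image hv'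
  have hvb : ∀ x, 0 ≤ v x ∧ v x ≤ V := fun x => by
    simp only [hvdef]
    exact ⟨hA2.mono.derivWithin_nonneg, hV ⟨_, hcl1 x, rfl⟩⟩
  have hcomp : v 1 + (K 0 - K ΦF) = v 0 := by
    rw [hve 1 i1, hve 0 i0]; linarith [hA2.compat]
  obtain ⟨P, a, hP, ha, hak, hPi, hPc, hP0⟩ :=
    core_exists hk hv hvb hkmax hkκ hkL hL20 hcK hcomp
  have hf := tr_cont hP ha
  have hPc' : ∀ τ, 0 ≤ τ → P τ = tr P a τ (τ - 1) + (Kt 0 - Kt ΦF) := fun τ hτ => by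
    rw [hKtK _ m0, hKtK _ m1]; exact hPc τ hτ
  have htr0 : ∀ x, 0 ≤ x → tr P a 0 (0 - x) = v x := fun x hx => by
    have := tr_start P a (-x)
    rw [max_eq_right (by linarith), hPi _ (by linarith), neg_neg] at this
    rwa [zero_sub]
  have hQinit : ∀ η ∈ Icc (0:ℝ) 1, Qh (tr P a) 0 η = Qinit η := by
    intro η hη
    rw [Qh_eq_int]
    have e1 : ∫ x in (0:ℝ)..η, tr P a 0 (0 - x) = ∫ x in (0:ℝ)..η, v x := by
      refine intervalIntegral.integral_congr fun x hx => ?_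
      rw [uIcc_of_le hη.1] at hx
      exact htr0 x hx.1
    have e2 := intervalIntegral.integral_eq_sub_of_hasDerivAt_of_le (a := 0) (b := η) (f := Qinit)
      (f' := v) hη.1 (hA2.reg.continuousOn.mono (Icc_subset_Icc_right hη.2))
      (fun x hx => by
        have hx' : x ∈ Icc (0:ℝ) 1 := ⟨hx.1.le, hx.2.le.trans hη.2⟩
        rw [hve x hx']
        exact ((hA2.reg.differentiableOn one_ne_zero x hx').hasDerivWithinAt).hasDerivAt
          (Icc_mem_nhds hx.1 (hx.2.trans_le hη.2)))
      (hv.intervalIntegrable _ _)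
    rw [e1, e2, hA2.init0, sub_zero]
  have hi : Qh (tr P a) 0 1 = ΦF := by rw [hQinit 1 i1, hA2.init1]
  have hone : ∀ τ, 0 ≤ τ → Qh (tr P a) τ 1 = ΦF := fun τ hτ =>
    sol_one hKt hk hk0 hP ha hak hPc' hi hτ
  have hmono := sol_mono hP hP0 ha
  have hz : ∀ τ, Qh (tr P a) τ 0 = 0 := fun τ => by simp [Qh]
  have hrange : ∀ τ, 0 ≤ τ → ∀ η ∈ Icc (0:ℝ) 1, Qh (tr P a) τ η ∈ Icc 0 ΦF := fun τ hτ η hη =>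
    ⟨by rw [← hz τ]; exact hmono τ hη.1, by rw [← hone τ hτ]; exact hmono τ hη.2⟩
  have hpos : ∀ τ, 0 ≤ τ → 0 < tr P a τ (τ - 1) - K ΦF := by
    intro τ hτ
    rw [← hKtK _ m1]
    refine sol_pos hKt hk hk0 hP ha hak hPc' hi (fun η hη => ?_) hτ
    rw [hKtK _ (hrange 0 le_rfl η hη), hQinit η hη, hPi _ (by linarith [hη.1]), neg_neg, hve η hη]
    exact hH η hη
  have hpdE : ∀ τ, ∀ η ∈ Icc (0:ℝ) 1, pdEta (Qh (tr P a)) τ η = tr P a τ (τ - η) := fun τ η hη =>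
    (Qh_deriv_eta hf τ η).hasDerivWithinAt.derivWithin (hu η hη)
  have hpdT : ∀ τ, 0 ≤ τ → ∀ η ∈ Icc (0:ℝ) 1, pdTau (Qh (tr P a)) τ η =
      P τ - tr P a τ (τ - η) + (K (Qh (tr P a) τ η) - K 0) := fun τ hτ η hη => by
    rw [← hKtK _ (hrange τ hτ η hη), ← hKtK _ m0]
    exact (sol_tau hKt hk hP ha hak hτ hη).hasDerivWithinAt.derivWithin
      (uniqueDiffOn_Ici _ _ (mem_Ici.2 hτ))
  -- the solution
  have hsol : IsQSol K ΦF ⊤ Qinit (Qh (tr P a)) (fun τ => 1 / (tr P a τ (τ - 1) - K ΦF)) := by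
    have hm : ∀ {τ : ℝ}, τ ∈ Ico0 ⊤ → 0 ≤ τ := fun h => h.1
    refine ⟨hA2.reg, hA2.mono, hA2.init0, hA2.init1, hA2.deriv1, ?_, ?_, ?_, ?_, ?_, ?_, ?_, hQinit, ?_⟩
    · exact (Qh_contDiff hf (tr_dcont hP ha) (tr_hasDerivAt P ha)).contDiffOn
    · exact fun τ _ => (hmono τ).monotoneOn _
    · have hc : Continuous fun τ => tr P a τ (τ - 1) - K ΦF :=
        (hf.comp (f := fun t : ℝ => (t, t - 1)) (by fun_prop)).sub continuous_const
      exact continuousOn_const.div hc.continuousOn (fun τ hτ => (hpos τ (hm hτ)).ne')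
    · exact fun τ hτ => one_div_pos.2 (hpos τ (hm hτ))
    · intro τ hτ η hη
      have hη' := Ioo_subset_Icc_self hη
      rw [hpdT τ (hm hτ) η hη', hpdE τ η hη', hPc τ (hm hτ), one_div_one_div]
      ring
    · exact fun τ _ => hz τ
    · intro τ hτ
      rw [hpdE τ 1 i1, one_div_one_div]
    · intro τ hτ
      rw [hpdE τ 1 i1]
      linarith [hpos τ (hm hτ)]
  -- the steady state
  obtain ⟨Qs, ν, hν, hQm, hQc, hQ0, hQ1, hQd⟩ := steady_exists hΦF hKc hK.pos hint
  obtain ⟨w, b, Q2, hb, hw, hQ2, hQ20, hQ21, hbk, hw0, hwe⟩ :=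
    steady_w hν hKd hK.pos hk hkK hQm hQc hQ0 hQ1 hQd
  have hdQ : ∀ x ∈ Icc (0:ℝ) 1, derivWithin Qs (Icc 0 1) x = K (Qs x) + ν := fun x hx =>
    (hQd x hx).hasDerivWithinAt.derivWithin (hu x hx)
  have hss : IsSteadyState K ΦF Qs (1 / ν) := by
    refine ⟨?_, one_div_pos.2 hν, fun η hη => by rw [hdQ η hη, one_div_one_div], hQ0, hQ1⟩
    rw [contDiffOn_one_iff_derivWithin hu]
    refine ⟨fun x hx => (hQd x hx).differentiableAt.differentiableWithinAt, ?_⟩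
    exact ((hKc.comp hQc).add continuous_const).continuousOn.congr hdQ
  refine ⟨Qh (tr P a), _, Qs, 1 / ν, hsol, fun Q' N' h' => qsol_unique hL10 hKc hLip hsol h',
    hss, fun Qs' Ns' h' => steady_unique hL10 hLip h' hss, fun τ hτ => ?_⟩
  have hfin := l1_decay hkmax hα hβ (fun φ hφ => (hkK φ hφ).trans (hdec φ hφ)) hα0 hβ0 hαm hβm
    hP hP0 ha hak hPc hone hb hw hQ2 hQ20 hQ21 hbk hw0
    (by rw [hwe 0 i0, hwe 1 i1, hQ0, hQ1]; ring) hτ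
  have hcongr : ∀ t, ∫ η in (0 : ℝ)..1, |pdEta (Qh (tr P a)) t η - derivWithin Qs (Icc 0 1) η| =
      ∫ x in (0:ℝ)..1, |tr P a t (t - x) - w x| := by
    intro t
    refine intervalIntegral.integral_congr fun x hx => ?_
    rw [uIcc_of_le zero_le_one] at hx
    rw [hpdE t x hx, hdQ x hx, hwe x hx]
  rw [hcongr τ, hcongr 0]
  exact hfin
end
end

section
/- Suppose k_min > 0. Then every global classical solution of the Q-system (i.e., classical solution on [0,∞)) is stationary: if (Q,N) is a classical solution of the Q-system on [0,∞), then Q(τ,·) = Q(0,·) for all τ ≥ 0. Consequently, every classical solution whose initial datum is not the profile of a steady state has finite maximal existence time. -/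
open Real Set MeasureTheory Filter Topology
open scoped ENNReal

noncomputable section

/-- Bounds on the phase response function. -/
structure KData (K Kp : ℝ → ℝ) (ΦF k L C : ℝ) : Prop where
  kpos : 0 < k
  hd : ∀ x, HasDerivAt K (Kp x) x
  hc : Continuous Kp
  lo : ∀ x ∈ Icc (0 : ℝ) ΦF, k ≤ Kp x
  hi : ∀ x, |Kp x| ≤ L
  bd : ∀ x ∈ Icc (0 : ℝ) ΦF, K x ≤ C

/-- Globally continuous extension of a solution on `[0, T]`. -/
structure Good (K : ℝ → ℝ) (ΦF T : ℝ) (Q A : ℝ → ℝ → ℝ) (n : ℝ → ℝ) : Prop where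
  Qc : Continuous (Function.uncurry Q)
  Ac : Continuous (Function.uncurry A)
  nc : Continuous n
  Q0 : ∀ τ ∈ Icc (0 : ℝ) T, Q τ 0 = 0
  Q1 : ∀ τ ∈ Icc (0 : ℝ) T, Q τ 1 = ΦF
  A0 : ∀ τ ∈ Icc (0 : ℝ) T, A τ 0 = n τ + K 0
  A1 : ∀ τ ∈ Icc (0 : ℝ) T, A τ 1 = n τ + K ΦF
  Qr : ∀ τ ∈ Icc (0 : ℝ) T, ∀ η ∈ Icc (0 : ℝ) 1, Q τ η ∈ Icc 0 ΦF
  Apos : ∀ τ ∈ Icc (0 : ℝ) T, ∀ η ∈ Icc (0 : ℝ) 1, 0 ≤ A τ η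
  dQ : ∀ τ ∈ Icc (0 : ℝ) T, ∀ η ∈ Icc (0 : ℝ) 1,
    HasDerivWithinAt (Q τ) (A τ η) (Icc 0 1) η
  chr : ∀ τ η σ : ℝ, 0 ≤ τ → 0 ≤ η → 0 ≤ σ → τ + σ ≤ T → η + σ ≤ 1 →
    Q (τ + σ) (η + σ) = Q τ η + ∫ r in (0 : ℝ)..σ, (n (τ + r) + K (Q (τ + r) (η + r)))

section abstractpart

variable {K Kp : ℝ → ℝ} {ΦF k L C T : ℝ} {Q A : ℝ → ℝ → ℝ} {n : ℝ → ℝ}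

lemma KData.Kc (h : KData K Kp ΦF k L C) : Continuous K :=
  continuous_iff_continuousAt.2 fun x => (h.hd x).continuousAt

lemma Good.Qc2 (g : Good K ΦF T Q A n) {X : Type*} [TopologicalSpace X] {u v : X → ℝ}
    (hu : Continuous u) (hv : Continuous v) : Continuous fun x => Q (u x) (v x) :=
  g.Qc.comp (hu.prodMk hv)

lemma Good.Ac2 (g : Good K ΦF T Q A n) {X : Type*} [TopologicalSpace X] {u v : X → ℝ}
    (hu : Continuous u) (hv : Continuous v) : Continuous fun x => A (u x) (v x) :=
  g.Ac.comp (hu.prodMk hv)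

lemma Good.chrA_int (h : KData K Kp ΦF k L C) (g : Good K ΦF T Q A n) (τ η σ : ℝ)
    (hτ : 0 ≤ τ) (hη : 0 < η) (hσ : 0 ≤ σ) (h1 : τ + σ ≤ T) (h2 : η + σ < 1) :
    A (τ + σ) (η + σ) = A τ η +
      ∫ r in (0 : ℝ)..σ, Kp (Q (τ + r) (η + r)) * A (τ + r) (η + r) := by
  have hcF : Continuous fun p : ℝ × ℝ => Kp (Q (τ + p.2) (p.1 + p.2)) * A (τ + p.2) (p.1 + p.2) :=
    (h.hc.comp (g.Qc2 (by fun_prop) (by fun_prop))).mul (g.Ac2 (by fun_prop) (by fun_prop))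
  obtain ⟨M, hM⟩ := ((isCompact_Icc (a := (0:ℝ)) (b := 1)).prod
    (isCompact_Icc (a := (0:ℝ)) (b := σ))).exists_bound_of_continuousOn hcF.continuousOn
  have hs : Ioo 0 (1 - σ) ∈ 𝓝 η := Ioo_mem_nhds hη (by linarith)
  have key := intervalIntegral.hasDerivAt_integral_of_dominated_loc_of_deriv_le
    (μ := volume) (a := 0) (b := σ)
    (F := fun x r => n (τ + r) + K (Q (τ + r) (x + r)))
    (F' := fun x r => Kp (Q (τ + r) (x + r)) * A (τ + r) (x + r))
    (x₀ := η) (s := Ioo 0 (1 - σ)) (bound := fun _ => M) hs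
    (Eventually.of_forall fun x => by
      refine Continuous.aestronglyMeasurable ?_
      exact (g.nc.comp (by fun_prop)).add (h.Kc.comp (g.Qc2 (by fun_prop) (by fun_prop))))
    (by
      refine Continuous.intervalIntegrable ?_ _ _
      exact (g.nc.comp (by fun_prop)).add (h.Kc.comp (g.Qc2 (by fun_prop) (by fun_prop))))
    (by
      refine Continuous.aestronglyMeasurable ?_
      exact hcF.comp (by fun_prop : Continuous fun r : ℝ => (η, r)))
    (Eventually.of_forall fun t ht x hx => by
      rw [uIoc_of_le hσ] at ht
      exact hM (x, t) ⟨⟨hx.1.le, by linarith [hx.2]⟩, ⟨ht.1.le, ht.2⟩⟩)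
    (by simp)
    (Eventually.of_forall fun t ht x hx => by
      rw [uIoc_of_le hσ] at ht
      have hd := (g.dQ (τ + t) ⟨by linarith [ht.1], by linarith [ht.2]⟩ (x + t)
        ⟨by linarith [ht.1, hx.1], by linarith [ht.2, hx.2]⟩).hasDerivAt
        (Icc_mem_nhds (by linarith [ht.1, hx.1]) (by linarith [ht.2, hx.2]))
      exact ((h.hd _).comp x (hd.comp_add_const x t)).const_add _)
  have hL : HasDerivAt (fun x => Q (τ + σ) (x + σ) - Q τ x) (A (τ + σ) (η + σ) - A τ η) η := by
    have hd1 := (g.dQ (τ + σ) ⟨by linarith, by linarith⟩ (η + σ)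
        ⟨by linarith, by linarith⟩).hasDerivAt
        (Icc_mem_nhds (by linarith) (by linarith))
    have hd2 := (g.dQ τ ⟨by linarith, by linarith⟩ η
        ⟨by linarith, by linarith⟩).hasDerivAt
        (Icc_mem_nhds (by linarith) (by linarith))
    exact (hd1.comp_add_const η σ).sub hd2
  have hE : (fun x => Q (τ + σ) (x + σ) - Q τ x) =ᶠ[𝓝 η]
      fun x => ∫ r in (0 : ℝ)..σ, (n (τ + r) + K (Q (τ + r) (x + r))) := by
    filter_upwards [hs] with x hx
    rw [g.chr τ x σ hτ hx.1.le hσ h1 (by linarith [hx.2])]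
    ring
  have := (key.2.congr_of_eventuallyEq hE).unique hL
  linarith

lemma Good.chrA (h : KData K Kp ΦF k L C) (g : Good K ΦF T Q A n) (τ η σ : ℝ)
    (hτ : 0 ≤ τ) (hη : 0 ≤ η) (hσ : 0 ≤ σ) (h1 : τ + σ ≤ T) (h2 : η + σ ≤ 1) (h3 : σ < 1) :
    A (τ + σ) (η + σ) = A τ η +
      ∫ r in (0 : ℝ)..σ, Kp (Q (τ + r) (η + r)) * A (τ + r) (η + r) := by
  have e : EqOn (fun η => A (τ + σ) (η + σ)) (fun η => A τ η +
      ∫ r in (0 : ℝ)..σ, Kp (Q (τ + r) (η + r)) * A (τ + r) (η + r)) (Ioo 0 (1 - σ)) := by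
    intro x hx
    exact g.chrA_int h τ x σ hτ hx.1 hσ h1 (by linarith [hx.2])
  have e2 := e.closure (g.Ac2 (by fun_prop) (by fun_prop)) (by
    refine (g.Ac2 (by fun_prop) (by fun_prop)).add ?_
    apply intervalIntegral.continuous_parametric_intervalIntegral_of_continuous'
    exact (h.hc.comp (g.Qc2 (by fun_prop) (by fun_prop))).mul (g.Ac2 (by fun_prop) (by fun_prop)))
  rw [closure_Ioo (by linarith)] at e2
  exact e2 ⟨hη, by linarith⟩

/-- right derivative from an integral representation -/
lemma right_deriv_of_int {f F : ℝ → ℝ} {c σ s : ℝ} (hF : Continuous F) (hs : s ∈ Ico 0 σ)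
    (hf : ∀ x ∈ Ico 0 σ, f x = c + ∫ r in (0 : ℝ)..x, F r) :
    HasDerivWithinAt f (F s) (Ici s) s := by
  have h1 : HasDerivAt (fun x => c + ∫ r in (0 : ℝ)..x, F r) (F s) s :=
    (intervalIntegral.integral_hasDerivAt_right (hF.intervalIntegrable _ _)
      hF.aestronglyMeasurable.stronglyMeasurableAtFilter hF.continuousAt).const_add c
  refine h1.hasDerivWithinAt.congr_of_eventuallyEq ?_ (hf s hs)
  filter_upwards [self_mem_nhdsWithin, mem_nhdsWithin_of_mem_nhds (Iio_mem_nhds hs.2)] with x h1 h2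
  exact hf x ⟨hs.1.trans h1, h2⟩

/-- `H = A - K(Q)`. -/
def HH (K : ℝ → ℝ) (Q A : ℝ → ℝ → ℝ) (τ η : ℝ) : ℝ := A τ η - K (Q τ η)

/-- `m = min H`. -/
def mm (K : ℝ → ℝ) (Q A : ℝ → ℝ → ℝ) (τ : ℝ) : ℝ := sInf (HH K Q A τ '' Icc 0 1)

lemma Good.Hc (h : KData K Kp ΦF k L C) (g : Good K ΦF T Q A n) :
    Continuous (Function.uncurry (HH K Q A)) :=
  g.Ac.sub (h.Kc.comp g.Qc)

lemma Good.Hc2 (h : KData K Kp ΦF k L C) (g : Good K ΦF T Q A n)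
    {X : Type*} [TopologicalSpace X] {u v : X → ℝ}
    (hu : Continuous u) (hv : Continuous v) : Continuous fun x => HH K Q A (u x) (v x) :=
  (g.Hc h).comp (hu.prodMk hv)

lemma Good.mc (h : KData K Kp ΦF k L C) (g : Good K ΦF T Q A n) :
    Continuous (mm K Q A) :=
  isCompact_Icc.continuous_sInf (g.Hc h)

lemma Good.m_le (h : KData K Kp ΦF k L C) (g : Good K ΦF T Q A n) (τ η : ℝ)
    (hη : η ∈ Icc (0 : ℝ) 1) : mm K Q A τ ≤ HH K Q A τ η := by
  apply csInf_le
  · exact (isCompact_Icc.image (g.Hc2 h continuous_const continuous_id)).bddBelow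
  · exact ⟨η, hη, rfl⟩

lemma Good.H0 (g : Good K ΦF T Q A n) (τ : ℝ) (hτ : τ ∈ Icc 0 T) : HH K Q A τ 0 = n τ := by
  simp only [HH, g.A0 τ hτ, g.Q0 τ hτ]; ring

lemma Good.H1 (g : Good K ΦF T Q A n) (τ : ℝ) (hτ : τ ∈ Icc 0 T) : HH K Q A τ 1 = n τ := by
  simp only [HH, g.A1 τ hτ, g.Q1 τ hτ]; ring

lemma Good.argmin (h : KData K Kp ΦF k L C) (g : Good K ΦF T Q A n) (τ : ℝ)
    (hτ : τ ∈ Icc 0 T) : ∃ η ∈ Ico (0 : ℝ) 1, HH K Q A τ η = mm K Q A τ := by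
  obtain ⟨η, hη, he⟩ := (isCompact_Icc.image
    (g.Hc2 h (continuous_const (y := τ)) continuous_id)).sInf_mem
      ((nonempty_Icc.2 (zero_le_one (α := ℝ))).image _)
  change HH K Q A τ η = mm K Q A τ at he
  rcases eq_or_lt_of_le hη.2 with h1 | h1
  · refine ⟨0, ⟨le_rfl, one_pos⟩, ?_⟩
    rw [← he, h1, g.H0 τ hτ, g.H1 τ hτ]
  · exact ⟨η, ⟨hη.1, h1⟩, he⟩

lemma Good.chrH (h : KData K Kp ΦF k L C) (g : Good K ΦF T Q A n) (τ η σ s : ℝ)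
    (hτ : 0 ≤ τ) (hη : 0 ≤ η) (h1 : τ + σ ≤ T) (h2 : η + σ ≤ 1)
    (hs : s ∈ Ico 0 σ) :
    HasDerivWithinAt (fun s => HH K Q A (τ + s) (η + s))
      (Kp (Q (τ + s) (η + s)) * (HH K Q A (τ + s) (η + s) - n (τ + s))) (Ici s) s := by
  have dA : HasDerivWithinAt (fun s => A (τ + s) (η + s))
      (Kp (Q (τ + s) (η + s)) * A (τ + s) (η + s)) (Ici s) s := by
    refine right_deriv_of_int (F := fun r => Kp (Q (τ + r) (η + r)) * A (τ + r) (η + r))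
      (c := A τ η) ?_ hs fun x hx => ?_
    · exact (h.hc.comp (g.Qc2 (by fun_prop) (by fun_prop))).mul (g.Ac2 (by fun_prop) (by fun_prop))
    · exact g.chrA h τ η x hτ hη hx.1 (by linarith [hx.2]) (by linarith [hx.2])
        (by linarith [hx.2])
  have dQ : HasDerivWithinAt (fun s => Q (τ + s) (η + s))
      (n (τ + s) + K (Q (τ + s) (η + s))) (Ici s) s := by
    refine right_deriv_of_int (F := fun r => n (τ + r) + K (Q (τ + r) (η + r)))
      (c := Q τ η) ?_ hs fun x hx => ?_
    · exact (g.nc.comp (by fun_prop)).add (h.Kc.comp (g.Qc2 (by fun_prop) (by fun_prop)))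
    · exact g.chr τ η x hτ hη hx.1 (by linarith [hx.2]) (by linarith [hx.2])
  refine HasDerivWithinAt.congr_deriv (dA.sub ((h.hd _).comp_hasDerivWithinAt s dQ)) ?_
  simp only [HH]; ring

lemma Good.dini (h : KData K Kp ΦF k L C) (g : Good K ΦF T Q A n) (a b : ℝ)
    (ha : 0 ≤ a) (hab : a ≤ b) (hb : b ≤ T) :
    mm K Q A b ≤ mm K Q A a - k * ∫ t in a..b, (n t - mm K Q A t) := by
  have hcont : Continuous fun t => n t - mm K Q A t := g.nc.sub (g.mc h)
  have hD : ∀ x, HasDerivAt (fun x => mm K Q A a - k * ∫ t in a..x, (n t - mm K Q A t))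
      (-(k * (n x - mm K Q A x))) x := fun x =>
    ((intervalIntegral.integral_hasDerivAt_right (hcont.intervalIntegrable _ _)
      hcont.aestronglyMeasurable.stronglyMeasurableAtFilter hcont.continuousAt).const_mul
        k).const_sub _
  refine image_le_of_liminf_slope_right_le_deriv_boundary (f := mm K Q A) (a := a) (b := b)
    (B := fun x => mm K Q A a - k * ∫ t in a..x, (n t - mm K Q A t))
    (B' := fun x => -(k * (n x - mm K Q A x)))
    (g.mc h).continuousOn (by simp) (fun x _ => (hD x).continuousAt.continuousWithinAt)
    (fun x _ => (hD x).hasDerivWithinAt) ?_ ⟨hab, le_rfl⟩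
  intro x hx r hr
  have hxT : x ∈ Icc 0 T := ⟨ha.trans hx.1, hx.2.le.trans hb⟩
  obtain ⟨η, hη, he⟩ := g.argmin h x hxT
  have hmn : mm K Q A x ≤ n x := by
    rw [← g.H0 x hxT]; exact g.m_le h x 0 ⟨le_rfl, zero_le_one⟩
  set σ := min (b - x) (1 - η) with hσ
  have hσpos : 0 < σ := lt_min (by linarith [hx.2]) (by linarith [hη.2])
  have hσ1 : σ ≤ b - x := min_le_left _ _
  have hσ2 : σ ≤ 1 - η := min_le_right _ _
  have d := g.chrH h x η σ 0 hxT.1 hη.1 (by linarith) (by linarith) ⟨le_rfl, hσpos⟩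
  simp only [add_zero, he] at d
  have hlt : Kp (Q x η) * (mm K Q A x - n x) < r := by
    refine lt_of_le_of_lt ?_ hr
    have := h.lo _ (g.Qr x hxT η ⟨hη.1, hη.2.le⟩)
    nlinarith
  have ev := d.Ioi_of_Ici.limsup_slope_le' (by simp) hlt
  have ev2 : ∀ᶠ s in 𝓝[>] (0 : ℝ), slope (mm K Q A) x (x + s) < r := by
    filter_upwards [ev, self_mem_nhdsWithin,
      mem_nhdsWithin_of_mem_nhds (Iio_mem_nhds hσpos)] with s h1 h2 h3
    refine lt_of_le_of_lt ?_ h1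
    have h2 : 0 < s := h2
    have h3 : s < σ := h3
    simp only [slope_def_field, add_zero, he, add_sub_cancel_left, sub_zero]
    gcongr
    exact g.m_le h _ _ ⟨by linarith [hη.1], by linarith⟩
  have ht : Tendsto (fun z => z - x) (𝓝[>] x) (𝓝[>] 0) := by
    refine tendsto_nhdsWithin_iff.2 ⟨?_, ?_⟩
    · have : Tendsto (fun z => z - x) (𝓝 x) (𝓝 (x - x)) :=
        (continuous_id.sub continuous_const).tendsto x
      rw [sub_self] at this
      exact this.mono_left nhdsWithin_le_nhds
    · filter_upwards [self_mem_nhdsWithin] with z hz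
      exact sub_pos.2 (mem_Ioi.1 hz)
  have := ht.eventually ev2
  simp only [add_sub_cancel] at this
  exact this.frequently

lemma Good.m_le_n (h : KData K Kp ΦF k L C) (g : Good K ΦF T Q A n) (x : ℝ)
    (hx : x ∈ Icc 0 T) : mm K Q A x ≤ n x := by
  rw [← g.H0 x hx]; exact g.m_le h x 0 ⟨le_rfl, zero_le_one⟩

lemma Good.m_anti (h : KData K Kp ΦF k L C) (g : Good K ΦF T Q A n) (a b : ℝ)
    (ha : 0 ≤ a) (hab : a ≤ b) (hb : b ≤ T) : mm K Q A b ≤ mm K Q A a := by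
  have h1 := g.dini h a b ha hab hb
  have h2 : 0 ≤ ∫ t in a..b, (n t - mm K Q A t) :=
    intervalIntegral.integral_nonneg hab fun u hu =>
      sub_nonneg.2 (g.m_le_n h u ⟨ha.trans hu.1, hu.2.trans hb⟩)
  nlinarith [h.kpos]

lemma Good.m_low (h : KData K Kp ΦF k L C) (g : Good K ΦF T Q A n) (x : ℝ)
    (hx : x ∈ Icc 0 T) : -C ≤ mm K Q A x := by
  obtain ⟨η, hη, he⟩ := g.argmin h x hx
  have hη' : η ∈ Icc (0 : ℝ) 1 := ⟨hη.1, hη.2.le⟩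
  have := g.Apos x hx η hη'
  have := h.bd _ (g.Qr x hx η hη')
  rw [← he, HH]; linarith

lemma Good.pigeon (h : KData K Kp ΦF k L C) (g : Good K ΦF T Q A n) (a : ℝ) (ha : 0 ≤ a)
    (j : ℕ) (hj : 0 < j) (hT : a + j ≤ T) :
    ∃ i < j, mm K Q A (a + i) - mm K Q A (a + i + 1) ≤ (mm K Q A a + C) / j := by
  have hj' : (0 : ℝ) < j := by exact_mod_cast hj
  have hs : ∑ i ∈ Finset.range j, (mm K Q A (a + i) - mm K Q A (a + i + 1))
      ≤ ∑ i ∈ Finset.range j, (mm K Q A a + C) / j := by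
    have := Finset.sum_range_sub' (fun i : ℕ => mm K Q A (a + i)) j
    simp only [Nat.cast_add, Nat.cast_one, ← add_assoc, Nat.cast_zero, add_zero] at this
    rw [this, Finset.sum_const, Finset.card_range, nsmul_eq_mul, mul_div_cancel₀ _ hj'.ne']
    have := g.m_low h (a + j) ⟨by linarith, hT⟩
    linarith
  obtain ⟨i, hi, hh⟩ := Finset.exists_le_of_sum_le (Finset.nonempty_range_iff.2 hj.ne') hs
  exact ⟨i, Finset.mem_range.1 hi, hh⟩

lemma Good.int_u (h : KData K Kp ΦF k L C) (g : Good K ΦF T Q A n) (τ ε : ℝ) (hτ : 0 ≤ τ)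
    (hT : τ + 1 ≤ T) (hε : mm K Q A τ - mm K Q A (τ + 1) ≤ ε) :
    ∫ t in τ..(τ + 1), (n t - mm K Q A (τ + 1)) ≤ ε / k + ε := by
  have h1 := g.dini h τ (τ + 1) hτ (by linarith) hT
  have h2 : ∫ t in τ..(τ + 1), (n t - mm K Q A t) ≤ ε / k := by
    rw [le_div_iff₀ h.kpos]; linarith
  have c1 : Continuous fun t => n t - mm K Q A t := g.nc.sub (g.mc h)
  have h3 : ∫ t in τ..(τ + 1), (n t - mm K Q A (τ + 1)) ≤
      ∫ t in τ..(τ + 1), ((n t - mm K Q A t) + ε) := by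
    refine intervalIntegral.integral_mono_on (by linarith)
      ((g.nc.sub continuous_const).intervalIntegrable _ _)
      ((c1.add continuous_const).intervalIntegrable _ _) fun x hx => ?_
    have := g.m_anti h τ x hτ hx.1 (hx.2.trans hT)
    linarith
  rw [intervalIntegral.integral_add (c1.intervalIntegrable _ _) (by simp)] at h3
  simp at h3
  linarith

lemma Good.H_end (h : KData K Kp ΦF k L C) (g : Good K ΦF T Q A n) (τ η : ℝ) (hτ : 0 ≤ τ)
    (hT : τ + 1 ≤ T) (hη : η ∈ Icc (0 : ℝ) 1) :
    HH K Q A (τ + 1) η - mm K Q A (τ + 1) ≤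
      exp L * (n (τ + 1 - η) - mm K Q A (τ + 1)) := by
  set t0 := τ + 1 - η with ht0
  set M := mm K Q A (τ + 1)
  have ht0' : τ ≤ t0 := by linarith [hη.2]
  have hL0 : 0 ≤ L := (abs_nonneg _).trans (h.hi 0)
  have dy : ∀ s ∈ Ico 0 η, HasDerivWithinAt
      (fun s => exp (-L * s) * (HH K Q A (t0 + s) (0 + s) - M))
      (exp (-L * s) * (-L) * (HH K Q A (t0 + s) (0 + s) - M) +
        exp (-L * s) * (Kp (Q (t0 + s) (0 + s)) * (HH K Q A (t0 + s) (0 + s) - n (t0 + s))))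
      (Ici s) s := by
    intro s hs
    have e : HasDerivAt (fun s => exp (-L * s)) (exp (-L * s) * (-L)) s := by
      simpa using ((hasDerivAt_id s).const_mul (-L)).exp
    exact e.hasDerivWithinAt.mul ((g.chrH h t0 0 η s (by linarith) le_rfl (by linarith)
      (by linarith [hη.2]) hs).sub_const M)
  have key := image_le_of_deriv_right_le_deriv_boundary
    (f := fun s => exp (-L * s) * (HH K Q A (t0 + s) (0 + s) - M)) (a := 0) (b := η)
    (B := fun _ => n t0 - M) (B' := fun _ => 0)
    (by
      refine Continuous.continuousOn ?_
      exact (by fun_prop : Continuous fun s => exp (-L * s)).mul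
        ((g.Hc2 h (by fun_prop) (by fun_prop)).sub continuous_const)) dy
    (by simp [g.H0 t0 ⟨by linarith, by linarith [hη.1]⟩]) continuousOn_const
    (fun x _ => hasDerivWithinAt_const _ _ _) (by
      intro s hs
      have hsT : t0 + s ∈ Icc 0 T := ⟨by linarith [hs.1], by linarith [hs.2]⟩
      have hs1 : 0 + s ∈ Icc (0 : ℝ) 1 := ⟨by linarith [hs.1], by linarith [hs.2, hη.2]⟩
      have p1 : M ≤ mm K Q A (t0 + s) :=
        g.m_anti h _ _ hsT.1 (by linarith [hs.2]) hT
      have p2 := g.m_le_n h _ hsT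
      have p3 := g.m_le h (t0 + s) _ hs1
      have p4 := h.lo _ (g.Qr _ hsT _ hs1)
      have p5 := (abs_le.1 (h.hi (Q (t0 + s) (0 + s)))).2
      have p6 := exp_pos (-L * s)
      have p7 := h.kpos
      have : (-L) * (HH K Q A (t0 + s) (0 + s) - M) +
        (Kp (Q (t0 + s) (0 + s)) * (HH K Q A (t0 + s) (0 + s) - n (t0 + s))) ≤ 0 := by
        generalize HH K Q A (t0 + s) (0 + s) = y at *
        generalize Kp (Q (t0 + s) (0 + s)) = κ at *
        have q1 : κ * (y - n (t0 + s)) ≤ κ * (y - M) :=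
          mul_le_mul_of_nonneg_left (by linarith) (by linarith)
        have q2 : κ * (y - M) ≤ L * (y - M) := mul_le_mul_of_nonneg_right p5 (by linarith)
        linarith
      have := mul_nonpos_of_nonneg_of_nonpos p6.le this
      linarith) (right_mem_Icc.2 hη.1)
  have e1 : t0 + η = τ + 1 := by simp [ht0]
  simp only [e1, zero_add] at key
  have hM : 0 ≤ HH K Q A (τ + 1) η - M := sub_nonneg.2 (g.m_le h _ _ hη)
  have hnM : 0 ≤ n t0 - M := le_trans (mul_nonneg (exp_pos _).le hM) key
  calc HH K Q A (τ + 1) η - M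
      = exp (L * η) * (exp (-L * η) * (HH K Q A (τ + 1) η - M)) := by
        rw [← mul_assoc, ← exp_add]; simp
    _ ≤ exp (L * η) * (n t0 - M) := by gcongr
    _ ≤ exp L * (n t0 - M) := by
        gcongr
        nlinarith [hη.2]

lemma Good.int_H_end (h : KData K Kp ΦF k L C) (g : Good K ΦF T Q A n) (τ ε : ℝ) (hτ : 0 ≤ τ)
    (hT : τ + 1 ≤ T) (hε : mm K Q A τ - mm K Q A (τ + 1) ≤ ε) :
    ∫ η in (0 : ℝ)..1, (HH K Q A (τ + 1) η - mm K Q A (τ + 1)) ≤ exp L * (ε / k + ε) := by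
  calc ∫ η in (0 : ℝ)..1, (HH K Q A (τ + 1) η - mm K Q A (τ + 1))
      ≤ ∫ η in (0 : ℝ)..1, exp L * (n (τ + 1 - η) - mm K Q A (τ + 1)) := by
        refine intervalIntegral.integral_mono_on zero_le_one
          (((g.Hc2 h (by fun_prop) (by fun_prop)).sub continuous_const).intervalIntegrable _ _)
          ((continuous_const.mul ((g.nc.comp (by fun_prop)).sub
            continuous_const)).intervalIntegrable _ _) fun x hx => g.H_end h τ x hτ hT hx
    _ = exp L * ∫ t in τ..(τ + 1), (n t - mm K Q A (τ + 1)) := by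
        rw [intervalIntegral.integral_const_mul,
          intervalIntegral.integral_comp_sub_left (fun t => n t - mm K Q A (τ + 1)) (τ + 1)]
        simp
    _ ≤ _ := by
        gcongr
        exact g.int_u h τ ε hτ hT hε

lemma KData.kappa (h : KData K Kp ΦF k L C) (a b : ℝ) :
    K a - K b = (∫ t in (0 : ℝ)..1, Kp (b + t * (a - b))) * (a - b) := by
  rw [← intervalIntegral.integral_mul_const]
  rw [intervalIntegral.integral_eq_sub_of_hasDerivAt (f := fun t => K (b + t * (a - b)))]
  · simp
  · intro x _
    have : HasDerivAt (fun t => b + t * (a - b)) (a - b) x := by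
      simpa using ((hasDerivAt_id x).mul_const (a - b)).const_add b
    exact (h.hd _).comp x this
  · refine Continuous.intervalIntegrable ?_ _ _
    exact (h.hc.comp (by fun_prop)).mul continuous_const

lemma Good.compare (h : KData K Kp ΦF k L C) (g : Good K ΦF T Q A n) (t0 t1 M : ℝ)
    (h0 : t0 ∈ Icc 0 T) (h1 : t1 ∈ Icc 0 T)
    (hM0 : ∀ η ∈ Icc (0 : ℝ) 1, M ≤ HH K Q A t0 η)
    (hM1 : ∀ η ∈ Icc (0 : ℝ) 1, M ≤ HH K Q A t1 η) :
    ∫ η in (0 : ℝ)..1, (HH K Q A t0 η - M) ≤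
      exp (2 * L) * ∫ η in (0 : ℝ)..1, (HH K Q A t1 η - M) := by
  set κ : ℝ → ℝ := fun η => ∫ t in (0 : ℝ)..1, Kp (Q t1 η + t * (Q t0 η - Q t1 η)) with hκ
  have hq : ∀ t, Continuous (Q t) := fun t => g.Qc2 continuous_const continuous_id
  have hH : ∀ t, Continuous (HH K Q A t) := fun t => g.Hc2 h continuous_const continuous_id
  have hκc : Continuous κ := by
    apply intervalIntegral.continuous_parametric_intervalIntegral_of_continuous'
    refine h.hc.comp ?_
    have e0 : Continuous fun p : ℝ × ℝ => Q t0 p.1 := (hq t0).comp continuous_fst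
    have e1 : Continuous fun p : ℝ × ℝ => Q t1 p.1 := (hq t1).comp continuous_fst
    exact e1.add (continuous_snd.mul (e0.sub e1))
  have hκb : ∀ η, |κ η| ≤ L := by
    intro η
    have := intervalIntegral.norm_integral_le_of_norm_le_const (a := (0:ℝ)) (b := 1) (C := L)
      (f := fun t => Kp (Q t1 η + t * (Q t0 η - Q t1 η))) (fun x _ => h.hi _)
    simpa using this
  set E : ℝ → ℝ := fun η => ∫ x in (0 : ℝ)..η, κ x with hE
  have hEd : ∀ x, HasDerivAt E (κ x) x := fun x =>
    intervalIntegral.integral_hasDerivAt_right (hκc.intervalIntegrable _ _)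
      hκc.aestronglyMeasurable.stronglyMeasurableAtFilter hκc.continuousAt
  have hEc : Continuous E := continuous_iff_continuousAt.2 fun x => (hEd x).continuousAt
  have hL0 : 0 ≤ L := (abs_nonneg _).trans (h.hi 0)
  have hEb : ∀ η ∈ Icc (0 : ℝ) 1, |E η| ≤ L := by
    intro η hη
    have := intervalIntegral.norm_integral_le_of_norm_le_const (a := (0:ℝ)) (b := η) (C := L)
      (f := κ) (fun x _ => hκb x)
    simp only [sub_zero, abs_of_nonneg hη.1, Real.norm_eq_abs] at this
    exact this.trans (by nlinarith [hη.2])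
  have hIntZ : ∫ η in (0 : ℝ)..1, exp (-E η) * (HH K Q A t0 η - HH K Q A t1 η) = 0 := by
    rw [intervalIntegral.integral_eq_sub_of_hasDerivAt_of_le zero_le_one
      (f := fun η => exp (-E η) * (Q t0 η - Q t1 η))]
    · simp [g.Q0 t0 h0, g.Q0 t1 h1, g.Q1 t0 h0, g.Q1 t1 h1]
    · exact ((continuous_exp.comp hEc.neg).mul ((hq t0).sub (hq t1))).continuousOn
    · intro x hx
      have d0 := (g.dQ t0 h0 x ⟨hx.1.le, hx.2.le⟩).hasDerivAt (Icc_mem_nhds hx.1 hx.2)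
      have d1 := (g.dQ t1 h1 x ⟨hx.1.le, hx.2.le⟩).hasDerivAt (Icc_mem_nhds hx.1 hx.2)
      have e := ((hEd x).neg.exp).mul (d0.sub d1)
      refine HasDerivAt.congr_deriv e ?_
      have := h.kappa (Q t0 x) (Q t1 x)
      change _ = κ x * _ at this
      simp only [HH, Pi.neg_apply, Pi.sub_apply]
      linear_combination (exp (-E x)) * this
    · exact ((continuous_exp.comp hEc.neg).mul ((hH t0).sub (hH t1))).intervalIntegrable _ _
  have hi0 : IntervalIntegrable (fun η => exp (-E η) * (HH K Q A t0 η - M)) volume 0 1 :=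
    ((continuous_exp.comp hEc.neg).mul ((hH t0).sub continuous_const)).intervalIntegrable _ _
  have hi1 : IntervalIntegrable (fun η => exp (-E η) * (HH K Q A t1 η - M)) volume 0 1 :=
    ((continuous_exp.comp hEc.neg).mul ((hH t1).sub continuous_const)).intervalIntegrable _ _
  have heq : ∫ η in (0 : ℝ)..1, exp (-E η) * (HH K Q A t0 η - M) =
      ∫ η in (0 : ℝ)..1, exp (-E η) * (HH K Q A t1 η - M) := by
    rw [← sub_eq_zero, ← intervalIntegral.integral_sub hi0 hi1, ← hIntZ]
    congr 1
    ext η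
    ring
  have hj0 : IntervalIntegrable (fun η => exp (-L) * (HH K Q A t0 η - M)) volume 0 1 :=
    (continuous_const.mul ((hH t0).sub continuous_const)).intervalIntegrable _ _
  have hj1 : IntervalIntegrable (fun η => exp L * (HH K Q A t1 η - M)) volume 0 1 :=
    (continuous_const.mul ((hH t1).sub continuous_const)).intervalIntegrable _ _
  have l0 := intervalIntegral.integral_mono_on zero_le_one hj0 hi0 fun x hx =>
    mul_le_mul_of_nonneg_right (exp_le_exp.2 (by linarith [(abs_le.1 (hEb x hx)).2]))
      (sub_nonneg.2 (hM0 x hx))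
  have l1 := intervalIntegral.integral_mono_on zero_le_one hi1 hj1 fun x hx =>
    mul_le_mul_of_nonneg_right (exp_le_exp.2 (by linarith [(abs_le.1 (hEb x hx)).1]))
      (sub_nonneg.2 (hM1 x hx))
  rw [intervalIntegral.integral_const_mul] at l0 l1
  have l2 := l0.trans (heq.le.trans l1)
  have l3 := mul_le_mul_of_nonneg_left l2 (exp_pos L).le
  rw [← mul_assoc, ← mul_assoc, ← exp_add, ← exp_add] at l3
  simpa [two_mul] using l3

lemma Good.core (h : KData K Kp ΦF k L C) (g : Good K ΦF T Q A n) (a : ℝ) (ha : 0 ≤ a)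
    (j : ℕ) (hj : 0 < j) (hT : a + j ≤ T) :
    ∫ η in (0 : ℝ)..1, (HH K Q A a η - mm K Q A a) ≤
      (exp (2 * L) * (exp L * ((mm K Q A a + C) / k + (mm K Q A a + C)))) / j := by
  obtain ⟨i, hi, hε⟩ := g.pigeon h a ha j hj hT
  have hi' : (i : ℝ) + 1 ≤ j := by exact_mod_cast hi
  have hi0 : (0 : ℝ) ≤ i := Nat.cast_nonneg i
  have haT : a ∈ Icc 0 T := ⟨ha, by linarith⟩
  have h1 := g.int_H_end h (a + i) _ (by linarith) (by linarith) hε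
  have hanti := g.m_anti h a (a + i + 1) ha (by linarith) (by linarith)
  have h2 := g.compare h a (a + i + 1) (mm K Q A (a + i + 1)) haT ⟨by linarith, by linarith⟩
    (fun η hη => hanti.trans (g.m_le h a η hη)) (fun η hη => g.m_le h _ η hη)
  have hH : ∀ M : ℝ, Continuous fun η => HH K Q A a η - M := fun M =>
    (g.Hc2 h continuous_const continuous_id).sub continuous_const
  have h3 : ∫ η in (0 : ℝ)..1, (HH K Q A a η - mm K Q A a) ≤
      ∫ η in (0 : ℝ)..1, (HH K Q A a η - mm K Q A (a + i + 1)) :=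
    intervalIntegral.integral_mono_on zero_le_one ((hH _).intervalIntegrable _ _)
      ((hH _).intervalIntegrable _ _) fun x _ => by linarith
  refine (h3.trans h2).trans ?_
  refine (mul_le_mul_of_nonneg_left h1 (exp_pos _).le).trans (le_of_eq ?_)
  ring

end abstractpart

lemma Ico0_eq (T : ℝ≥0∞) : Ico0 T = Ici 0 ∩ {τ : ℝ | ENNReal.ofReal τ < T} := rfl

lemma isOpen_ofReal_lt (T : ℝ≥0∞) : IsOpen {τ : ℝ | ENNReal.ofReal τ < T} :=
  isOpen_Iio.preimage ENNReal.continuous_ofReal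

lemma Ico0_mem {T : ℝ≥0∞} {τ : ℝ} (h : τ ∈ Ico0 T) : Ico0 T ∈ 𝓝[Ici 0] τ :=
  inter_mem self_mem_nhdsWithin (mem_nhdsWithin_of_mem_nhds ((isOpen_ofReal_lt T).mem_nhds h.2))

lemma uniqueDiffOn_S (T : ℝ≥0∞) : UniqueDiffOn ℝ (Ico0 T ×ˢ Icc (0 : ℝ) 1) := by
  refine UniqueDiffOn.prod ?_ (uniqueDiffOn_Icc one_pos)
  rw [Ico0_eq]
  exact (uniqueDiffOn_Ici 0).inter (isOpen_ofReal_lt T)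

lemma Icc_sub_Ico0 {T : ℝ≥0∞} {b : ℝ} (hb : ENNReal.ofReal b < T) : Icc 0 b ⊆ Ico0 T :=
  fun _ hx => ⟨hx.1, (ENNReal.ofReal_le_ofReal hx.2).trans_lt hb⟩

/-- the derivative of the solution -/
def FD (T : ℝ≥0∞) (Q : ℝ → ℝ → ℝ) : ℝ × ℝ → (ℝ × ℝ →L[ℝ] ℝ) :=
  fderivWithin ℝ (Function.uncurry Q) (Ico0 T ×ˢ Icc (0 : ℝ) 1)

section conv

variable {K : ℝ → ℝ} {ΦF : ℝ} {T : ℝ≥0∞} {Qinit : ℝ → ℝ} {Q : ℝ → ℝ → ℝ} {N : ℝ → ℝ}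

lemma IsQSol.fd (s : IsQSol K ΦF T Qinit Q N) {p : ℝ × ℝ}
    (hp : p ∈ Ico0 T ×ˢ Icc (0 : ℝ) 1) :
    HasFDerivWithinAt (Function.uncurry Q) (FD T Q p) (Ico0 T ×ˢ Icc (0 : ℝ) 1) p :=
  ((s.reg.differentiableOn one_ne_zero) p hp).hasFDerivWithinAt

lemma IsQSol.fdc (s : IsQSol K ΦF T Qinit Q N) :
    ContinuousOn (FD T Q) (Ico0 T ×ˢ Icc (0 : ℝ) 1) :=
  s.reg.continuousOn_fderivWithin (uniqueDiffOn_S T) le_rfl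

lemma IsQSol.dEta (s : IsQSol K ΦF T Qinit Q N) {τ η : ℝ} (hτ : τ ∈ Ico0 T)
    (hη : η ∈ Icc (0 : ℝ) 1) :
    HasDerivWithinAt (Q τ) (FD T Q (τ, η) (0, 1)) (Icc 0 1) η := by
  have hp : HasDerivWithinAt (fun x : ℝ => (τ, x)) ((0 : ℝ), (1 : ℝ)) (Icc 0 1) η :=
    (hasDerivWithinAt_const _ _ _).prodMk (hasDerivWithinAt_id _ _)
  have hm : MapsTo (fun x : ℝ => (τ, x)) (Icc 0 1) (Ico0 T ×ˢ Icc (0 : ℝ) 1) :=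
    fun x hx => ⟨hτ, hx⟩
  exact (s.fd (p := (τ, η)) ⟨hτ, hη⟩).comp_hasDerivWithinAt η hp hm

lemma IsQSol.dTau (s : IsQSol K ΦF T Qinit Q N) {τ η : ℝ} (hτ : τ ∈ Ico0 T)
    (hη : η ∈ Icc (0 : ℝ) 1) :
    HasDerivWithinAt (fun t => Q t η) (FD T Q (τ, η) (1, 0)) (Ici 0) τ := by
  have hp : HasDerivWithinAt (fun x : ℝ => (x, η)) ((1 : ℝ), (0 : ℝ)) (Ico0 T) τ :=
    (hasDerivWithinAt_id _ _).prodMk (hasDerivWithinAt_const _ _ _)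
  have hm : MapsTo (fun x : ℝ => (x, η)) (Ico0 T) (Ico0 T ×ˢ Icc (0 : ℝ) 1) :=
    fun x hx => ⟨hx, hη⟩
  have : HasDerivWithinAt (fun t => Q t η) (FD T Q (τ, η) (1, 0)) (Ico0 T) τ :=
    HasFDerivWithinAt.comp_hasDerivWithinAt (l := Function.uncurry Q) τ
      (s.fd (p := (τ, η)) ⟨hτ, hη⟩) hp hm
  exact this.mono_of_mem_nhdsWithin (Ico0_mem hτ)

lemma IsQSol.pdEta_eq (s : IsQSol K ΦF T Qinit Q N) {τ η : ℝ} (hτ : τ ∈ Ico0 T)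
    (hη : η ∈ Icc (0 : ℝ) 1) : pdEta Q τ η = FD T Q (τ, η) (0, 1) :=
  (s.dEta hτ hη).derivWithin (uniqueDiffOn_Icc one_pos η hη)

lemma IsQSol.pdTau_eq (s : IsQSol K ΦF T Qinit Q N) {τ η : ℝ} (hτ : τ ∈ Ico0 T)
    (hη : η ∈ Icc (0 : ℝ) 1) : pdTau Q τ η = FD T Q (τ, η) (1, 0) :=
  (s.dTau hτ hη).derivWithin (uniqueDiffOn_Ici 0 τ hτ.1)

lemma IsQSol.slice {τ : ℝ} (hτ : τ ∈ Ico0 T) :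
    MapsTo (fun η : ℝ => (τ, η)) (Icc 0 1) (Ico0 T ×ˢ Icc (0 : ℝ) 1) := fun _ hη => ⟨hτ, hη⟩

lemma IsQSol.Qcont (s : IsQSol K ΦF T Qinit Q N) {τ : ℝ} (hτ : τ ∈ Ico0 T) :
    ContinuousOn (Q τ) (Icc 0 1) := fun _ hη => (s.dEta hτ hη).continuousWithinAt

lemma IsQSol.pde' (hK : Continuous K) (s : IsQSol K ΦF T Qinit Q N) {τ η : ℝ}
    (hτ : τ ∈ Ico0 T) (hη : η ∈ Icc (0 : ℝ) 1) :
    FD T Q (τ, η) (1, 0) + FD T Q (τ, η) (0, 1) = 1 / N τ + K (Q τ η) := by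
  have e : EqOn (fun η => FD T Q (τ, η) (1, 0) + FD T Q (τ, η) (0, 1))
      (fun η => 1 / N τ + K (Q τ η)) (Ioo 0 1) := by
    intro x hx
    have hx' : x ∈ Icc (0 : ℝ) 1 := ⟨hx.1.le, hx.2.le⟩
    have := s.pde τ hτ x hx
    rwa [s.pdTau_eq hτ hx', s.pdEta_eq hτ hx'] at this
  have hc : ContinuousOn (fun η : ℝ => FD T Q (τ, η)) (Icc 0 1) :=
    s.fdc.comp (by fun_prop) (IsQSol.slice hτ)
  refine e.of_subset_closure (t := Icc 0 1) ?_ ?_ Ioo_subset_Icc_self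
    (by rw [closure_Ioo (zero_ne_one)]) hη
  · exact (hc.clm_apply continuousOn_const).add (hc.clm_apply continuousOn_const)
  · exact continuousOn_const.add (hK.comp_continuousOn (s.Qcont hτ))

lemma KAssump.hasD (hK : KAssump K ΦF) (x : ℝ) : HasDerivAt K (deriv K x) x :=
  (hK.smooth.differentiable two_ne_zero x).hasDerivAt

lemma KAssump.cont (hK : KAssump K ΦF) : Continuous K := hK.smooth.continuous

lemma IsQSol.Q1 (hK : KAssump K ΦF) (s : IsQSol K ΦF T Qinit Q N) {τ : ℝ}
    (hτ : τ ∈ Ico0 T) : Q τ 1 = ΦF := by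
  obtain ⟨L, hL⟩ := hK.bdd1
  have h1 : (1 : ℝ) ∈ Icc (0 : ℝ) 1 := ⟨zero_le_one, le_rfl⟩
  have hL0 : 0 ≤ L := (abs_nonneg _).trans (hL 0)
  have hlip : LipschitzWith ⟨L, hL0⟩ (fun y => K y - K ΦF) := by
    refine lipschitzWith_of_nnnorm_deriv_le
      (fun x => ((hK.hasD x).sub_const (K ΦF)).differentiableAt) fun x => ?_
    rw [((hK.hasD x).sub_const (K ΦF)).deriv]
    exact hL x
  have hmem : ∀ t ∈ Icc 0 τ, t ∈ Ico0 T := fun t ht => Icc_sub_Ico0 hτ.2 ht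
  have hd : ∀ t ∈ Icc 0 τ, HasDerivWithinAt (fun t => Q t 1) (K (Q t 1) - K ΦF) (Ici 0) t := by
    intro t ht
    refine (s.dTau (hmem t ht) h1).congr_deriv ?_
    have e1 := s.pde' hK.cont (hmem t ht) h1
    have e2 := s.Ndef t (hmem t ht)
    rw [s.pdEta_eq (hmem t ht) h1] at e2
    linarith
  have := ODE_solution_unique (v := fun _ y => K y - K ΦF) (K := ⟨L, hL0⟩)
    (f := fun t => Q t 1) (g := fun _ => ΦF) (a := 0) (b := τ)
    (fun t => hlip)
    (fun t ht => (hd t ht).continuousWithinAt.mono fun x hx => hx.1)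
    (fun t ht => (hd t ⟨ht.1, ht.2.le⟩).mono (Ici_subset_Ici.2 ht.1))
    continuousOn_const
    (fun t ht => by simpa using hasDerivWithinAt_const t (Ici t) ΦF)
    (by rw [s.init 1 h1, s.init1])
  exact this ⟨hτ.1, le_rfl⟩

/-- clamp to `[0, b]` -/
def clp (b x : ℝ) : ℝ := max 0 (min b x)

lemma clp_cont (b : ℝ) : Continuous (clp b) := by unfold clp; fun_prop

lemma clp_mem {b : ℝ} (hb : 0 ≤ b) (x : ℝ) : clp b x ∈ Icc 0 b :=
  ⟨le_max_left _ _, max_le hb (min_le_left _ _)⟩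

lemma clp_eq {b x : ℝ} (hx : x ∈ Icc 0 b) : clp b x = x := by
  rw [clp, min_eq_right hx.2, max_eq_right hx.1]

lemma IsQSol.good (hK : KAssump K ΦF) (s : IsQSol K ΦF T Qinit Q N) {b : ℝ} (hb0 : 0 ≤ b)
    (hb : ENNReal.ofReal b < T) :
    Good K ΦF b (fun τ η => Q (clp b τ) (clp 1 η))
      (fun τ η => FD T Q (clp b τ, clp 1 η) (0, 1)) (fun τ => 1 / N (clp b τ)) := by
  have hsub := Icc_sub_Ico0 hb
  have hm : ∀ τ, clp b τ ∈ Ico0 T := fun τ => hsub (clp_mem hb0 τ)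
  have hm1 : ∀ η, clp 1 η ∈ Icc (0 : ℝ) 1 := fun η => clp_mem zero_le_one η
  have hpc : Continuous fun p : ℝ × ℝ => (clp b p.1, clp 1 p.2) :=
    ((clp_cont b).comp continuous_fst).prodMk ((clp_cont 1).comp continuous_snd)
  have hpm : ∀ p : ℝ × ℝ, (clp b p.1, clp 1 p.2) ∈ Ico0 T ×ˢ Icc (0 : ℝ) 1 :=
    fun p => ⟨hm _, hm1 _⟩
  have hQc : Continuous (Function.uncurry fun τ η => Q (clp b τ) (clp 1 η)) :=
    s.reg.continuousOn.comp_continuous hpc hpm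
  have hnc : Continuous fun τ => 1 / N (clp b τ) :=
    continuous_const.div (s.Ncont.comp_continuous (clp_cont b) hm) fun τ => (s.Npos _ (hm τ)).ne'
  have z1 : (0 : ℝ) ∈ Icc (0 : ℝ) 1 := ⟨le_rfl, zero_le_one⟩
  have o1 : (1 : ℝ) ∈ Icc (0 : ℝ) 1 := ⟨zero_le_one, le_rfl⟩
  refine ⟨hQc, ?_, hnc, ?_, ?_, ?_, ?_, ?_, ?_, ?_, ?_⟩
  · exact (s.fdc.comp_continuous hpc hpm).clm_apply continuous_const
  · intro τ hτ
    simp only [clp_eq z1]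
    exact s.bc _ (hm τ)
  · intro τ hτ
    simp only [clp_eq o1]
    exact s.Q1 hK (hm τ)
  · intro τ hτ
    simp only [clp_eq z1, clp_eq hτ]
    have e := s.pde' hK.cont (hsub hτ) z1
    have e0 : FD T Q (τ, 0) (1, 0) = 0 := by
      refine UniqueDiffWithinAt.eq_deriv (Ici 0) (uniqueDiffOn_Ici 0 τ hτ.1)
        (s.dTau (hsub hτ) z1) ?_
      refine (hasDerivWithinAt_const τ (Ici 0) (0 : ℝ)).congr_of_eventuallyEq ?_ (s.bc τ (hsub hτ))
      filter_upwards [Ico0_mem (hsub hτ)] with x hx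
      exact s.bc x hx
    rw [e0, s.bc τ (hsub hτ), zero_add] at e
    exact e
  · intro τ hτ
    simp only [clp_eq o1, clp_eq hτ]
    rw [s.Ndef τ (hsub hτ), s.pdEta_eq (hsub hτ) o1]
    ring
  · intro τ hτ η hη
    simp only [clp_eq hη, clp_eq hτ]
    have m := s.mono τ (hsub hτ)
    constructor
    · rw [← s.bc τ (hsub hτ)]; exact m z1 hη hη.1
    · rw [← s.Q1 hK (hsub hτ)]; exact m hη o1 hη.2
  · intro τ hτ η hη
    simp only [clp_eq hη, clp_eq hτ]
    rw [← s.pdEta_eq (hsub hτ) hη]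
    exact (s.mono τ (hsub hτ)).derivWithin_nonneg
  · intro τ hτ η hη
    simp only [clp_eq hη, clp_eq hτ]
    refine (s.dEta (hsub hτ) hη).congr (fun x hx => ?_) ?_
    · rw [clp_eq hx]
    · rw [clp_eq hη]
  · intro τ η σ hτ hη hσ h1 h2
    have ht : ∀ r ∈ Icc 0 σ, τ + r ∈ Icc 0 b := fun r hr =>
      ⟨by linarith [hr.1], by linarith [hr.2]⟩
    have he : ∀ r ∈ Icc 0 σ, η + r ∈ Icc (0 : ℝ) 1 := fun r hr =>
      ⟨by linarith [hr.1], by linarith [hr.2]⟩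
    have key := intervalIntegral.integral_eq_sub_of_hasDerivAt_of_le hσ
      (f := fun r => Q (τ + r) (η + r))
      (f' := fun r => 1 / N (clp b (τ + r)) + K (Q (clp b (τ + r)) (clp 1 (η + r)))) (by
        exact s.reg.continuousOn.comp (f := fun r : ℝ => (τ + r, η + r))
          (by fun_prop) fun r hr => ⟨hsub (ht r hr), he r hr⟩) (by
        intro r hr
        have hr' : r ∈ Icc 0 σ := ⟨hr.1.le, hr.2.le⟩
        rw [clp_eq (ht r hr'), clp_eq (he r hr'),
          ← s.pde' hK.cont (hsub (ht r hr')) (he r hr')]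
        have hS : Ico0 T ×ˢ Icc (0 : ℝ) 1 ∈ 𝓝 (τ + r, η + r) := by
          refine prod_mem_nhds ?_ (Icc_mem_nhds (by linarith [hr.1]) (by linarith [hr.2]))
          exact mem_of_superset (Icc_mem_nhds (by linarith [hr.1]) (by linarith [hr.2])) hsub
        have hF := (s.fd (p := (τ + r, η + r)) ⟨hsub (ht r hr'), he r hr'⟩).hasFDerivAt hS
        have hp : HasDerivAt (fun r : ℝ => (τ + r, η + r)) ((1 : ℝ), (1 : ℝ)) r :=
          ((hasDerivAt_id r).const_add τ).prodMk ((hasDerivAt_id r).const_add η)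
        have hcmp : HasDerivAt (fun r => Q (τ + r) (η + r)) (FD T Q (τ + r, η + r) (1, 1)) r :=
          HasFDerivAt.comp_hasDerivAt (l := Function.uncurry Q) r hF hp
        refine hcmp.congr_deriv ?_
        rw [← map_add]
        simp) (by
        refine Continuous.intervalIntegrable ?_ _ _
        exact (hnc.comp (by fun_prop : Continuous fun r : ℝ => τ + r)).add (hK.cont.comp
          (hQc.comp (by fun_prop : Continuous fun r : ℝ => (τ + r, η + r)))))
    simp only [key, clp_eq (ht σ ⟨hσ, le_rfl⟩), clp_eq (he σ ⟨hσ, le_rfl⟩), add_zero]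
    have a1 := ht 0 ⟨le_rfl, hσ⟩
    have a2 := he 0 ⟨le_rfl, hσ⟩
    rw [add_zero] at a1 a2
    rw [clp_eq a1, clp_eq a2]
    ring

lemma KAssump.kdata (hK : KAssump K ΦF) (hk : 0 < kmin K ΦF) :
    ∃ k L C, KData K (deriv K) ΦF k L C := by
  obtain ⟨L, hL⟩ := hK.bdd1
  obtain ⟨C, hC⟩ := (isCompact_Icc (a := (0:ℝ)) (b := ΦF)).exists_bound_of_continuousOn
    hK.cont.continuousOn
  have h1 : ContDiff ℝ 1 (deriv K) := by
    have := hK.smooth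
    rw [show (2 : WithTop ℕ∞) = 1 + 1 by norm_num, contDiff_succ_iff_deriv] at this
    exact this.2.2
  have h2 : Continuous (deriv (deriv K)) := h1.continuous_deriv le_rfl
  refine ⟨kmin K ΦF, L, C, hk, hK.hasD, h1.continuous, ?_, hL, fun x hx =>
    (le_abs_self _).trans (hC x hx)⟩
  intro x hx
  have hc : Continuous fun φ => min (deriv (deriv K) φ) 0 := h2.min continuous_const
  have i1 := intervalIntegral.integral_add_adjacent_intervals
    (hc.intervalIntegrable (μ := volume) 0 x) (hc.intervalIntegrable x ΦF)
  have i2 : ∫ φ in x..ΦF, min (deriv (deriv K) φ) 0 ≤ ∫ φ in x..ΦF, (0 : ℝ) :=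
    intervalIntegral.integral_mono_on hx.2 (hc.intervalIntegrable _ _) (by simp)
      fun u _ => min_le_right _ _
  have i3 : ∫ φ in (0:ℝ)..x, min (deriv (deriv K) φ) 0 ≤ ∫ φ in (0:ℝ)..x, deriv (deriv K) φ :=
    intervalIntegral.integral_mono_on hx.1 (hc.intervalIntegrable _ _) (h2.intervalIntegrable _ _)
      fun u _ => min_le_left _ _
  have i4 : ∫ φ in (0:ℝ)..x, deriv (deriv K) φ = deriv K x - deriv K 0 :=
    intervalIntegral.integral_eq_sub_of_hasDerivAt
      (fun y _ => (h1.differentiable one_ne_zero y).hasDerivAt) (h2.intervalIntegrable _ _)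
  simp only [intervalIntegral.integral_zero] at i2
  unfold kmin
  linarith

lemma IsQSol.est {k L C : ℝ} (h : KData K (deriv K) ΦF k L C) (hK : KAssump K ΦF)
    (s : IsQSol K ΦF T Qinit Q N) {a : ℝ} (ha : 0 ≤ a) {j : ℕ} (hj : 0 < j)
    (hT : ENNReal.ofReal (a + j) < T) {G : ℝ → ℝ}
    (hG : ∀ η ∈ Icc (0 : ℝ) 1, G η = pdEta Q a η - K (Q a η)) :
    ContinuousOn G (Icc 0 1) ∧
    ∫ η in (0 : ℝ)..1, (G η - sInf (G '' Icc 0 1)) ≤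
      (exp (2 * L) * (exp L * ((sInf (G '' Icc 0 1) + C) / k + (sInf (G '' Icc 0 1) + C)))) / j := by
  have hj0 : (0 : ℝ) ≤ j := Nat.cast_nonneg j
  have g := s.good hK (by linarith : 0 ≤ a + j) hT
  have haI : a ∈ Icc 0 (a + j) := ⟨ha, by linarith⟩
  have haT := Icc_sub_Ico0 hT haI
  have core := g.core h a ha j hj le_rfl
  have hH : EqOn (HH K (fun τ η => Q (clp (a + j) τ) (clp 1 η))
      (fun τ η => FD T Q (clp (a + j) τ, clp 1 η) (0, 1)) a) G (Icc 0 1) := by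
    intro η hη
    simp only [HH, clp_eq haI, clp_eq hη]
    rw [hG η hη, s.pdEta_eq haT hη]
  have hm : mm K (fun τ η => Q (clp (a + j) τ) (clp 1 η))
      (fun τ η => FD T Q (clp (a + j) τ, clp 1 η) (0, 1)) a = sInf (G '' Icc 0 1) := by
    rw [mm, hH.image_eq]
  constructor
  · exact (ContinuousOn.congr (g.Hc2 h continuous_const continuous_id).continuousOn hH.symm)
  · rw [hm] at core
    rw [← intervalIntegral.integral_congr (f := fun η => _ - _)
      (g := fun η => G η - sInf (G '' Icc 0 1)) ?_]
    · exact core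
    · intro η hη
      rw [uIcc_of_le zero_le_one] at hη
      simp only [hH hη]

end conv

lemma flat_of_int {G : ℝ → ℝ} (hG : ContinuousOn G (Icc 0 1)) {D : ℝ}
    (h : ∀ j : ℕ, 0 < j → ∫ η in (0 : ℝ)..1, (G η - sInf (G '' Icc 0 1)) ≤ D / j) :
    ∀ η ∈ Icc (0 : ℝ) 1, G η = sInf (G '' Icc 0 1) := by
  have hle : ∀ η ∈ Icc (0 : ℝ) 1, sInf (G '' Icc 0 1) ≤ G η := fun η hη =>
    csInf_le (isCompact_Icc.image_of_continuousOn hG).bddBelow ⟨η, hη, rfl⟩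
  by_contra! hne
  obtain ⟨c, hc, hcn⟩ := hne
  have hp : 0 < ∫ η in (0 : ℝ)..1, (G η - sInf (G '' Icc 0 1)) :=
    intervalIntegral.integral_pos one_pos (hG.sub continuousOn_const)
      (fun x hx => sub_nonneg.2 (hle x ⟨hx.1.le, hx.2⟩))
      ⟨c, hc, sub_pos.2 (lt_of_le_of_ne (hle c hc) hcn.symm)⟩
  have ht : Tendsto (fun j : ℕ => D / j) atTop (𝓝 0) := tendsto_const_div_atTop_nhds_zero_nat D
  have := ge_of_tendsto ht ((eventually_gt_atTop 0).mono h)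
  linarith
/-- Theorem 6.1: when `k_min > 0`, every global classical solution is stationary; hence every
solution whose initial datum is not a steady-state profile has finite maximal existence time. -/
theorem stmt16 (ΦF : ℝ) (hΦF : 0 < ΦF) (K : ℝ → ℝ) (hK : KAssump K ΦF)
    (hkmin : 0 < kmin K ΦF) :
    (∀ (Qinit : ℝ → ℝ) (Q : ℝ → ℝ → ℝ) (N : ℝ → ℝ),
      IsQSol K ΦF ⊤ Qinit Q N →
      ∀ τ : ℝ, 0 ≤ τ → ∀ η ∈ Icc (0 : ℝ) 1, Q τ η = Q 0 η) ∧
    (∀ Qinit : ℝ → ℝ,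
      (¬ ∃ (Qs : ℝ → ℝ) (Ns : ℝ), IsSteadyState K ΦF Qs Ns ∧
        ∀ η ∈ Icc (0 : ℝ) 1, Qinit η = Qs η) →
      sSup {T : ℝ≥0∞ | ∃ (Q : ℝ → ℝ → ℝ) (N : ℝ → ℝ), IsQSol K ΦF T Qinit Q N} < ⊤) := by
  obtain ⟨k, L, C, h⟩ := hK.kdata hkmin
  have z1 : (0 : ℝ) ∈ Icc (0 : ℝ) 1 := ⟨le_rfl, zero_le_one⟩
  have o1 : (1 : ℝ) ∈ Icc (0 : ℝ) 1 := ⟨zero_le_one, le_rfl⟩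
  constructor
  · intro Qinit Q N s
    have hmem : ∀ τ : ℝ, 0 ≤ τ → τ ∈ Ico0 ⊤ := fun τ hτ => ⟨hτ, ENNReal.ofReal_lt_top⟩
    have flat : ∀ τ : ℝ, 0 ≤ τ → ∀ η ∈ Icc (0 : ℝ) 1, pdEta Q τ η - K (Q τ η) = 1 / N τ := by
      intro τ hτ
      have e := fun (j : ℕ) (hj : 0 < j) => s.est h hK hτ hj ENNReal.ofReal_lt_top
        (G := fun η => pdEta Q τ η - K (Q τ η)) (fun _ _ => rfl)
      have f := flat_of_int (e 1 one_pos).1 (fun j hj => (e j hj).2)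
      intro η hη
      have f1 := f 1 o1
      rw [← f η hη] at f1
      change pdEta Q τ 1 - K (Q τ 1) = pdEta Q τ η - K (Q τ η) at f1
      rw [← f1, s.Q1 hK (hmem τ hτ), s.Ndef τ (hmem τ hτ)]
    intro τ hτ η hη
    have hd : ∀ t : ℝ, 0 ≤ t → HasDerivWithinAt (fun t => Q t η) 0 (Ici 0) t := by
      intro t ht
      refine (s.dTau (hmem t ht) hη).congr_deriv ?_
      have e1 := s.pde' hK.cont (hmem t ht) hη
      have e2 := flat t ht η hη
      rw [s.pdEta_eq (hmem t ht) hη] at e2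
      linarith
    exact constant_of_has_deriv_right_zero (f := fun t => Q t η) (a := 0) (b := τ)
      (fun t ht => (hd t ht.1).continuousWithinAt.mono fun x hx => hx.1)
      (fun t ht => (hd t ht.1).mono (Ici_subset_Ici.2 ht.1)) τ ⟨hτ, le_rfl⟩
  · intro Qinit hns
    rw [lt_top_iff_ne_top]
    intro htop
    apply hns
    have hex : ∀ j : ℕ, ∃ (T : ℝ≥0∞) (Q : ℝ → ℝ → ℝ) (N : ℝ → ℝ),
        ENNReal.ofReal (0 + j) < T ∧ IsQSol K ΦF T Qinit Q N := by
      intro j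
      obtain ⟨T, ⟨Q, N, s⟩, hT⟩ := sSup_eq_top.1 htop _ (ENNReal.ofReal_lt_top (r := 0 + j))
      exact ⟨T, Q, N, hT, s⟩
    have e : ∀ j : ℕ, 0 < j → ContinuousOn (Hinit K Qinit) (Icc 0 1) ∧
        ∫ η in (0 : ℝ)..1, (Hinit K Qinit η - sInf (Hinit K Qinit '' Icc 0 1)) ≤
        (exp (2 * L) * (exp L * ((sInf (Hinit K Qinit '' Icc 0 1) + C) / k +
          (sInf (Hinit K Qinit '' Icc 0 1) + C)))) / j := by
      intro j hj
      obtain ⟨T, Q, N, hT, s⟩ := hex j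
      refine s.est h hK le_rfl hj hT fun η hη => ?_
      have : pdEta Q 0 η = derivWithin Qinit (Icc 0 1) η :=
        derivWithin_congr s.init (s.init η hη)
      rw [this, s.init η hη, Hinit]
    have f := flat_of_int (e 1 one_pos).1 (fun j hj => (e j hj).2)
    obtain ⟨T, Q, N, hT, s⟩ := hex 0
    have f1 := f 1 o1
    have hpos : 0 < Hinit K Qinit 1 := by
      rw [Hinit, s.init1]; linarith [s.initDeriv]
    refine ⟨Qinit, 1 / Hinit K Qinit 1, ⟨s.initReg, by positivity, ?_, s.init0, s.init1⟩,
      fun _ _ => rfl⟩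
    intro η hη
    have := f η hη
    rw [← f1] at this
    rw [one_div_one_div, ← this, Hinit]
    ring
end
end
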